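/- arXiv:1011.5707 — 4 statements merged into one kernel-verified Lean document; each statement's English description precedes it below -/
import Mathlib

section
/- Let (X, x₀) be a pointed topological space and n ≥ 1 an integer. For every element [f] ∈ π_n^top(X, x₀), the left translation map [g] ↦ [f]·[g] and the right translation map [g] ↦ [g]·[f] are homeomorphisms of π_n^top(X, x₀) onto itself. -/
open scoped Topology Topology.Homotopy unitInterval

noncomputable section

/-- The quotient topology on the `N`-th homotopy group, induced from the compact-open
topology on the space of generalized loops. -/
instance homotopyGroupTopology (N X : Type*) [TopologicalSpace X] (x : X) :
    TopologicalSpace (HomotopyGroup N X x) :=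
  inferInstanceAs (TopologicalSpace (Quotient (GenLoop.Homotopic.setoid N x)))

section

open GenLoop

variable {N X : Type*} [TopologicalSpace X] {x : X}

theorem continuous_transAt [DecidableEq N] (i : N) :
    Continuous (Function.uncurry (transAt i : Ω^ N X x → Ω^ N X x → Ω^ N X x)) := by
  simp_rw [Function.uncurry_def, ← fromLoop_trans_toLoop]
  exact (continuous_fromLoop i).comp <|
    ((continuous_toLoop i).comp continuous_fst).path_trans
      ((continuous_toLoop i).comp continuous_snd)

/-- The class `[p]` of a generalized loop `p` in the homotopy group, that is, the quotient map
`Ω^N(X, x) → π_N(X, x)`, typed with codomain `HomotopyGroup` rather than the underlying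
`Quotient` so that products of classes are products in the homotopy group. -/
def homotopyClass (p : Ω^ N X x) : HomotopyGroup N X x :=
  Quotient.mk _ p

theorem isQuotientMap_homotopyClass :
    Topology.IsQuotientMap (homotopyClass : Ω^ N X x → HomotopyGroup N X x) :=
  isQuotientMap_quotient_mk'

variable [DecidableEq N] [Nonempty N]

theorem homotopyClass_mul_homotopyClass (i : N) (p q : Ω^ N X x) :
    homotopyClass p * homotopyClass q = homotopyClass (transAt i q p) :=
  HomotopyGroup.mul_spec

/- Only one-sided continuity descends to the quotient: the square of a quotient map need not be a
quotient map, so `π_N^{top}` can fail to be a topological group. -/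
instance : SeparatelyContinuousMul (HomotopyGroup N X x) where
  continuous_const_mul {a} := by
    obtain ⟨p, rfl⟩ := isQuotientMap_homotopyClass.surjective a
    obtain ⟨i⟩ := ‹Nonempty N›
    have lift : (homotopyClass p * ·) ∘ homotopyClass = homotopyClass ∘ (transAt i · p) :=
      funext fun q ↦ homotopyClass_mul_homotopyClass i p q
    rw [isQuotientMap_homotopyClass.continuous_iff, lift]
    exact isQuotientMap_homotopyClass.continuous.comp ((continuous_transAt i).uncurry_right p)
  continuous_mul_const {a} := by
    obtain ⟨p, rfl⟩ := isQuotientMap_homotopyClass.surjective a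
    obtain ⟨i⟩ := ‹Nonempty N›
    have lift : (· * homotopyClass p) ∘ homotopyClass = homotopyClass ∘ transAt i p :=
      funext fun q ↦ homotopyClass_mul_homotopyClass i q p
    rw [isQuotientMap_homotopyClass.continuous_iff, lift]
    exact isQuotientMap_homotopyClass.continuous.comp ((continuous_transAt i).uncurry_left p)

theorem translations_isHomeomorph_general (f : HomotopyGroup N X x) :
    IsHomeomorph (fun g : HomotopyGroup N X x ↦ f * g) ∧
      IsHomeomorph (fun g : HomotopyGroup N X x ↦ g * f) :=
  ⟨(Homeomorph.mulLeft f).isHomeomorph, (Homeomorph.mulRight f).isHomeomorph⟩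

end

/-- Left and right translations by a fixed element of `π_{n+1}^{top}(X, x₀)` are
homeomorphisms of `π_{n+1}^{top}(X, x₀)` onto itself. -/
theorem translations_isHomeomorph (n : ℕ) (X : Type*) [TopologicalSpace X] (x₀ : X)
    (f : HomotopyGroup (Fin (n+1)) X x₀) :
    IsHomeomorph (fun g : HomotopyGroup (Fin (n+1)) X x₀ => f * g) ∧
    IsHomeomorph (fun g : HomotopyGroup (Fin (n+1)) X x₀ => g * f) :=
  translations_isHomeomorph_general f
end
end

section
/- Let (X, x₀) be a pointed topological space and n ≥ 1 an integer. Then π_n^top(X, x₀) is a homogeneous space: for any two elements a, b ∈ π_n^top(X, x₀) there exists a homeomorphism of π_n^top(X, x₀) onto itself carrying a to b. -/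
/-!
Concatenation is continuous on the space of generalized loops, and left or right multiplication by
the class of a loop is what concatenation with that loop induces on homotopy classes. Hence all
translations of the homotopy group are continuous for the quotient topology, and translation by
`b * a⁻¹` is a homeomorphism carrying `a` to `b`. Joint continuity of the multiplication does not
follow, because the product of two quotient maps need not be a quotient map.
-/

open scoped Topology Topology.Homotopy unitInterval

noncomputable section

theorem exists_homeomorph_apply_eq {G : Type*} [Group G] [TopologicalSpace G]
    [SeparatelyContinuousMul G] (a b : G) : ∃ e : G ≃ₜ G, e a = b :=
  ⟨Homeomorph.mulLeft (b * a⁻¹), inv_mul_cancel_right b a⟩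

section

variable {N X : Type*} [TopologicalSpace X] {x : X}

theorem continuous_genLoop_transAt [DecidableEq N] (i : N) :
    Continuous fun p : Ω^ N X x × Ω^ N X x ↦ GenLoop.transAt i p.1 p.2 := by
  simp_rw [← GenLoop.fromLoop_trans_toLoop]
  exact (GenLoop.continuous_fromLoop i).comp <| Path.continuous_trans.comp <|
    (GenLoop.continuous_toLoop i).prodMap (GenLoop.continuous_toLoop i)

/-- The homotopy class of a generalized loop. The codomain is `HomotopyGroup N X x` rather than the
underlying `Quotient`, so that its group structure and topology are found by instance search. -/
def homotopyGroupMk (p : Ω^ N X x) : HomotopyGroup N X x :=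
  Quotient.mk _ p

theorem isQuotientMap_homotopyGroupMk :
    Topology.IsQuotientMap (homotopyGroupMk : Ω^ N X x → HomotopyGroup N X x) :=
  isQuotientMap_quotient_mk'

theorem homotopyGroupMk_mul [DecidableEq N] [Nonempty N] (i : N) (p q : Ω^ N X x) :
    homotopyGroupMk p * homotopyGroupMk q = homotopyGroupMk (GenLoop.transAt i q p) :=
  HomotopyGroup.mul_spec

theorem continuous_homotopyGroupMk_mul [DecidableEq N] [Nonempty N] :
    Continuous fun p : Ω^ N X x × Ω^ N X x ↦ homotopyGroupMk p.1 * homotopyGroupMk p.2 := by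
  have i : N := Classical.arbitrary N
  have continuous_transAt_swap := (continuous_genLoop_transAt (x := x) i).comp continuous_swap
  exact (isQuotientMap_homotopyGroupMk.continuous.comp continuous_transAt_swap).congr
    fun p ↦ (homotopyGroupMk_mul i p.1 p.2).symm

instance homotopyGroupSeparatelyContinuousMul [DecidableEq N] [Nonempty N] :
    SeparatelyContinuousMul (HomotopyGroup N X x) where
  continuous_const_mul {c} := by
    obtain ⟨p, rfl⟩ := isQuotientMap_homotopyGroupMk.surjective c
    rw [isQuotientMap_homotopyGroupMk.continuous_iff]
    exact continuous_homotopyGroupMk_mul.curry_right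
  continuous_mul_const {c} := by
    obtain ⟨p, rfl⟩ := isQuotientMap_homotopyGroupMk.surjective c
    rw [isQuotientMap_homotopyGroupMk.continuous_iff]
    exact continuous_homotopyGroupMk_mul.curry_left

end

theorem homotopyGroup_homogeneous_general (N X : Type*) [Nonempty N] [TopologicalSpace X] (x₀ : X)
    (a b : HomotopyGroup N X x₀) :
    ∃ e : HomotopyGroup N X x₀ ≃ₜ HomotopyGroup N X x₀, e a = b := by
  classical
  exact exists_homeomorph_apply_eq a b

/-- `π_{n+1}^{top}(X, x₀)` is a homogeneous space: any point can be carried to any other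
point by a self-homeomorphism. -/
theorem homotopyGroup_homogeneous (n : ℕ) (X : Type*) [TopologicalSpace X] (x₀ : X)
    (a b : HomotopyGroup (Fin (n+1)) X x₀) :
    ∃ e : HomotopyGroup (Fin (n+1)) X x₀ ≃ₜ HomotopyGroup (Fin (n+1)) X x₀, e a = b :=
  homotopyGroup_homogeneous_general (Fin (n + 1)) X x₀ a b
end
end

section
/- Let (X, x₀) be a pointed topological space and n ≥ 1 an integer. For every neighborhood W of the identity element in π_n^top(X, x₀) there exists an open set U ⊆ X containing x₀ such that every homotopy class represented by an n-loop whose image is contained in U belongs to W. -/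
open scoped Topology Topology.Homotopy unitInterval

noncomputable section

/-!
A subbasic compact-open neighborhood of the constant map at `x₀` consists of the maps sending a
compact set `K` into an open set `V`; if `K` is nonempty then `x₀ ∈ V`. So maps whose images shrink
to `x₀` converge to the constant map, and the continuous projection from loops to their classes
carries this convergence to the homotopy group.
-/

open Set Filter

theorem tendsto_continuousMap_const_of_range_smallSets {ι X Y : Type*} [TopologicalSpace X]
    [TopologicalSpace Y] {l : Filter ι} {f : ι → C(X, Y)} {y : Y}
    (hf : Tendsto (fun i ↦ range (f i)) l (𝓝 y).smallSets) :
    Tendsto f l (𝓝 (ContinuousMap.const X y)) := by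
  refine ContinuousMap.tendsto_nhds_compactOpen.2 fun K _ V hV hKV ↦ ?_
  obtain rfl | ⟨a, ha⟩ := K.eq_empty_or_nonempty
  · exact .of_forall fun _ ↦ mapsTo_empty _ _
  · have hyV : V ∈ 𝓝 y := hV.mem_nhds (hKV ha)
    filter_upwards [tendsto_smallSets_iff.1 hf V hyV] with i hi
    exact fun t _ ↦ hi (mem_range_self t)

section HomotopyGroup

variable {ι N X : Type*} [TopologicalSpace X] {x : X}

theorem tendsto_genLoop_const_of_range_smallSets {l : Filter ι} {p : ι → Ω^ N X x}
    (hp : Tendsto (fun i ↦ range (p i)) l (𝓝 x).smallSets) :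
    Tendsto p l (𝓝 GenLoop.const) :=
  tendsto_subtype_rng.2 (tendsto_continuousMap_const_of_range_smallSets hp)

theorem continuous_homotopyGroup_mk :
    Continuous fun p : Ω^ N X x ↦ (⟦p⟧ : HomotopyGroup N X x) :=
  continuous_quotient_mk'

theorem tendsto_homotopyGroup_mk_const_of_range_smallSets {l : Filter ι} {p : ι → Ω^ N X x}
    (hp : Tendsto (fun i ↦ range (p i)) l (𝓝 x).smallSets) :
    Tendsto (fun i ↦ (⟦p i⟧ : HomotopyGroup N X x)) l (𝓝 ⟦GenLoop.const⟧) :=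
  (continuous_homotopyGroup_mk.tendsto GenLoop.const).comp
    (tendsto_genLoop_const_of_range_smallSets hp)

theorem small_loops_in_nhds_of_one_general {W : Set (HomotopyGroup N X x)}
    (hW : W ∈ 𝓝 (⟦GenLoop.const⟧ : HomotopyGroup N X x)) :
    ∃ U : Set X, IsOpen U ∧ x ∈ U ∧
      ∀ p : Ω^ N X x, (∀ t, p t ∈ U) → (⟦p⟧ : HomotopyGroup N X x) ∈ W := by
  have hmem : ∀ᶠ p : Ω^ N X x in comap (fun p ↦ range p) (𝓝 x).smallSets,
      (⟦p⟧ : HomotopyGroup N X x) ∈ W :=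
    tendsto_homotopyGroup_mk_const_of_range_smallSets tendsto_comap hW
  obtain ⟨U, ⟨hxU, hU⟩, hUW⟩ :=
    ((nhds_basis_opens x).smallSets.comap _).eventually_iff.1 hmem
  exact ⟨U, hU, hxU, fun p hp ↦ hUW (range_subset_iff.2 hp)⟩

end HomotopyGroup

/-- For every neighborhood `W` of the identity in `π_{n+1}^{top}(X, x₀)` there is an open
set `U ∋ x₀` such that every class represented by a loop with image in `U` lies in `W`. -/
theorem small_loops_in_nhds_of_one (n : ℕ) (X : Type*) [TopologicalSpace X] (x₀ : X)
    (W : Set (HomotopyGroup (Fin (n+1)) X x₀))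
    (hW : W ∈ nhds (1 : HomotopyGroup (Fin (n+1)) X x₀)) :
    ∃ U : Set X, IsOpen U ∧ x₀ ∈ U ∧
      ∀ p : Ω^ (Fin (n+1)) X x₀, (∀ t, p t ∈ U) →
        (⟦p⟧ : HomotopyGroup (Fin (n+1)) X x₀) ∈ W :=
  small_loops_in_nhds_of_one_general (by rwa [← HomotopyGroup.one_def])
end
end

section
/- For every integer n ≥ 2, the n-th homotopy group π_n(ℋ_n, 0) of the n-dimensional Hawaiian earring is isomorphic as a group to the countable direct product ∏_{j∈ℕ} ℤ of copies of the integers (equivalently, to the inverse limit of the groups G_i = ℤ^i under the coordinate projections G_i → G_k for k ≤ i). -/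
open scoped Topology Topology.Homotopy unitInterval

noncomputable section

/-- The `n`-sphere of radius `1/j` centered at `(1/j, 0, …, 0)` in `ℝ^{n+1}`
(it passes through the origin). -/
def hawSphere (n j : ℕ) : Set (EuclideanSpace ℝ (Fin (n+1))) :=
  Metric.sphere (EuclideanSpace.single (0 : Fin (n+1)) ((1 : ℝ)/j)) (1/j)

/-- The `n`-dimensional Hawaiian earring: the union of the spheres `hawSphere n j`, `j ≥ 1`. -/
def hawaiian (n : ℕ) : Set (EuclideanSpace ℝ (Fin (n+1))) :=
  ⋃ j ∈ {j : ℕ | 1 ≤ j}, hawSphere n j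

/-- The union `Y_i^{(n)}` of the first `i` spheres of the `n`-dimensional Hawaiian earring. -/
def Ysub (n i : ℕ) : Set (EuclideanSpace ℝ (Fin (n+1))) :=
  ⋃ j ∈ Finset.Icc 1 i, hawSphere n j

lemma zero_mem_hawSphere (n j : ℕ) : (0 : EuclideanSpace ℝ (Fin (n+1))) ∈ hawSphere n j := by
  have : dist (0 : EuclideanSpace ℝ (Fin (n+1)))
      (EuclideanSpace.single (0 : Fin (n+1)) ((1 : ℝ)/j)) = 1/j := by
    rw [dist_zero_left, EuclideanSpace.norm_single, Real.norm_eq_abs,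
      abs_of_nonneg (one_div_nonneg.mpr (Nat.cast_nonneg j))]
  exact Metric.mem_sphere.mpr this

lemma zero_mem_hawaiian (n : ℕ) : (0 : EuclideanSpace ℝ (Fin (n+1))) ∈ hawaiian n :=
  Set.mem_biUnion (by simp : (1 : ℕ) ∈ {j : ℕ | 1 ≤ j}) (zero_mem_hawSphere n 1)

lemma zero_mem_Ysub (n i : ℕ) : (0 : EuclideanSpace ℝ (Fin (n+1))) ∈ Ysub n (i+1) :=
  Set.mem_biUnion (by simp : (1 : ℕ) ∈ Finset.Icc 1 (i+1)) (zero_mem_hawSphere n 1)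

/-- The basepoint (the origin) of the Hawaiian earring. -/
def hawaiianPt (n : ℕ) : ↥(hawaiian n) := ⟨0, zero_mem_hawaiian n⟩

/-- The basepoint (the origin) of `Y_{i+1}^{(n)}`. -/
def YsubPt (n i : ℕ) : ↥(Ysub n (i+1)) := ⟨0, zero_mem_Ysub n i⟩

/-!
The earring is homeomorphic to the shrinking wedge of countably many `n`-spheres, so it suffices to
show that the retractions onto the spheres identify its `n`-th homotopy group with the product of
the groups `πₙ(Sⁿ) ≅ ℤ`.

*Normal form.* A map `f` from the cube to the sphere is deformed as follows. Its height above the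
basepoint is kept, its `i`-th orthogonal coordinate is replaced by its value at a point
reparametrized by stair functions which climb only in the cells of type `i` of a fine grid, and the
result is steepened until it is constant outside these cells. The deformed map is nontrivial only in
small boxes which the `n` types of walls cross in `n` different directions, and it leaves the points
where `f` is the basepoint alone.

*Spheres.* In each such box the map is, up to a permutation of the coordinates, a product of `n`
functions of one variable, so its class is a power of the class of the collapse map. That this class
has infinite order follows from a combinatorial degree, defined as a sum over the simplices of the
Kuhn triangulation of a fine grid.

*Shrinking wedge.* Since the normal form preserves the basepoint, it applies to all coordinates of a
loop in the wedge simultaneously. If the first coordinate is in normal form, it is trivial along all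
grid hyperplanes and sliding along one direction separates it from the other coordinates. Thus every
loop is, up to homotopy, the product of a loop in the first sphere and a loop in the remaining
wedge. If all coordinates are null-homotopic, then the loop can be moved into smaller and smaller
wedges, and the infinite concatenation of these homotopies is continuous in the shrinking topology.
-/

namespace HawaiianEarring

/-! ### Generalized loops and induced maps -/

section Loops

variable {N X Y : Type*} [TopologicalSpace X] [TopologicalSpace Y] {x : X} {y : Y}

lemma homotopic_of_continuous {f g : Ω^ N X x} (H : I × (N → I) → X) (hH : Continuous H)
    (h₀ : ∀ t, H (0, t) = f t) (h₁ : ∀ t, H (1, t) = g t)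
    (hb : ∀ s, ∀ t ∈ Cube.boundary N, H (s, t) = x) : GenLoop.Homotopic f g :=
  ⟨{ toFun := H
     continuous_toFun := hH
     map_zero_left := h₀
     map_one_left := h₁
     prop' := fun s t ht => (hb s t ht).trans (GenLoop.boundary f t ht).symm }⟩

lemma homotopic_of_homotopicRel {f g : Ω^ N X x} {S : Set (N → I)}
    (h : (f : C(N → I, X)).HomotopicRel g S) (hS : Cube.boundary N ⊆ S) :
    GenLoop.Homotopic f g :=
  h.map fun H => { H with prop' := fun s t ht => H.prop' s t (hS ht) }

lemma exists_continuous_of_homotopic {f g : Ω^ N X x} (h : GenLoop.Homotopic f g) :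
    ∃ H : I × (N → I) → X, Continuous H ∧ (∀ t, H (0, t) = f t) ∧ (∀ t, H (1, t) = g t) ∧
      ∀ s, ∀ t ∈ Cube.boundary N, H (s, t) = x := by
  obtain ⟨H⟩ := h
  exact ⟨H, H.continuous, H.apply_zero, H.apply_one,
    fun s t ht => (H.eq_fst s ht).trans (GenLoop.boundary f t ht)⟩

lemma continuous_loop (f : Ω^ N X x) : Continuous f := f.1.continuous

/-- The pushforward `φ ∘ f` of a generalized loop along a pointed map. -/
def loopMap (φ : C(X, Y)) (h : φ x = y) (f : Ω^ N X x) : Ω^ N Y y :=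
  ⟨φ.comp f, fun t ht => (congrArg φ (GenLoop.boundary f t ht)).trans h⟩

@[simp] lemma loopMap_apply (φ : C(X, Y)) (h : φ x = y) (f : Ω^ N X x) (t : N → I) :
    loopMap φ h f t = φ (f t) := rfl

lemma loopMap_homotopic (φ : C(X, Y)) (h : φ x = y) {f g : Ω^ N X x}
    (hfg : GenLoop.Homotopic f g) : GenLoop.Homotopic (loopMap φ h f) (loopMap φ h g) :=
  hfg.comp_continuousMap φ

/-- The class of a generalized loop in the homotopy group. -/
def loopClass (f : Ω^ N X x) : HomotopyGroup N X x := Quotient.mk _ f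

lemma loopClass_eq_iff {f g : Ω^ N X x} : loopClass f = loopClass g ↔ GenLoop.Homotopic f g :=
  Quotient.eq

lemma loopClass_surjective : Function.Surjective (loopClass : Ω^ N X x → HomotopyGroup N X x) :=
  Quotient.exists_rep

variable [DecidableEq N]

lemma transAt_apply (i : N) (f g : Ω^ N X x) (t : N → I) :
    GenLoop.transAt i f g t = if (t i : ℝ) ≤ 1 / 2
      then f (Function.update t i <| Set.projIcc 0 1 zero_le_one (2 * t i))
      else g (Function.update t i <| Set.projIcc 0 1 zero_le_one (2 * t i - 1)) := rfl

lemma symmAt_apply (i : N) (f : Ω^ N X x) (t : N → I) :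
    GenLoop.symmAt i f t = f (Function.update t i (unitInterval.symm (t i))) := by
  change f _ = f _
  congr 1
  ext j
  by_cases hj : j = i <;> simp [hj]

lemma loopMap_transAt (φ : C(X, Y)) (h : φ x = y) (i : N) (f g : Ω^ N X x) :
    loopMap φ h (GenLoop.transAt i f g) = GenLoop.transAt i (loopMap φ h f) (loopMap φ h g) := by
  ext t
  simp only [loopMap_apply, transAt_apply]
  split_ifs <;> rfl

variable [Nonempty N]

lemma loopClass_mul (i : N) (f g : Ω^ N X x) :
    loopClass f * loopClass g = loopClass (GenLoop.transAt i g f) :=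
  HomotopyGroup.mul_spec

lemma loopClass_const : loopClass (GenLoop.const : Ω^ N X x) = 1 := rfl

lemma loopClass_inv (i : N) (f : Ω^ N X x) :
    (loopClass f)⁻¹ = loopClass (GenLoop.symmAt i f) :=
  HomotopyGroup.inv_spec

/-- The homomorphism induced on homotopy groups by a pointed map. -/
def piMap (φ : C(X, Y)) (h : φ x = y) : HomotopyGroup N X x →* HomotopyGroup N Y y where
  toFun := Quotient.map (loopMap φ h) fun _ _ => loopMap_homotopic φ h
  map_one' := congrArg loopClass (GenLoop.ext (loopMap φ h GenLoop.const) _ fun _ => h)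
  map_mul' a b := by
    obtain ⟨f, rfl⟩ := loopClass_surjective a
    obtain ⟨g, rfl⟩ := loopClass_surjective b
    rw [loopClass_mul (Classical.arbitrary N)]
    change loopClass _ = loopClass _ * loopClass _
    rw [loopClass_mul (Classical.arbitrary N), loopMap_transAt]

lemma piMap_loopClass (φ : C(X, Y)) (h : φ x = y) (f : Ω^ N X x) :
    piMap φ h (loopClass f) = loopClass (loopMap φ h f) := rfl

/-- The isomorphism of homotopy groups induced by a pointed homeomorphism. -/
def piCongr (φ : X ≃ₜ Y) (h : φ x = y) : HomotopyGroup N X x ≃* HomotopyGroup N Y y :=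
  have h' : φ.symm y = x := by rw [← h, φ.symm_apply_apply]
  { piMap (φ : C(X, Y)) h with
    invFun := piMap (φ.symm : C(Y, X)) h'
    left_inv := fun a => by
      obtain ⟨f, rfl⟩ := loopClass_surjective a
      exact congrArg loopClass (GenLoop.ext _ f fun t => φ.symm_apply_apply (f t))
    right_inv := fun b => by
      obtain ⟨g, rfl⟩ := loopClass_surjective b
      exact congrArg loopClass (GenLoop.ext _ g fun t => φ.apply_symm_apply (g t)) }

end Loops

/-! ### Splitting a loop along the lines of one direction -/

section Splitting

variable {N X : Type*} [DecidableEq N] [TopologicalSpace X] {x : X}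

/-- The map of the cube which stretches the coordinate `a` by the affine map
`v ↦ (1 + s) v - c`, clamped to the unit interval. For `s = 1` and `c = 0, 1` these are the two
reparametrizations in `GenLoop.transAt`. -/
def stretch (a : N) (s c : I) (t : N → I) : N → I :=
  Function.update t a (Set.projIcc 0 1 zero_le_one ((1 + s) * t a - c : ℝ))

lemma continuous_stretch (a : N) {Z : Type*} [TopologicalSpace Z] {s c : Z → I} {t : Z → N → I}
    (hs : Continuous s) (hc : Continuous c) (ht : Continuous t) :
    Continuous fun z => stretch a (s z) (c z) (t z) :=
  ht.update a (continuous_projIcc.comp (by fun_prop))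

lemma stretch_zero (a : N) (t : N → I) : stretch a 0 0 t = t := by simp [stretch]

lemma stretch_mem_boundary (a : N) {s c : I} (hcs : c ≤ s) {t : N → I}
    (ht : t ∈ Cube.boundary N) : stretch a s c t ∈ Cube.boundary N := by
  obtain ⟨b, hb⟩ := ht
  refine ⟨b, ?_⟩
  rcases eq_or_ne b a with rfl | hba
  · simp only [stretch, Function.update_self]
    refine hb.imp (fun hb => Set.projIcc_of_le_left _ ?_) fun hb => Set.projIcc_of_right_le _ ?_
    · simpa [hb] using c.2.1
    · have : (c : ℝ) ≤ s := hcs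
      simp only [hb, Set.Icc.coe_one]
      linarith
  · simpa [stretch, hba] using hb

lemma apply_stretch_one_zero (a : N) (f : Ω^ N X x) {t : N → I} (ht : 1 / 2 < (t a : ℝ)) :
    f (stretch a 1 0 t) = x := by
  refine GenLoop.boundary f _ ⟨a, Or.inr ?_⟩
  rw [stretch, Function.update_self]
  refine Set.projIcc_of_right_le _ ?_
  simp only [Set.Icc.coe_one, Set.Icc.coe_zero]
  linarith

lemma apply_stretch_one_one (a : N) (f : Ω^ N X x) {t : N → I} (ht : (t a : ℝ) ≤ 1 / 2) :
    f (stretch a 1 1 t) = x := by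
  refine GenLoop.boundary f _ ⟨a, Or.inl ?_⟩
  rw [stretch, Function.update_self]
  refine Set.projIcc_of_le_left _ ?_
  simp only [Set.Icc.coe_one]
  linarith

lemma transAt_eq_stretch (a : N) (f g : Ω^ N X x) (t : N → I) :
    GenLoop.transAt a f g t =
      if (t a : ℝ) ≤ 1 / 2 then f (stretch a 1 0 t) else g (stretch a 1 1 t) := by
  simp only [transAt_apply, stretch, Set.Icc.coe_one, Set.Icc.coe_zero, sub_zero,
    one_add_one_eq_two]

/-- The points of the cube whose line in direction `a` is mapped to the basepoint by `g`. -/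
def trivialLines (a : N) (g : Ω^ N X x) : Set (N → I) :=
  {t | ∀ s, g (Function.update t a s) = x}

lemma isClosed_trivialLines [T1Space X] (a : N) (g : Ω^ N X x) : IsClosed (trivialLines a g) := by
  simp only [trivialLines, Set.ofPred_forall]
  exact isClosed_iInter fun s => isClosed_singleton.preimage
    ((continuous_loop g).comp (continuous_id.update a continuous_const))

lemma apply_stretch_of_mem_trivialLines {a : N} {g : Ω^ N X x} {t : N → I}
    (ht : t ∈ trivialLines a g) (s c : I) : g (stretch a s c t) = x := ht _

lemma apply_of_mem_trivialLines {a : N} {g : Ω^ N X x} {t : N → I} (ht : t ∈ trivialLines a g) :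
    g t = x := by simpa using ht (t a)

lemma exists_continuous_glue [T1Space X] (a : N) {g₁ g₂ : Ω^ N X x}
    (hcover : ∀ t, t ∈ trivialLines a g₁ ∨ t ∈ trivialLines a g₂) :
    ∃ H : I × (N → I) → X, Continuous H ∧
      (∀ s, ∀ t ∈ trivialLines a g₂, H (s, t) = g₁ (stretch a s s t)) ∧
      ∀ s, ∀ t ∈ trivialLines a g₁, H (s, t) = g₂ (stretch a s 0 t) := by
  classical
  let H : I × (N → I) → X := fun p =>
    if p.2 ∈ trivialLines a g₂ then g₁ (stretch a p.1 p.1 p.2) else g₂ (stretch a p.1 0 p.2)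
  have hH₁ : ∀ s, ∀ t ∈ trivialLines a g₂, H (s, t) = g₁ (stretch a s s t) :=
    fun s t ht => if_pos ht
  have hH₂ : ∀ s, ∀ t ∈ trivialLines a g₁, H (s, t) = g₂ (stretch a s 0 t) := by
    intro s t ht
    by_cases ht' : t ∈ trivialLines a g₂
    · rw [hH₁ s t ht', apply_stretch_of_mem_trivialLines ht,
        apply_stretch_of_mem_trivialLines ht']
    · exact if_neg ht'
  refine ⟨H, ?_, hH₁, hH₂⟩
  have huniv : (Set.univ : Set (I × (N → I))) =
      Prod.snd ⁻¹' trivialLines a g₂ ∪ Prod.snd ⁻¹' trivialLines a g₁ := by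
    ext p
    simpa using (hcover p.2).symm
  rw [← continuousOn_univ, huniv]
  refine ContinuousOn.union_of_isClosed ?_ ?_
    ((isClosed_trivialLines a g₂).preimage continuous_snd)
    ((isClosed_trivialLines a g₁).preimage continuous_snd)
  · exact ((continuous_loop g₁).comp (continuous_stretch a continuous_fst continuous_fst
      continuous_snd)).continuousOn.congr fun p hp => hH₁ p.1 p.2 hp
  · exact ((continuous_loop g₂).comp (continuous_stretch a continuous_fst continuous_const
      continuous_snd)).continuousOn.congr fun p hp => hH₂ p.1 p.2 hp

-- On each line in direction `a` only one of `g₁`, `g₂` is nontrivial, so the two halves of the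
-- concatenation can be stretched independently to fill the whole line.
theorem loopClass_eq_mul_of_lines [Nonempty N] [T1Space X] (a : N) {f g₁ g₂ : Ω^ N X x}
    (hlines : ∀ t : N → I,
      (∀ s, g₁ (Function.update t a s) = x ∧
        f (Function.update t a s) = g₂ (Function.update t a s)) ∨
      ∀ s, g₂ (Function.update t a s) = x ∧
        f (Function.update t a s) = g₁ (Function.update t a s)) :
    loopClass f = loopClass g₁ * loopClass g₂ := by
  have hcover : ∀ t, t ∈ trivialLines a g₁ ∨ t ∈ trivialLines a g₂ := fun t =>
    (hlines t).imp (fun h s => (h s).1) fun h s => (h s).1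
  have hf : ∀ t, (g₁ t = x ∧ f t = g₂ t) ∨ (g₂ t = x ∧ f t = g₁ t) := fun t =>
    (hlines t).imp (fun h => by simpa using h (t a)) fun h => by simpa using h (t a)
  obtain ⟨H, hH, hH₁, hH₂⟩ := exists_continuous_glue a hcover
  rw [loopClass_mul a, loopClass_eq_iff]
  refine homotopic_of_continuous H hH (fun t => ?_) (fun t => ?_) fun s t ht => ?_
  · rcases hcover t with h | h
    · have := hf t
      have := apply_of_mem_trivialLines h
      rw [hH₂ 0 t h, stretch_zero]
      grind
    · have := hf t
      have := apply_of_mem_trivialLines h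
      rw [hH₁ 0 t h, stretch_zero]
      grind
  · rw [transAt_eq_stretch]
    rcases hcover t with h | h
    · rw [hH₂ 1 t h]
      split_ifs with hta
      · rfl
      · rw [apply_stretch_of_mem_trivialLines h, apply_stretch_one_zero a g₂ (not_le.1 hta)]
    · rw [hH₁ 1 t h]
      split_ifs with hta
      · rw [apply_stretch_of_mem_trivialLines h, apply_stretch_one_one a g₁ hta]
      · rfl
  · rcases hcover t with h | h
    · rw [hH₂ s t h, GenLoop.boundary g₂ _ (stretch_mem_boundary a s.2.1 ht)]
    · rw [hH₁ s t h, GenLoop.boundary g₁ _ (stretch_mem_boundary a le_rfl ht)]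

end Splitting

/-! ### Deformations of maps into a round sphere -/

section Antipodal

variable {E : Type*} [NormedAddCommGroup E] [NormedSpace ℝ E]

lemma lineMap_ne_zero_of_ne_neg {u v : E} (hn : ‖u‖ = ‖v‖) (huv : u ≠ -v) (t : I) :
    (1 - t : ℝ) • u + (t : ℝ) • v ≠ 0 := by
  intro h
  rw [← eq_neg_iff_add_eq_zero, ← smul_neg] at h
  have ht : (1 - t : ℝ) * ‖v‖ = t * ‖v‖ := by
    simpa [norm_smul, hn, abs_of_nonneg t.2.1, abs_of_nonneg (sub_nonneg.2 t.2.2)]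
      using congrArg norm h
  rcases mul_eq_mul_right_iff.1 ht with ht | hv
  · rw [ht] at h
    exact huv (smul_right_injective E (by linarith : (t : ℝ) ≠ 0) h)
  · rw [hv] at hn
    rw [norm_eq_zero] at hn hv
    exact huv (by rw [hn, hv, neg_zero])

lemma homotopicRel_of_forall_ne_antipodal {Z : Type*} [TopologicalSpace Z] {c : E} {r : ℝ}
    {f g : C(Z, Metric.sphere c r)} (h : ∀ z, (f z - c : E) ≠ -(g z - c)) :
    f.HomotopicRel g {z | f z = g z} := by
  have hf : ∀ z, ‖(f z - c : E)‖ = r := fun z => mem_sphere_iff_norm.1 (f z).2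
  have hg : ∀ z, ‖(g z - c : E)‖ = r := fun z => mem_sphere_iff_norm.1 (g z).2
  have hr : ∀ _ : Z, r ≠ 0 := by
    rintro z rfl
    exact h z (by rw [norm_eq_zero.1 (hf z), norm_eq_zero.1 (hg z), neg_zero])
  let w : I × Z → E := fun p => (1 - p.1 : ℝ) • (f p.2 - c : E) + (p.1 : ℝ) • (g p.2 - c : E)
  have hw : Continuous w := by fun_prop
  have hw₀ : ∀ p, ‖w p‖ ≠ 0 := fun p =>
    norm_ne_zero_iff.2 (lineMap_ne_zero_of_ne_neg ((hf _).trans (hg _).symm) (h p.2) p.1)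
  have hmem : ∀ p, c + (r / ‖w p‖) • w p ∈ Metric.sphere c r := fun p => by
    rw [mem_sphere_iff_norm, add_sub_cancel_left, norm_smul, norm_div, norm_norm,
      div_mul_cancel₀ _ (hw₀ p), Real.norm_of_nonneg ((norm_nonneg _).trans_eq (hf p.2))]
  have hH : ∀ p (e : Metric.sphere c r), w p = e - c → c + (r / ‖w p‖) • w p = e := by
    rintro p e he
    rw [he, mem_sphere_iff_norm.1 e.2, div_self (hr p.2), one_smul, add_sub_cancel]
  exact ⟨{
    toFun p := ⟨c + (r / ‖w p‖) • w p, hmem p⟩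
    continuous_toFun := (continuous_const.add
      ((continuous_const.div hw.norm hw₀).smul hw)).subtype_mk _
    map_zero_left z := Subtype.ext (hH (0, z) (f z) (by simp [w]))
    map_one_left z := Subtype.ext (hH (1, z) (g z) (by simp [w]))
    prop' t z hz := Subtype.ext (hH (t, z) (f z) (by
      simp only [w, ← show f z = g z from hz, ← add_smul, sub_add_cancel, one_smul])) }⟩

end Antipodal

/-! ### The model of the sphere -/

lemma mem_hawSphere_iff {n j : ℕ} {z : EuclideanSpace ℝ (Fin (n + 1))} :
    z ∈ hawSphere n j ↔ ‖z‖ ^ 2 = 2 / j * z 0 := by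
  have hj : (0 : ℝ) ≤ 1 / j := by positivity
  rw [hawSphere, mem_sphere_iff_norm, ← sq_eq_sq₀ (norm_nonneg _) hj, norm_sub_sq_real,
    EuclideanSpace.inner_single_right, PiLp.norm_single, Real.norm_of_nonneg hj]
  simp only [conj_trivial]
  constructor <;> intro h <;> linear_combination h

/-- The model of the `n`-sphere used throughout: the largest sphere of the earring, which has
radius one and passes through the origin. -/
abbrev Sphere (n : ℕ) : Type := hawSphere n 1

variable {n : ℕ}

/-- The basepoint of `Sphere n`, the origin. -/
def base : Sphere n := ⟨0, zero_mem_hawSphere n 1⟩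

/-- The coordinate along the diameter through the basepoint, which takes values in `[0, 2]`. -/
def height (x : Sphere n) : ℝ := x.1 0

/-- The `i`-th of the `n` coordinates orthogonal to the diameter through the basepoint. -/
def coord (i : Fin n) (x : Sphere n) : ℝ := x.1 i.succ

@[simp] lemma height_base : height (base : Sphere n) = 0 := rfl
@[simp] lemma coord_base (i : Fin n) : coord i (base : Sphere n) = 0 := rfl

@[fun_prop] lemma continuous_height : Continuous (height : Sphere n → ℝ) := by
  unfold height; fun_prop

@[fun_prop] lemma continuous_coord (i : Fin n) : Continuous (coord i : Sphere n → ℝ) := by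
  unfold coord; fun_prop

lemma sum_coord_sq (x : Sphere n) : ∑ i, coord i x ^ 2 = height x * (2 - height x) := by
  have h := mem_hawSphere_iff.1 x.2
  rw [EuclideanSpace.real_norm_sq_eq, Fin.sum_univ_succ] at h
  simp only [coord, height]
  push_cast at h
  linear_combination h

lemma eq_of_height_eq_of_coord_eq {x y : Sphere n} (h : height x = height y)
    (hc : ∀ i, coord i x = coord i y) : x = y :=
  Subtype.ext (PiLp.ext (Fin.cases h hc))

lemma height_eq_zero_iff {x : Sphere n} : height x = 0 ↔ x = base := by
  refine ⟨fun h => eq_of_height_eq_of_coord_eq h fun i => ?_, fun h => h ▸ height_base⟩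
  have hsum := sum_coord_sq x
  rw [h, zero_mul, Finset.sum_eq_zero_iff_of_nonneg fun i _ => sq_nonneg _] at hsum
  simpa using hsum i (Finset.mem_univ i)

/-- Every point of `Sphere n` at height between `1/2` and `3/2` has a coordinate of at least this
size, see `exists_threshold_le_abs_coord`. -/
def threshold (n : ℕ) : ℝ := 1 / (2 * (n + 1))

lemma threshold_pos : 0 < threshold n := by unfold threshold; positivity

lemma threshold_le : threshold n ≤ 1 / 2 :=
  one_div_le_one_div_of_le two_pos (by linarith [n.cast_nonneg (α := ℝ)])

lemma exists_threshold_le_abs_coord {x : Sphere n} (h : |height x - 1| ≤ 1 / 2) :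
    ∃ i, threshold n ≤ |coord i x| := by
  by_contra! hc
  have hle : ∑ i, coord i x ^ 2 ≤ ∑ _i : Fin n, threshold n ^ 2 :=
    Finset.sum_le_sum fun i _ => by
      simpa using pow_le_pow_left₀ (abs_nonneg (coord i x)) (hc i).le 2
  have hn : n * threshold n ^ 2 < 1 / 2 := by
    rw [threshold, div_pow, one_pow, mul_one_div, div_lt_div_iff₀ (by positivity) two_pos]
    nlinarith [n.cast_nonneg (α := ℝ)]
  rw [sum_coord_sq, Finset.sum_const, Finset.card_univ, Fintype.card_fin, nsmul_eq_mul] at hle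
  nlinarith [abs_le.1 h]

/-! ### Collapsing the boundary of the cube -/

/-- The second intersection point of the line `ℝ v` with the sphere (the basepoint if
`v = 0`). -/
def chord (v : EuclideanSpace ℝ (Fin (n + 1))) : Sphere n :=
  ⟨(2 * v 0 / ‖v‖ ^ 2) • v, mem_hawSphere_iff.2 <| by
    rcases eq_or_ne v 0 with rfl | hv
    · simp
    · have : ‖v‖ ≠ 0 := norm_ne_zero_iff.2 hv
      rw [norm_smul, mul_pow, PiLp.smul_apply, Real.norm_eq_abs, sq_abs]
      simp only [smul_eq_mul, Nat.cast_one]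
      field_simp⟩

lemma height_chord (v : EuclideanSpace ℝ (Fin (n + 1))) :
    height (chord v) = 2 * v 0 / ‖v‖ ^ 2 * v 0 := rfl

lemma coord_chord (v : EuclideanSpace ℝ (Fin (n + 1))) (i : Fin n) :
    coord i (chord v) = 2 * v 0 / ‖v‖ ^ 2 * v i.succ := rfl

lemma chord_eq_base_iff {v : EuclideanSpace ℝ (Fin (n + 1))} : chord v = base ↔ v 0 = 0 := by
  rw [← height_eq_zero_iff, height_chord]
  refine ⟨fun h => ?_, fun h => by simp [h]⟩
  rcases eq_or_ne v 0 with rfl | hv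
  · rfl
  · simpa [hv] using h

lemma continuous_chord_comp {Z : Type*} [TopologicalSpace Z]
    {v : Z → EuclideanSpace ℝ (Fin (n + 1))} (hv : Continuous v) (h : ∀ z, v z ≠ 0) :
    Continuous fun z => chord (v z) :=
  (((continuous_const.mul (by fun_prop)).div (hv.norm.pow 2) fun z => by simp [h z]).smul
    hv).subtype_mk _

/-- The vector with first coordinate `∏ i, y i (1 - y i)`, vanishing exactly on the boundary of
the cube, and remaining coordinates `2 y i - 1`. -/
def collapseVec (y : Fin n → I) : EuclideanSpace ℝ (Fin (n + 1)) :=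
  WithLp.toLp 2 (Fin.cons (∏ i, (y i * (1 - y i) : ℝ)) fun i => 2 * y i - 1)

lemma collapseVec_zero (y : Fin n → I) : collapseVec y 0 = ∏ i, (y i * (1 - y i) : ℝ) := rfl

lemma collapseVec_succ (y : Fin n → I) (i : Fin n) : collapseVec y i.succ = 2 * y i - 1 := rfl

@[fun_prop] lemma continuous_collapseVec :
    Continuous (collapseVec : (Fin n → I) → EuclideanSpace ℝ (Fin (n + 1))) := by
  refine (PiLp.continuous_toLp 2 _).comp (continuous_pi (Fin.cases ?_ fun i => ?_))
  · simp only [Fin.cons_zero]; fun_prop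
  · simp only [Fin.cons_succ]; fun_prop

lemma collapseVec_zero_nonneg (y : Fin n → I) : 0 ≤ collapseVec y 0 := by
  rw [collapseVec_zero]
  exact Finset.prod_nonneg fun i _ => mul_nonneg (y i).2.1 (sub_nonneg.2 (y i).2.2)

lemma collapseVec_zero_eq_zero_iff {y : Fin n → I} :
    collapseVec y 0 = 0 ↔ y ∈ Cube.boundary (Fin n) := by
  rw [collapseVec_zero, Finset.prod_eq_zero_iff]
  simp only [Finset.mem_univ, true_and, mul_eq_zero, sub_eq_zero, Set.Icc.coe_eq_zero,
    eq_comm (a := (1 : ℝ)), Set.Icc.coe_eq_one]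
  rfl

lemma collapseVec_ne_zero (y : Fin n → I) : collapseVec y ≠ 0 := by
  intro h
  obtain ⟨i, hi⟩ := collapseVec_zero_eq_zero_iff.1 (congrArg (· 0) h)
  have hc : 2 * (y i : ℝ) - 1 = 0 := congrArg (· i.succ) h
  rcases hi with hi | hi <;> rw [hi] at hc <;> norm_num at hc

/-- The quotient map from the cube onto the sphere which collapses the boundary. -/
def collapse (y : Fin n → I) : Sphere n := chord (collapseVec y)

@[fun_prop] lemma continuous_collapse : Continuous (collapse : (Fin n → I) → Sphere n) :=
  continuous_chord_comp continuous_collapseVec collapseVec_ne_zero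

lemma collapse_eq_base_iff {y : Fin n → I} : collapse y = base ↔ y ∈ Cube.boundary (Fin n) :=
  chord_eq_base_iff.trans collapseVec_zero_eq_zero_iff

lemma coord_collapse (y : Fin n → I) (i : Fin n) : coord i (collapse y) =
    2 * collapseVec y 0 / ‖collapseVec y‖ ^ 2 * (2 * y i - 1) :=
  coord_chord _ _

lemma coord_collapse_nonneg {y : Fin n → I} {i : Fin n} (h : 1 / 2 ≤ (y i : ℝ)) :
    0 ≤ coord i (collapse y) := by
  have := collapseVec_zero_nonneg y
  rw [coord_collapse]
  exact mul_nonneg (by positivity) (by linarith)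

lemma coord_collapse_nonpos {y : Fin n → I} {i : Fin n} (h : (y i : ℝ) ≤ 1 / 2) :
    coord i (collapse y) ≤ 0 := by
  have := collapseVec_zero_nonneg y
  rw [coord_collapse]
  exact mul_nonpos_of_nonneg_of_nonpos (by positivity) (by linarith)

/-- The loop given by the quotient map; its class generates the `n`-th homotopy group of the
`n`-sphere. -/
def collapseLoop (n : ℕ) : Ω^ (Fin n) (Sphere n) base :=
  ⟨⟨collapse, continuous_collapse⟩, fun _ hy => collapse_eq_base_iff.2 hy⟩

/-- The value `collapse y` where the height `h` is at least one, and the basepoint elsewhere. -/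
def maskedCollapse (h : ℝ) (y : Fin n → I) : Sphere n := if 1 ≤ h then collapse y else base

lemma maskedCollapse_of_lt {h : ℝ} {y : Fin n → I} (hh : h < 1) : maskedCollapse h y = base :=
  if_neg hh.not_ge

lemma maskedCollapse_of_mem_boundary {h : ℝ} {y : Fin n → I} (hy : y ∈ Cube.boundary (Fin n)) :
    maskedCollapse h y = base := by
  rw [maskedCollapse, collapse_eq_base_iff.2 hy, ite_self]

lemma maskedCollapse_of_le {h : ℝ} {y : Fin n → I} (hh : 1 ≤ h) :
    maskedCollapse h y = collapse y := if_pos hh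

lemma continuous_maskedCollapse {Z : Type*} [TopologicalSpace Z] {h : Z → ℝ} {y : Z → Fin n → I}
    (hh : Continuous h) (hy : Continuous y) (hb : ∀ z, h z = 1 → y z ∈ Cube.boundary (Fin n)) :
    Continuous fun z => maskedCollapse (h z) (y z) :=
  Continuous.if_le (continuous_collapse.comp hy) continuous_const continuous_const hh
    fun z hz => collapse_eq_base_iff.2 (hb z hz.symm)

/-! ### A retraction-like self-map of the sphere -/

/-- The number `1/2 + v`, clamped to the unit interval. -/
def centeredClamp (v : ℝ) : I := Set.projIcc 0 1 zero_le_one (1 / 2 + v)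

@[fun_prop] lemma continuous_centeredClamp : Continuous centeredClamp := by
  unfold centeredClamp; fun_prop

lemma centeredClamp_of_ge {v : ℝ} (h : 1 / 2 ≤ v) : centeredClamp v = 1 :=
  Set.projIcc_of_right_le _ (by linarith)

lemma centeredClamp_of_le {v : ℝ} (h : v ≤ -(1 / 2)) : centeredClamp v = 0 :=
  Set.projIcc_of_le_left _ (by linarith)

lemma centeredClamp_zero : (centeredClamp 0 : ℝ) = 1 / 2 := by
  rw [centeredClamp, add_zero, Set.projIcc_of_mem zero_le_one (by norm_num)]

lemma monotone_centeredClamp : Monotone centeredClamp := fun _ _ h =>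
  Set.monotone_projIcc _ (by linarith)

lemma half_le_centeredClamp {v : ℝ} (h : 0 ≤ v) : (1 : ℝ) / 2 ≤ centeredClamp v :=
  centeredClamp_zero.symm.trans_le (monotone_centeredClamp h)

lemma centeredClamp_le_half {v : ℝ} (h : v ≤ 0) : (centeredClamp v : ℝ) ≤ 1 / 2 :=
  le_of_le_of_eq (Subtype.coe_le_coe.2 (monotone_centeredClamp h)) centeredClamp_zero

/-- The coordinates of a point of the sphere, rescaled so that those of size at least
`threshold n / 2` are moved to the boundary of the cube. -/
def clampedCoord (x : Sphere n) (i : Fin n) : I := centeredClamp (2 / threshold n * coord i x)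

@[fun_prop] lemma continuous_clampedCoord : Continuous (clampedCoord : Sphere n → Fin n → I) := by
  unfold clampedCoord; fun_prop

lemma clampedCoord_of_ge {x : Sphere n} {i : Fin n} (h : threshold n / 2 ≤ coord i x) :
    clampedCoord x i = 1 := by
  have := threshold_pos (n := n)
  refine centeredClamp_of_ge ?_
  rw [div_mul_eq_mul_div, le_div_iff₀ this]
  linarith

lemma clampedCoord_of_le {x : Sphere n} {i : Fin n} (h : coord i x ≤ -(threshold n / 2)) :
    clampedCoord x i = 0 := by
  have := threshold_pos (n := n)
  refine centeredClamp_of_le ?_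
  rw [div_mul_eq_mul_div, div_le_iff₀ this]
  linarith

/-- The self-map of the sphere which sends the lower hemisphere to the basepoint and depends only
on the clamped coordinates on the upper one; it is homotopic to the identity. -/
def expand : C(Sphere n, Sphere n) where
  toFun x := maskedCollapse (height x) (clampedCoord x)
  continuous_toFun := by
    refine continuous_maskedCollapse continuous_height continuous_clampedCoord fun x hx => ?_
    obtain ⟨i, hi⟩ := exists_threshold_le_abs_coord (x := x) (by norm_num [hx])
    have := threshold_pos (n := n)
    rcases le_abs.1 hi with h | h
    · exact ⟨i, Or.inr (clampedCoord_of_ge (by linarith))⟩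
    · exact ⟨i, Or.inl (clampedCoord_of_le (by linarith))⟩

lemma expand_apply (x : Sphere n) : expand x = maskedCollapse (height x) (clampedCoord x) := rfl

lemma expand_base : expand (base : Sphere n) = base := maskedCollapse_of_lt (by simp)

lemma coord_mul_coord_expand_nonneg (x : Sphere n) (i : Fin n) :
    0 ≤ coord i x * coord i (expand x) := by
  have hL : 0 < 2 / threshold n := div_pos two_pos threshold_pos
  rw [expand_apply, maskedCollapse]
  split_ifs
  · rcases le_total 0 (coord i x) with h | h
    · exact mul_nonneg h (coord_collapse_nonneg (half_le_centeredClamp (mul_nonneg hL.le h)))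
    · exact mul_nonneg_of_nonpos_of_nonpos h (coord_collapse_nonpos
        (centeredClamp_le_half (mul_nonpos_of_nonneg_of_nonpos hL.le h)))
  · simp

lemma height_expand_of_coord_eq_zero {x : Sphere n} (hx : 1 ≤ height x)
    (hc : ∀ i, coord i x = 0) : height (expand x) = 2 := by
  have hy : ∀ i, (clampedCoord x i : ℝ) = 1 / 2 := fun i => by
    rw [clampedCoord, hc, mul_zero, centeredClamp_zero]
  have hne := collapseVec_ne_zero (clampedCoord x)
  have hnorm : ‖collapseVec (clampedCoord x)‖ ^ 2 = collapseVec (clampedCoord x) 0 ^ 2 := by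
    rw [EuclideanSpace.real_norm_sq_eq, Fin.sum_univ_succ]
    simp [collapseVec_succ, hy]
  have h₀ : collapseVec (clampedCoord x) 0 ≠ 0 := fun h => hne <| by
    simpa [h] using hnorm
  rw [expand_apply, maskedCollapse_of_le hx, collapse, height_chord, hnorm]
  field_simp

lemma expand_homotopicRel_id :
    (ContinuousMap.id (Sphere n)).HomotopicRel expand {x | x = expand x} := by
  refine homotopicRel_of_forall_ne_antipodal fun x hx => ?_
  change x.1 - EuclideanSpace.single 0 _ = -((expand x).1 - EuclideanSpace.single 0 _) at hx
  have hcoord : ∀ i, coord i x = -coord i (expand x) := fun i => by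
    simpa [coord, Fin.succ_ne_zero] using congrArg (· i.succ) hx
  have hheight : height x - 1 = -(height (expand x) - 1) := by
    simpa [height] using congrArg (· 0) hx
  have hzero : ∀ i, coord i x = 0 := fun i => by
    have := coord_mul_coord_expand_nonneg x i
    nlinarith [hcoord i, sq_nonneg (coord i x)]
  have hsum := sum_coord_sq x
  simp only [hzero, ne_eq, OfNat.ofNat_ne_zero, not_false_eq_true, zero_pow, Finset.sum_const_zero,
    zero_eq_mul] at hsum
  rcases hsum with h | h
  · rw [height_eq_zero_iff] at h
    subst h
    norm_num [expand_base] at hheight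
  · have := height_expand_of_coord_eq_zero (by linarith) hzero
    linarith

/-! ### Linear deformations of masked maps -/

/-- The convex combination `(1 - t) a + t b` of two points of the unit interval. -/
def interp (t a b : I) : I :=
  ⟨(1 - t) * a + t * b, convex_Icc (0 : ℝ) 1 a.2 b.2 (sub_nonneg.2 t.2.2) t.2.1 (by ring)⟩

lemma coe_interp (t a b : I) : (interp t a b : ℝ) = (1 - t) * a + t * b := rfl

lemma interp_zero (a b : I) : interp 0 a b = a := Subtype.ext (by simp [coe_interp])

lemma interp_one (a b : I) : interp 1 a b = b := Subtype.ext (by simp [coe_interp])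

lemma interp_self (t a : I) : interp t a a = a := Subtype.ext (by rw [coe_interp]; ring)

@[fun_prop] lemma continuous_interp {Z : Type*} [TopologicalSpace Z] {t a b : Z → I}
    (ht : Continuous t) (ha : Continuous a) (hb : Continuous b) :
    Continuous fun z => interp (t z) (a z) (b z) :=
  Continuous.subtype_mk (by fun_prop) _

lemma interp_mem_boundary {y y' : Fin n → I} (t : I)
    (h : ∃ i, y i = y' i ∧ (y i = 0 ∨ y i = 1)) :
    (fun i => interp t (y i) (y' i)) ∈ Cube.boundary (Fin n) := by
  obtain ⟨i, hi, hy⟩ := h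
  exact ⟨i, by simpa only [← hi, interp_self] using hy⟩

lemma maskedCollapse_homotopicRel {Z : Type*} [TopologicalSpace Z] {h : Z → ℝ}
    {y y' : Z → Fin n → I} {f g : C(Z, Sphere n)} (hh : Continuous h) (hy : Continuous y)
    (hy' : Continuous y') (hf : ∀ z, f z = maskedCollapse (h z) (y z))
    (hg : ∀ z, g z = maskedCollapse (h z) (y' z))
    (hb : ∀ z, h z = 1 → ∃ i, y z i = y' z i ∧ (y z i = 0 ∨ y z i = 1)) :
    f.HomotopicRel g {z | h z < 1 ∨ ∃ i, y z i = y' z i ∧ (y z i = 0 ∨ y z i = 1)} :=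
  ⟨{ toFun p := maskedCollapse (h p.2) fun i => interp p.1 (y p.2 i) (y' p.2 i)
     continuous_toFun := continuous_maskedCollapse (by fun_prop) (by fun_prop)
       fun p hp => interp_mem_boundary p.1 (hb p.2 hp)
     map_zero_left z := by simp only [interp_zero, hf]
     map_one_left z := by simp only [interp_one, hg]
     prop' t z hz := by
       change maskedCollapse _ _ = f z
       rw [hf]
       rcases hz with hz | hz
       · rw [maskedCollapse_of_lt hz, maskedCollapse_of_lt hz]
       · rw [maskedCollapse_of_mem_boundary (interp_mem_boundary t hz),
           maskedCollapse_of_mem_boundary (hz.imp fun i hi => hi.2)] }⟩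

lemma homotopicRel_mono {X Y : Type*} [TopologicalSpace X] [TopologicalSpace Y] {f g : C(X, Y)}
    {S T : Set X} (h : f.HomotopicRel g T) (hST : S ⊆ T) : f.HomotopicRel g S :=
  h.map fun H => { H with prop' := fun t x hx => H.prop' t x (hST hx) }

lemma homotopicRel_comp_right {X Y Z : Type*} [TopologicalSpace X] [TopologicalSpace Y]
    [TopologicalSpace Z] {g₀ g₁ : C(Y, Z)} {S : Set Y} (h : g₀.HomotopicRel g₁ S) (f : C(X, Y)) :
    (g₀.comp f).HomotopicRel (g₁.comp f) (f ⁻¹' S) :=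
  h.map fun H => { H.toHomotopy.compContinuousMap f with prop' := fun t x hx => H.prop' t (f x) hx }

/-! ### Stair functions -/

/-- The stair function which climbs from `k` to `k + 1` on `[k, k + 1 / (2n)]` and is constant on
`[k + 1 / (2n), k + 1]`, for every integer `k`. -/
def stair (n : ℕ) (v : ℝ) : ℝ := ⌊v⌋ + min 1 (2 * n * Int.fract v)

lemma stair_sub_self (v : ℝ) : stair n v - v = min 1 (2 * n * Int.fract v) - Int.fract v := by
  rw [stair]
  linear_combination Int.floor_add_fract v

lemma continuous_stair (hn : 0 < n) : Continuous (stair n) := by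
  have hn' : (1 : ℝ) ≤ n := by exact_mod_cast hn
  have hg : Continuous fun v : ℝ => min 1 (2 * n * Int.fract v) - Int.fract v := by
    refine ContinuousOn.comp_fract'' (f := fun r : ℝ => min 1 (2 * n * r) - r) (by fun_prop) ?_
    simp [min_eq_left (show (1 : ℝ) ≤ 2 * n by linarith)]
  exact (hg.add continuous_id).congr fun v => by simp [← stair_sub_self]

lemma stair_intCast (k : ℤ) : stair n k = k := by simp [stair]

lemma stair_of_mem_Icc (hn : 0 < n) {k : ℤ} {v : ℝ}
    (hv : v ∈ Set.Icc (k + 1 / (2 * n) : ℝ) (k + 1)) : stair n v = k + 1 := by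
  rcases hv.2.eq_or_lt with rfl | h
  · exact_mod_cast stair_intCast (k + 1)
  · have hn' : (0 : ℝ) < 2 * n := by positivity
    have hf : ⌊v⌋ = k := Int.floor_eq_iff.2 ⟨le_trans (by simp) hv.1, h⟩
    rw [stair, Int.fract, hf, min_eq_left]
    rw [mul_comm, ← div_le_iff₀ hn']
    linarith [hv.1]

lemma abs_stair_sub_self_le (v : ℝ) : |stair n v - v| ≤ 1 := by
  have h₀ := Int.fract_nonneg v
  have h₁ := Int.fract_lt_one v
  have h₂ : (0 : ℝ) ≤ min 1 (2 * n * Int.fract v) := by positivity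
  have h₃ : min (1 : ℝ) (2 * n * Int.fract v) ≤ 1 := min_le_left _ _
  rw [stair_sub_self, abs_le]
  constructor <;> linarith

/-- The reparametrization of the interval, divided into cells of length `1 / M`, which climbs
only in the first halves of the cells with index congruent to `i` modulo `n`. -/
def gridStair (M : ℕ) (i : Fin n) (s : I) : I :=
  Set.projIcc 0 1 zero_le_one ((n * stair n ((M * s - i) / n) + i) / M)

lemma continuous_gridStair (M : ℕ) (i : Fin n) : Continuous (gridStair M i) := by
  have := continuous_stair i.pos
  unfold gridStair
  fun_prop

lemma abs_gridStair_sub_le {M : ℕ} (hM : 0 < M) (i : Fin n) (s : I) :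
    |(gridStair M i s - s : ℝ)| ≤ n / M := by
  have hn : (0 : ℝ) < n := by exact_mod_cast i.pos
  have hs : (n * stair n ((M * s - i) / n) + i) / M - s =
      n / M * (stair n ((M * s - i) / n) - (M * s - i) / n) := by
    field_simp
    ring
  calc |(gridStair M i s - s : ℝ)|
      = |(gridStair M i s - Set.projIcc (0 : ℝ) 1 zero_le_one s : ℝ)| := by
        rw [Set.projIcc_val]
    _ ≤ |(n * stair n ((M * s - i) / n) + i) / M - s| := Set.abs_projIcc_sub_projIcc _
    _ = n / M * |stair n ((M * s - i) / n) - (M * s - i) / n| := by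
        rw [hs, abs_mul, abs_of_pos (by positivity)]
    _ ≤ n / M := mul_le_of_le_one_right (by positivity) (abs_stair_sub_self_le _)

/-- The point `s` lies in the open first half of a cell with index congruent to `i` modulo
`n`. -/
def OnWall (M : ℕ) (i : Fin n) (s : I) : Prop :=
  0 < Int.fract (M * s : ℝ) ∧ Int.fract (M * s : ℝ) < 1 / 2 ∧ ⌊(M * s : ℝ)⌋ % n = i

lemma OnWall.unique {M : ℕ} {i j : Fin n} {s : I} (hi : OnWall M i s) (hj : OnWall M j s) :
    i = j :=
  Fin.ext (by exact_mod_cast hi.2.2.symm.trans hj.2.2)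

/-- The point `k / M` of the unit interval, cut off at `1`. -/
def gridPoint (M k : ℕ) : I := ⟨min 1 (k / M), le_min zero_le_one (by positivity), min_le_left _ _⟩

lemma mul_gridPoint {M k : ℕ} (hM : 0 < M) (hk : k ≤ M) : (M * gridPoint M k : ℝ) = k := by
  have hM' : (0 : ℝ) < M := by exact_mod_cast hM
  have hk' : (k / M : ℝ) ≤ 1 := div_le_one_of_le₀ (by exact_mod_cast hk) hM'.le
  have hval : (gridPoint M k : ℝ) = k / M := min_eq_right hk'
  rw [hval]
  field_simp

lemma gridPoint_monotone (M : ℕ) : Monotone (gridPoint M) := fun k l hkl =>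
  Subtype.coe_le_coe.1 (min_le_min_left 1 (by gcongr))

lemma gridPoint_self {M k : ℕ} (hM : 0 < M) (hk : M ≤ k) : gridPoint M k = 1 := by
  have hM' : (0 : ℝ) < M := by exact_mod_cast hM
  exact Subtype.ext (min_eq_left ((one_le_div hM').2 (by exact_mod_cast hk)))

lemma not_onWall_gridPoint {M : ℕ} (hM : 0 < M) (i : Fin n) (k : ℕ) :
    ¬ OnWall M i (gridPoint M k) := by
  rcases le_total k M with hk | hk
  · intro h
    simpa [mul_gridPoint hM hk] using h.1
  · intro h
    simpa [gridPoint_self hM hk] using h.1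

lemma gridPoint_mul {M k l : ℕ} (hl : 0 < l) : gridPoint (M * l) (k * l) = gridPoint M k := by
  have hl' : (l : ℝ) ≠ 0 := by exact_mod_cast hl.ne'
  refine Subtype.ext ?_
  change min (1 : ℝ) _ = min 1 _
  push_cast
  rw [mul_div_mul_right _ _ hl']

lemma projIcc_intCast_div (M : ℕ) (j : ℤ) :
    Set.projIcc (0 : ℝ) 1 zero_le_one (j / M) = gridPoint M j.toNat := by
  refine Subtype.ext ?_
  rw [Set.coe_projIcc]
  change max (0 : ℝ) (min 1 _) = min 1 _
  rcases le_total 0 j with hj | hj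
  · lift j to ℕ using hj
    exact max_eq_right (le_min zero_le_one (by positivity))
  · have : (j : ℝ) / M ≤ 0 :=
      div_nonpos_of_nonpos_of_nonneg (by exact_mod_cast hj) M.cast_nonneg
    simp [Int.toNat_of_nonpos hj, this]

lemma finite_range_gridPoint {M : ℕ} (hM : 0 < M) : (Set.range (gridPoint M)).Finite := by
  refine ((Set.finite_Iic M).image (gridPoint M)).subset ?_
  rintro _ ⟨k, rfl⟩
  refine ⟨min k M, min_le_right k M, ?_⟩
  rcases le_total k M with hk | hk
  · rw [min_eq_left hk]
  · rw [min_eq_right hk, gridPoint_self hM le_rfl, gridPoint_self hM hk]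

lemma gridStair_mem_range_gridPoint {M : ℕ} {i : Fin n} {s : I} (h : ¬ OnWall M i s) :
    gridStair M i s ∈ Set.range (gridPoint M) := by
  have hn : (0 : ℝ) < n := by exact_mod_cast i.pos
  set v : ℝ := (M * s - i) / n with hv
  obtain ⟨k, hk⟩ : ∃ k : ℤ, stair n v = k := by
    have hu : (M * s : ℝ) = n * v + i := by rw [hv]; field_simp; ring
    by_cases hlow : v < ⌊v⌋ + 1 / (2 * n)
    · have hfrac : n * (v - ⌊v⌋) < 1 / 2 := by
        rw [← sub_lt_iff_lt_add', lt_div_iff₀ (by positivity)] at hlow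
        linarith
      have h₀ : 0 ≤ n * (v - ⌊v⌋) := mul_nonneg hn.le (sub_nonneg.2 (Int.floor_le v))
      have hfloor : ⌊(M * s : ℝ)⌋ = n * ⌊v⌋ + i := by
        rw [Int.floor_eq_iff]
        push_cast
        constructor <;> linarith
      have hfract : Int.fract (M * s : ℝ) = n * (v - ⌊v⌋) := by
        rw [Int.fract, hfloor, hu]; push_cast; ring
      have hzero : n * (v - ⌊v⌋) = 0 := by
        refine (h₀.eq_or_lt.resolve_right fun hpos => h ⟨?_, ?_, ?_⟩).symm
        · rwa [hfract]
        · rwa [hfract]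
        · rw [hfloor, Int.mul_add_emod_self_left]
          exact Int.emod_eq_of_lt (by lia) (by exact_mod_cast i.2)
      refine ⟨⌊v⌋, ?_⟩
      rw [← stair_intCast (n := n) ⌊v⌋, ← sub_eq_zero.1 ((mul_eq_zero.1 hzero).resolve_left hn.ne')]
    · exact ⟨⌊v⌋ + 1, by
        rw [stair_of_mem_Icc i.pos ⟨not_lt.1 hlow, (Int.lt_floor_add_one v).le⟩]; push_cast; rfl⟩
  refine ⟨(n * k + i : ℤ).toNat, ?_⟩
  rw [gridStair, ← hv, hk, ← projIcc_intCast_div]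
  push_cast
  rfl

/-- The point `s` lies in the closed cell `[m / M, (m + 1) / M]`. -/
def InCell (M : ℕ) (m : ℤ) (s : I) : Prop := (M * s : ℝ) ∈ Set.Icc (m : ℝ) (m + 1)

lemma gridStair_eq_of_inCell {M : ℕ} {i : Fin n} {m : ℤ} (hm : m % n ≠ i) {s s' : I}
    (hs : InCell M m s) (hs' : InCell M m s') : gridStair M i s = gridStair M i s' := by
  have hn : (0 : ℝ) < n := by exact_mod_cast i.pos
  obtain ⟨k, hk₁, hk₂⟩ : ∃ k : ℤ, n * k + i + 1 ≤ m ∧ m + 1 ≤ n * k + n + i := by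
    have hi : (i : ℤ) < n := by exact_mod_cast i.2
    have hdiv := Int.mul_ediv_add_emod (m - i) n
    have hnonneg : 0 ≤ (m - i) % n := Int.emod_nonneg _ (by lia)
    have hlt := Int.emod_lt_of_pos (m - i) (b := n) (by lia)
    have hne : (m - i) % n ≠ 0 := fun h₀ => hm <| by
      rw [show m = i + n * ((m - i) / n) by lia, Int.add_mul_emod_self_left,
        Int.emod_eq_of_lt (by lia) (by lia)]
    exact ⟨(m - i) / n, by lia, by lia⟩
  have key : ∀ s : I, InCell M m s → stair n ((M * s - i) / n) = k + 1 := by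
    rintro s ⟨h₁, h₂⟩
    have hk₁' : (n * k + i + 1 : ℝ) ≤ m := by exact_mod_cast hk₁
    have hk₂' : (m + 1 : ℝ) ≤ n * k + n + i := by exact_mod_cast hk₂
    refine stair_of_mem_Icc i.pos ⟨?_, ?_⟩
    · rw [le_div_iff₀ hn, add_mul, show 1 / (2 * (n : ℝ)) * n = 1 / 2 by field_simp]
      linarith
    · rw [div_le_iff₀ hn]
      linarith
  rw [gridStair, gridStair, key s hs, key s' hs']

lemma OnWall.floor_eq_of_inCell {M : ℕ} {i : Fin n} {m : ℤ} {s : I} (h : OnWall M i s)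
    (hs : InCell M m s) : ⌊(M * s : ℝ)⌋ = m := by
  refine Int.floor_eq_iff.2 ⟨hs.1, hs.2.lt_of_ne fun heq => h.1.ne' ?_⟩
  rw [heq]
  simp

/-! ### The normal form of a map from the cube to the sphere -/

lemma abs_coord_sub_le_dist (i : Fin n) (x y : Sphere n) : |coord i x - coord i y| ≤ dist x y := by
  rw [Subtype.dist_eq, dist_eq_norm]
  exact PiLp.norm_apply_le (x.1 - y.1) i.succ

lemma abs_height_sub_le_dist (x y : Sphere n) : |height x - height y| ≤ dist x y := by
  rw [Subtype.dist_eq, dist_eq_norm]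
  exact PiLp.norm_apply_le (x.1 - y.1) 0

/-- The grid with cells of size `1 / M` is fine enough for the construction of a normal form
of `f`. -/
def IsFine (f : C(Fin n → I, Sphere n)) (M : ℕ) : Prop :=
  ∀ x y, dist x y ≤ (n + 1) / M → dist (f x) (f y) ≤ threshold n / 2

lemma exists_nat_forall_dist_le_div {K E : Type*} [PseudoMetricSpace K] [CompactSpace K]
    [PseudoMetricSpace E] {H : K → E} (hH : Continuous H) {c ε : ℝ} (hc : 0 ≤ c) (hε : 0 < ε) :
    ∃ M₀ : ℕ, 0 < M₀ ∧ ∀ M ≥ M₀, ∀ x y, dist x y ≤ c / M → dist (H x) (H y) ≤ ε := by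
  obtain ⟨δ, hδ, h⟩ := Metric.uniformContinuous_iff.1
    (CompactSpace.uniformContinuous_of_continuous hH) ε hε
  obtain ⟨M₀, hM₀⟩ := exists_nat_gt (c / δ)
  have hpos : (0 : ℝ) < M₀ := lt_of_le_of_lt (by positivity) hM₀
  refine ⟨M₀, by exact_mod_cast hpos, fun M hM x y hxy => (h (hxy.trans_lt ?_)).le⟩
  have hM' : (M₀ : ℝ) ≤ M := by exact_mod_cast hM
  rw [div_lt_comm₀ (by linarith) hδ]
  linarith

lemma exists_isFine (f : C(Fin n → I, Sphere n)) : ∃ M₀ : ℕ, 0 < M₀ ∧ ∀ M ≥ M₀, IsFine f M :=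
  exists_nat_forall_dist_le_div f.continuous (by positivity) (half_pos threshold_pos)

/-- A normal form of a map `f` with respect to the grid with cells of size `1 / M`: a deformation
of `f` of the form `collapse ∘ frame` where `f` is high, and trivial elsewhere, such that the
`i`-th coordinate of the frame varies only in the walls of type `i`. -/
structure NormalForm (f : C(Fin n → I, Sphere n)) (M : ℕ) where
  /-- the map to the cube which is collapsed to the sphere -/
  frame : C(Fin n → I, Fin n → I)
  /-- the deformed map -/
  map : C(Fin n → I, Sphere n)
  map_apply : ∀ x, map x = maskedCollapse (height (f x)) (frame x)
  homotopicRel : f.HomotopicRel map (f ⁻¹' {base})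
  height_gt : ∀ x, map x ≠ base → 3 / 2 < height (f x)
  frame_eq_zero_or_one : ∀ x i, (∀ a, ¬ OnWall M i (x a)) → frame x i = 0 ∨ frame x i = 1
  frame_congr : ∀ x y i, (∀ a, gridStair M i (x a) = gridStair M i (y a)) → frame x i = frame y i

lemma exists_scale {F : Set ℝ} (hF : F.Finite) {κ : ℝ} (hκ : 0 < κ) :
    ∃ τ L : ℝ, 0 < τ ∧ τ < κ ∧ 0 < L ∧ 1 / 2 ≤ L * κ ∧ ∀ v ∈ F, 1 / 2 ≤ L * |v - τ| := by
  obtain ⟨τ, hτ, hτF⟩ := ((Set.Ioo_infinite hκ).sdiff hF).nonempty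
  obtain ⟨ε, hε, hmin⟩ : ∃ ε > 0, ∀ v ∈ F, ε ≤ |v - τ| := by
    have := Metric.isOpen_iff.1 hF.isClosed.isOpen_compl τ hτF
    obtain ⟨ε, hε, hball⟩ := this
    exact ⟨ε, hε, fun v hv => not_lt.1 fun hlt => hball (Metric.mem_ball.2 hlt) hv⟩
  have hsum : 1 / 2 ≤ (1 / (2 * κ) + 1 / (2 * ε)) * min κ ε := by
    rcases min_cases κ ε with ⟨h, -⟩ | ⟨h, -⟩ <;> rw [h] <;> field_simp <;> linarith
  have hpos : 0 < 1 / (2 * κ) + 1 / (2 * ε) := by positivity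
  refine ⟨τ, 1 / (2 * κ) + 1 / (2 * ε), hτ.1, hτ.2, hpos, hsum.trans ?_, fun v hv =>
    hsum.trans ?_⟩
  · gcongr; exact min_le_left _ _
  · gcongr; exact (min_le_right _ _).trans (hmin v hv)

section StairFrame

variable (f : C(Fin n → I, Sphere n)) (M : ℕ) (τ L : ℝ)

/-- The frame whose `i`-th coordinate is the `i`-th coordinate of `f`, reparametrized by stairs of
type `i`, and steepened by the factor `L` around the level `τ`. -/
def stairFrame : C(Fin n → I, Fin n → I) where
  toFun x i := centeredClamp (L * (coord i (f fun a => gridStair M i (x a)) - τ))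
  continuous_toFun := continuous_pi fun i => by
    have := continuous_gridStair M i
    fun_prop

lemma stairFrame_apply (x : Fin n → I) (i : Fin n) : stairFrame f M τ L x i =
    centeredClamp (L * (coord i (f fun a => gridStair M i (x a)) - τ)) := rfl

variable {f M τ L}

lemma stairFrame_eq_zero_or_one {x : Fin n → I} {i : Fin n}
    (hv : 1 / 2 ≤ L * |coord i (f fun a => gridStair M i (x a)) - τ|) :
    stairFrame f M τ L x i = 0 ∨ stairFrame f M τ L x i = 1 := by
  rcases abs_cases (coord i (f fun a => gridStair M i (x a)) - τ) with ⟨h, -⟩ | ⟨h, -⟩ <;>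
    rw [h] at hv
  · exact Or.inr (centeredClamp_of_ge hv)
  · exact Or.inl (centeredClamp_of_le (by linarith))

lemma finite_coord_gridPoint (f : C(Fin n → I, Sphere n)) (hM : 0 < M) :
    (⋃ i, (fun x => coord i (f x)) '' {x | ∀ a, x a ∈ Set.range (gridPoint M)}).Finite :=
  Set.finite_iUnion fun _ => (Set.Finite.pi' fun _ => finite_range_gridPoint hM).image _

lemma abs_coord_gridStair_sub_le (hM : 0 < M) (hfine : IsFine f M) (x : Fin n → I) (i : Fin n) :
    |coord i (f fun a => gridStair M i (x a)) - coord i (f x)| ≤ threshold n / 2 := by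
  refine (abs_coord_sub_le_dist i _ _).trans (hfine _ _ ?_)
  rw [dist_pi_le_iff (by positivity)]
  intro a
  refine (abs_gridStair_sub_le hM i (x a)).trans ?_
  gcongr
  linarith

-- Near the equator some coordinate of `f x` is large, and the frame agrees with the clamped
-- coordinates there: both have been pushed to the same face of the cube.
lemma exists_clampedCoord_eq_stairFrame (hM : 0 < M) (hfine : IsFine f M) (hτ₀ : 0 < τ)
    (hτ₁ : τ < threshold n / 4) (hL₀ : 0 < L) (hL₁ : 1 / 2 ≤ L * (threshold n / 4))
    {x : Fin n → I} (hx : |height (f x) - 1| ≤ 1 / 2) :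
    ∃ i, clampedCoord (f x) i = stairFrame f M τ L x i ∧
      (clampedCoord (f x) i = 0 ∨ clampedCoord (f x) i = 1) := by
  obtain ⟨i, hi⟩ := exists_threshold_le_abs_coord hx
  have hnear := abs_le.1 (abs_coord_gridStair_sub_le hM hfine x i)
  refine ⟨i, ?_⟩
  rw [stairFrame_apply]
  rcases le_abs.1 hi with h | h
  · rw [clampedCoord_of_ge (by linarith), centeredClamp_of_ge]
    · exact ⟨rfl, Or.inr rfl⟩
    · exact hL₁.trans (by gcongr; linarith)
  · rw [clampedCoord_of_le (by linarith), centeredClamp_of_le]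
    · exact ⟨rfl, Or.inl rfl⟩
    · have : L * (threshold n / 4) ≤ L * -(coord i (f fun a => gridStair M i (x a)) - τ) := by
        gcongr; linarith
      linarith

end StairFrame

theorem exists_normalForm {f : C(Fin n → I, Sphere n)} {M : ℕ} (hM : 0 < M) (hfine : IsFine f M) :
    Nonempty (NormalForm f M) := by
  obtain ⟨τ, L, hτ₀, hτ₁, hL₀, hL₁, hF⟩ := exists_scale (finite_coord_gridPoint f hM)
    (κ := threshold n / 4) (div_pos threshold_pos four_pos)
  have hequator : ∀ x, |height (f x) - 1| ≤ 1 / 2 →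
      ∃ i, clampedCoord (f x) i = stairFrame f M τ L x i ∧
        (clampedCoord (f x) i = 0 ∨ clampedCoord (f x) i = 1) := fun x hx =>
    exists_clampedCoord_eq_stairFrame hM hfine hτ₀ hτ₁ hL₀ hL₁ hx
  have hone : ∀ x, height (f x) = 1 → |height (f x) - 1| ≤ 1 / 2 := fun x hx => by norm_num [hx]
  have hboundary : ∀ x, |height (f x) - 1| ≤ 1 / 2 →
      stairFrame f M τ L x ∈ Cube.boundary (Fin n) := fun x hx =>
    let ⟨i, hi, hface⟩ := hequator x hx
    ⟨i, hi ▸ hface⟩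
  let g : C(Fin n → I, Sphere n) :=
    ⟨fun x => maskedCollapse (height (f x)) (stairFrame f M τ L x), continuous_maskedCollapse
      (by fun_prop) (by fun_prop) fun x hx => hboundary x (hone x hx)⟩
  refine ⟨⟨stairFrame f M τ L, g, fun _ => rfl, ?_, ?_, ?_, ?_⟩⟩
  · have hexpand : f.HomotopicRel (expand.comp f) (f ⁻¹' {base}) :=
      homotopicRel_mono (homotopicRel_comp_right expand_homotopicRel_id f) fun x hx => by
        rw [Set.mem_preimage, Set.mem_singleton_iff.1 hx]
        exact expand_base.symm
    have hlinear := maskedCollapse_homotopicRel (f := expand.comp f) (g := g)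
      (continuous_height.comp f.continuous) (continuous_clampedCoord.comp f.continuous)
      (stairFrame f M τ L).continuous (fun _ => rfl) (fun _ => rfl)
      fun x hx => hequator x (hone x hx)
    exact hexpand.trans (homotopicRel_mono hlinear fun x hx => Or.inl (by
      simp [Set.mem_singleton_iff.1 hx]))
  · intro x hx
    by_contra! hle
    rcases lt_or_ge (height (f x)) 1 with h | h
    · exact hx (maskedCollapse_of_lt h)
    · exact hx (maskedCollapse_of_mem_boundary
        (hboundary x (abs_le.2 ⟨by linarith, by linarith⟩)))
  · exact fun x i hx => stairFrame_eq_zero_or_one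
      (hF _ (Set.mem_iUnion.2 ⟨i, _, fun a => gridStair_mem_range_gridPoint (hx a), rfl⟩))
  · exact fun x y i hxy => by simp only [stairFrame_apply, hxy]

namespace NormalForm

variable {f : C(Fin n → I, Sphere n)} {M : ℕ} (N : NormalForm f M)

lemma map_eq_base_of_eq_base {x : Fin n → I} (hx : f x = base) : N.map x = base :=
  (N.homotopicRel.fst_eq_snd hx).symm.trans hx

lemma exists_perm {x : Fin n → I} (hx : N.map x ≠ base) :
    ∃ π : Equiv.Perm (Fin n), ∀ i, OnWall M i (x (π i)) := by
  have hwall : ∀ i, ∃ a, OnWall M i (x a) := fun i => by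
    by_contra! h
    exact hx ((N.map_apply x).trans
      (maskedCollapse_of_mem_boundary ⟨i, N.frame_eq_zero_or_one x i h⟩))
  choose π hπ using hwall
  have hinj : Function.Injective π := fun i j hij => (hπ i).unique (hij ▸ hπ j)
  exact ⟨Equiv.ofBijective π (Finite.injective_iff_bijective.1 hinj), hπ⟩

lemma map_eq_base_of_not_onWall {x : Fin n → I} {a : Fin n} (h : ∀ i : Fin n, ¬ OnWall M i (x a)) :
    N.map x = base := by
  by_contra hne
  obtain ⟨π, hπ⟩ := N.exists_perm hne
  have := hπ (π.symm a)
  rw [π.apply_symm_apply] at this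
  exact h _ this

end NormalForm

/-! ### The action of the orthogonal group on the class of the collapse map -/

/-- The coordinates of a point of the sphere orthogonal to the diameter through the basepoint, as a
vector. -/
def horizontal (x : Sphere n) : EuclideanSpace ℝ (Fin n) := WithLp.toLp 2 fun i => coord i x

@[fun_prop] lemma continuous_horizontal : Continuous (horizontal : Sphere n → _) :=
  (PiLp.continuous_toLp 2 _).comp (by fun_prop)

lemma norm_horizontal_sq (x : Sphere n) : ‖horizontal x‖ ^ 2 = height x * (2 - height x) := by
  rw [EuclideanSpace.real_norm_sq_eq, ← sum_coord_sq]
  rfl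

lemma eq_of_height_eq_of_horizontal_eq {x y : Sphere n} (h : height x = height y)
    (hh : horizontal x = horizontal y) : x = y :=
  eq_of_height_eq_of_coord_eq h fun i => congrArg (· i) hh

/-- The point of the sphere obtained by applying an orthogonal transformation to the coordinates
orthogonal to the diameter through the basepoint. -/
def rotate (u : EuclideanSpace ℝ (Fin n) ≃ₗᵢ[ℝ] EuclideanSpace ℝ (Fin n)) (x : Sphere n) :
    Sphere n :=
  ⟨WithLp.toLp 2 (Fin.cons (height x) fun i => u (horizontal x) i), mem_hawSphere_iff.2 <| by
    have h := norm_horizontal_sq x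
    rw [← u.norm_map, EuclideanSpace.real_norm_sq_eq] at h
    rw [EuclideanSpace.real_norm_sq_eq, Fin.sum_univ_succ]
    simp only [Fin.cons_zero, Fin.cons_succ, h]
    push_cast
    ring⟩

section Rotate

variable (u w : EuclideanSpace ℝ (Fin n) ≃ₗᵢ[ℝ] EuclideanSpace ℝ (Fin n))

lemma height_rotate (x : Sphere n) : height (rotate u x) = height x := rfl

lemma horizontal_rotate (x : Sphere n) : horizontal (rotate u x) = u (horizontal x) := rfl

lemma rotate_base : rotate u (base : Sphere n) = base := height_eq_zero_iff.1 rfl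

lemma rotate_one (x : Sphere n) : rotate 1 x = x := eq_of_height_eq_of_horizontal_eq rfl rfl

lemma rotate_mul (x : Sphere n) : rotate (u * w) x = rotate u (rotate w x) :=
  eq_of_height_eq_of_horizontal_eq rfl rfl

lemma continuous_rotate_comp {Z : Type*} [TopologicalSpace Z]
    {u : Z → EuclideanSpace ℝ (Fin n) ≃ₗᵢ[ℝ] EuclideanSpace ℝ (Fin n)} {x : Z → Sphere n}
    (hx : Continuous x) (hu : Continuous fun z => u z (horizontal (x z))) :
    Continuous fun z => rotate (u z) (x z) := by
  refine ((PiLp.continuous_toLp 2 _).comp (continuous_pi (Fin.cases ?_ fun i => ?_))).subtype_mk _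
  · simp only [Fin.cons_zero]; fun_prop
  · exact (continuous_apply i).comp ((PiLp.continuous_ofLp 2 _).comp hu)

/-- The self-map `rotate u` of the sphere as a bundled continuous map. -/
def rotateMap : C(Sphere n, Sphere n) :=
  ⟨rotate u, by
    have h : Continuous fun x : Sphere n => u (horizontal x) :=
      u.continuous.comp continuous_horizontal
    exact continuous_rotate_comp (u := fun _ => u) continuous_id h⟩

lemma rotateMap_base : rotateMap u (base : Sphere n) = base := rotate_base u

end Rotate

lemma norm_collapseVec_sq (y : Fin n → I) : ‖collapseVec y‖ ^ 2 =
    collapseVec y 0 ^ 2 + ‖WithLp.toLp 2 fun i => (2 * y i - 1 : ℝ)‖ ^ 2 := by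
  rw [EuclideanSpace.real_norm_sq_eq, EuclideanSpace.real_norm_sq_eq, Fin.sum_univ_succ]
  rfl

lemma horizontal_collapse (y : Fin n → I) : horizontal (collapse y) =
    (2 * collapseVec y 0 / ‖collapseVec y‖ ^ 2) • WithLp.toLp 2 fun i => (2 * y i - 1 : ℝ) := rfl

lemma rotate_collapse {u : EuclideanSpace ℝ (Fin n) ≃ₗᵢ[ℝ] EuclideanSpace ℝ (Fin n)}
    {y z : Fin n → I} (h₀ : ∏ i, (z i * (1 - z i) : ℝ) = ∏ i, (y i * (1 - y i) : ℝ))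
    (hu : u (WithLp.toLp 2 fun i => (2 * y i - 1 : ℝ)) = WithLp.toLp 2 fun i => (2 * z i - 1 : ℝ)) :
    rotate u (collapse y) = collapse z := by
  have h₀' : collapseVec z 0 = collapseVec y 0 := h₀
  have hnorm : ‖collapseVec z‖ ^ 2 = ‖collapseVec y‖ ^ 2 := by
    rw [norm_collapseVec_sq, norm_collapseVec_sq, h₀', ← hu, u.norm_map]
  refine eq_of_height_eq_of_horizontal_eq ?_ ?_
  · rw [height_rotate, collapse, collapse, height_chord, height_chord, hnorm, h₀']
  · rw [horizontal_rotate, horizontal_collapse, map_smul, hu, horizontal_collapse, hnorm, h₀']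

open Submodule in
lemma reflection_smul_singleton {c : ℝ} (hc : c ≠ 0) (v : EuclideanSpace ℝ (Fin n)) :
    reflection (ℝ ∙ c • v)ᗮ = reflection (ℝ ∙ v)ᗮ := by
  simp only [span_singleton_smul_eq (IsUnit.mk0 c hc)]

open Submodule in
lemma rotate_reflection_homotopic {v w : EuclideanSpace ℝ (Fin n)} (hvw : ‖v‖ = ‖w‖)
    (f : Ω^ (Fin n) (Sphere n) base) :
    GenLoop.Homotopic (loopMap (rotateMap (reflection (ℝ ∙ v)ᗮ)) (rotateMap_base _) f)
      (loopMap (rotateMap (reflection (ℝ ∙ w)ᗮ)) (rotateMap_base _) f) := by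
  by_cases hneg : v = -w
  · rw [hneg, ← neg_one_smul ℝ w, reflection_smul_singleton (neg_ne_zero.2 one_ne_zero)]
  let γ : I → EuclideanSpace ℝ (Fin n) := fun s => (1 - s : ℝ) • v + (s : ℝ) • w
  have hγ : ∀ s, ‖γ s‖ ^ 2 ≠ 0 := fun s =>
    pow_ne_zero 2 (norm_ne_zero_iff.2 (lineMap_ne_zero_of_ne_neg hvw hneg s))
  have hcont := continuous_loop f
  refine homotopic_of_continuous (fun p => rotate (reflection (ℝ ∙ γ p.1)ᗮ) (f p.2))
    (continuous_rotate_comp (by fun_prop) ?_) (fun t => ?_) (fun t => ?_) fun s t ht => ?_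
  · simp only [reflection_orthogonal_apply, reflection_singleton_apply, RCLike.ofReal_real_eq_id,
      id]
    have : Continuous γ := by fun_prop
    fun_prop (disch := exact fun _ => hγ _)
  · simp [γ, rotateMap]
  · simp [γ, rotateMap]
  · rw [GenLoop.boundary f t ht, rotate_base]

/-- The orthogonal transformation which permutes the coordinates by `π` and then changes the signs
of the coordinates in `A`. -/
def signedPerm (A : Finset (Fin n)) (π : Equiv.Perm (Fin n)) :
    EuclideanSpace ℝ (Fin n) ≃ₗᵢ[ℝ] EuclideanSpace ℝ (Fin n) :=
  (LinearIsometryEquiv.piLpCongrLeft 2 ℝ ℝ π.symm).trans <|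
    LinearIsometryEquiv.piLpCongrRight 2 fun i =>
      if i ∈ A then LinearIsometryEquiv.neg ℝ else LinearIsometryEquiv.refl ℝ ℝ

lemma signedPerm_apply (A : Finset (Fin n)) (π : Equiv.Perm (Fin n)) (v : EuclideanSpace ℝ (Fin n))
    (i : Fin n) : signedPerm A π v i = if i ∈ A then -v (π i) else v (π i) := by
  simp only [signedPerm, LinearIsometryEquiv.trans_apply,
    LinearIsometryEquiv.piLpCongrRight_apply, LinearIsometryEquiv.piLpCongrLeft_apply]
  split_ifs <;> rfl

/-- The class of the collapse map in the homotopy group of the sphere. -/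
def collapseClass (n : ℕ) : HomotopyGroup (Fin n) (Sphere n) base :=
  loopClass (collapseLoop n)

section ZPowers

variable [Nonempty (Fin n)]

open Submodule in
lemma piMap_reflection_single (i : Fin n) :
    piMap (rotateMap (reflection (ℝ ∙ EuclideanSpace.single i (1 : ℝ))ᗮ)) (rotateMap_base _)
      (collapseClass n) = (collapseClass n)⁻¹ := by
  rw [collapseClass, loopClass_inv i, piMap_loopClass]
  refine congrArg loopClass (GenLoop.ext _ _ fun y => ?_)
  rw [symmAt_apply]
  refine rotate_collapse (Finset.prod_congr rfl fun j _ => ?_) ?_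
  · rcases eq_or_ne j i with rfl | hj
    · simp [mul_comm]
    · simp [hj]
  · ext j
    rw [reflection_orthogonal_apply, reflection_singleton_apply]
    rcases eq_or_ne j i with rfl | hj
    · simp [EuclideanSpace.inner_single_left]
      ring
    · simp [EuclideanSpace.inner_single_left, hj]

open Submodule in
lemma piMap_reflection (v : EuclideanSpace ℝ (Fin n)) (hv : v ≠ 0) :
    piMap (rotateMap (reflection (ℝ ∙ v)ᗮ)) (rotateMap_base _) (collapseClass n) =
      (collapseClass n)⁻¹ := by
  obtain ⟨i⟩ := ‹Nonempty (Fin n)›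
  have hnorm : ‖v‖ ≠ 0 := norm_ne_zero_iff.2 hv
  have hsingle : ‖v‖ = ‖‖v‖ • EuclideanSpace.single i (1 : ℝ)‖ := by simp [norm_smul]
  rw [← piMap_reflection_single i,
    ← reflection_smul_singleton hnorm (EuclideanSpace.single i (1 : ℝ))]
  exact loopClass_eq_iff.2 (rotate_reflection_homotopic hsingle (collapseLoop n))

-- By the Cartan–Dieudonné theorem, `u` is a product of reflections.
theorem piMap_rotateMap_mem_zpowers
    (u : EuclideanSpace ℝ (Fin n) ≃ₗᵢ[ℝ] EuclideanSpace ℝ (Fin n)) :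
    piMap (rotateMap u) (rotateMap_base u) (collapseClass n) ∈
      Subgroup.zpowers (collapseClass n) := by
  have hone : piMap (rotateMap 1) (rotateMap_base 1) (collapseClass n) = collapseClass n :=
    congrArg loopClass (GenLoop.ext _ _ fun y => rotate_one (collapse y))
  obtain ⟨l, -, rfl⟩ := u.reflections_generate_dim
  induction l with
  | nil => simp [hone]
  | cons v l ih =>
    rw [List.map_cons, List.prod_cons]
    set w := (l.map fun v => Submodule.reflection (ℝ ∙ v)ᗮ).prod
    have hmul : ∀ u, piMap (rotateMap (u * w)) (rotateMap_base (u * w)) (collapseClass n) =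
        piMap (rotateMap u) (rotateMap_base u)
          (piMap (rotateMap w) (rotateMap_base w) (collapseClass n)) := fun u =>
      congrArg loopClass (GenLoop.ext _ _ fun y => rotate_mul u w (collapse y))
    rcases eq_or_ne v 0 with rfl | hv
    · have : Submodule.reflection (ℝ ∙ (0 : EuclideanSpace ℝ (Fin n)))ᗮ = 1 := by
        refine LinearIsometryEquiv.ext fun x => ?_
        rw [Submodule.reflection_orthogonal_apply, Submodule.reflection_singleton_apply]
        simp
      rwa [this, one_mul]
    · obtain ⟨k, hk⟩ := ih
      rw [hmul, ← hk]
      simp only [map_zpow, piMap_reflection v hv]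
      exact zpow_mem (inv_mem (Subgroup.mem_zpowers _)) k

lemma loopClass_signedPerm_mem_zpowers (A : Finset (Fin n)) (π : Equiv.Perm (Fin n))
    {f : Ω^ (Fin n) (Sphere n) base}
    (hf : ∀ y, f y = collapse fun i => if i ∈ A then σ (y (π i)) else y (π i)) :
    loopClass f ∈ Subgroup.zpowers (collapseClass n) := by
  convert piMap_rotateMap_mem_zpowers (signedPerm A π)
  refine congrArg loopClass (GenLoop.ext _ _ fun y => ?_)
  rw [hf]
  refine (rotate_collapse ?_ ?_).symm
  · rw [← Equiv.prod_comp π fun i => (y i * (1 - y i) : ℝ)]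
    refine Finset.prod_congr rfl fun i _ => ?_
    split_ifs
    · simp [mul_comm]
    · rfl
  · ext i
    rw [signedPerm_apply]
    dsimp only
    split_ifs
    · simp; ring
    · rfl

end ZPowers

/-! ### Cutting a loop along a grid -/

section Grid

variable {N X : Type*} [TopologicalSpace X] {x : X} {u : ℕ → I} {h : Ω^ N X x}

lemma exists_max_min_eq (u : ℕ → I) (k l : ℕ) {s : I} (hs : s = 0 ∨ s = 1) :
    ∃ m, max (u k) (min (u l) s) = u m := by
  rcases hs with rfl | rfl
  · exact ⟨k, by simp⟩
  · rw [min_eq_left unitInterval.le_one']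
    exact (max_choice (u k) (u l)).elim (fun h => ⟨k, h⟩) fun h => ⟨l, h⟩

/-- The loop `h` is trivial on the hyperplanes `t a = u k` of a grid. -/
def VanishesOnGrid (u : ℕ → I) (h : Ω^ N X x) : Prop := ∀ t a k, t a = u k → h t = x

/-- The loop obtained from `h` by clamping the argument to the box of the grid with sides
`[u (i a), u (j a)]`. -/
def clampLoop (hh : VanishesOnGrid u h) (i j : N → ℕ) : Ω^ N X x :=
  ⟨⟨fun t => h fun a => max (u (i a)) (min (u (j a)) (t a)), (continuous_loop h).comp
    (continuous_pi fun _ => by fun_prop)⟩, by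
    rintro t ⟨a, ha⟩
    obtain ⟨m, hm⟩ := exists_max_min_eq u (i a) (j a) ha
    exact hh _ a m hm⟩

lemma clampLoop_apply (hh : VanishesOnGrid u h) (i j : N → ℕ) (t : N → I) :
    clampLoop hh i j t = h fun a => max (u (i a)) (min (u (j a)) (t a)) := rfl

variable [DecidableEq N] [Nonempty N]

lemma loopClass_clampLoop_update [T1Space X] (hu : Monotone u) (hh : VanishesOnGrid u h) {a b : N}
    (hab : a ≠ b) (i j : N → ℕ) {k l m : ℕ} (hkl : k ≤ l) (hlm : l ≤ m) :
    loopClass (clampLoop hh (Function.update i b k) (Function.update j b m)) =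
      loopClass (clampLoop hh (Function.update i b k) (Function.update j b l)) *
        loopClass (clampLoop hh (Function.update i b l) (Function.update j b m)) := by
  refine loopClass_eq_mul_of_lines a fun t => ?_
  have hb : ∀ s, Function.update t a s b = t b := fun s => Function.update_of_ne hab.symm s t
  simp only [clampLoop_apply]
  rcases le_total (t b) (u l) with hle | hle
  · refine Or.inr fun s => ⟨hh _ b l ?_, congrArg h (funext fun c => ?_)⟩
    · simp [hb, hle]
    · rcases eq_or_ne c b with rfl | hc
      · simp [hb, hle, hle.trans (hu hlm)]
      · simp [hc]
  · refine Or.inl fun s => ⟨hh _ b l ?_, congrArg h (funext fun c => ?_)⟩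
    · simp [hb, hle, hu hkl]
    · rcases eq_or_ne c b with rfl | hc
      · simp [hb, (hu hkl).trans hle, hle, hu hlm, (hu hkl).trans (hu hlm)]
      · simp [hc]

lemma loopClass_clampLoop_eq_one (hh : VanishesOnGrid u h) {i j : N → ℕ} {b : N} (hij : i b = j b) :
    loopClass (clampLoop hh i j) = 1 :=
  congrArg loopClass (GenLoop.ext _ GenLoop.const fun _ => hh _ b (i b) (by simp [← hij]))

theorem loopClass_mem_of_forall_box [T1Space X] [Finite N] [Nontrivial N] (hu : Monotone u) {M : ℕ}
    (hu₀ : u 0 = 0) (huM : u M = 1) (hh : VanishesOnGrid u h) (G : Subgroup (HomotopyGroup N X x))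
    (hbox : ∀ c, (∀ a, c a < M) → loopClass (clampLoop hh c (fun a => c a + 1)) ∈ G) :
    loopClass h ∈ G := by
  cases nonempty_fintype N
  suffices key : ∀ A : Finset N, ∀ c, (∀ a, c a < M) →
      loopClass (clampLoop hh (A.piecewise (fun _ => 0) c)
        (A.piecewise (fun _ => M) fun a => c a + 1)) ∈ G by
    have hM : 0 < M := Nat.pos_of_ne_zero fun h₀ => by simp [h₀ ▸ huM] at hu₀
    convert key Finset.univ (fun _ => 0) fun _ => hM
    ext t
    simp [clampLoop_apply, hu₀, huM, unitInterval.le_one']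
  intro A
  induction A using Finset.induction with
  | empty => simpa using hbox
  | insert b A hb ih =>
    intro c hc
    obtain ⟨a, hab⟩ := exists_ne b
    rw [Finset.piecewise_insert, Finset.piecewise_insert]
    suffices ∀ m ≤ M, loopClass (clampLoop hh (Function.update (A.piecewise (fun _ => 0) c) b 0)
        (Function.update (A.piecewise (fun _ => M) fun a => c a + 1) b m)) ∈ G from this M le_rfl
    intro m hm
    induction m with
    | zero =>
      rw [loopClass_clampLoop_eq_one hh (b := b) (by simp)]
      exact one_mem G
    | succ m ihm =>
      rw [loopClass_clampLoop_update hu hh hab _ _ m.zero_le m.le_succ]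
      refine mul_mem (ihm (by lia)) ?_
      have hc' : ∀ a, Function.update c b m a < M := fun a => by
        rcases eq_or_ne a b with rfl | ha
        · simpa using hm
        · simpa [ha] using hc a
      convert ih _ hc' using 3
      · exact Finset.update_piecewise_of_notMem A _ _ hb _
      · rw [Finset.update_piecewise_of_notMem A _ _ hb]
        congr 1
        ext a
        rcases eq_or_ne a b with rfl | ha <;> simp [*]

end Grid

/-! ### The homotopy group of the sphere is generated by the collapse map -/

lemma loopClass_eq_of_exists_face_eq {Γ Δ : C(Fin n → I, Fin n → I)}
    {g g' : Ω^ (Fin n) (Sphere n) base} (hg : ∀ t, g t = collapse (Γ t))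
    (hg' : ∀ t, g' t = collapse (Δ t))
    (h : ∀ t ∈ Cube.boundary (Fin n), ∃ i, Γ t i = Δ t i ∧ (Γ t i = 0 ∨ Γ t i = 1)) :
    loopClass g = loopClass g' :=
  loopClass_eq_iff.2 <| homotopic_of_homotopicRel
    (maskedCollapse_homotopicRel (h := fun _ => 2) (by fun_prop) Γ.continuous Δ.continuous
      (fun t => (hg t).trans (maskedCollapse_of_le one_le_two).symm)
      (fun t => (hg' t).trans (maskedCollapse_of_le one_le_two).symm) (by norm_num))
    fun t ht => Or.inr (h t ht)

section Boxes

variable [Nonempty (Fin n)]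

lemma loopClass_collapse_interp_mem_zpowers (π : Equiv.Perm (Fin n)) {α β : Fin n → I}
    (hα : ∀ i, α i = 0 ∨ α i = 1) (hβ : ∀ i, β i = 0 ∨ β i = 1) {g : Ω^ (Fin n) (Sphere n) base}
    (hg : ∀ t, g t = collapse fun i => interp (t (π i)) (α i) (β i)) :
    loopClass g ∈ Subgroup.zpowers (collapseClass n) := by
  by_cases heq : ∃ i, α i = β i
  · obtain ⟨i, hi⟩ := heq
    have : loopClass g = 1 := congrArg loopClass (GenLoop.ext g GenLoop.const fun t =>
      (hg t).trans (collapse_eq_base_iff.2 ⟨i, by simpa only [← hi, interp_self] using hα i⟩))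
    exact this ▸ one_mem _
  · push Not at heq
    refine loopClass_signedPerm_mem_zpowers {i | α i = 1} π fun t =>
      (hg t).trans (congrArg collapse (funext fun i => Subtype.ext ?_))
    rw [coe_interp]
    rcases hα i with h₁ | h₁ <;> rcases hβ i with h₂ | h₂
    · exact absurd (h₁.trans h₂.symm) (heq i)
    · simp [h₁, h₂]
    · simp [h₁, h₂]
    · exact absurd (h₁.trans h₂.symm) (heq i)

lemma loopClass_collapse_mem_zpowers {Γ : C(Fin n → I, Fin n → I)} (π : Equiv.Perm (Fin n))
    {g : Ω^ (Fin n) (Sphere n) base} (hg : ∀ t, g t = collapse (Γ t))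
    (hcongr : ∀ t t' i, t (π i) = t' (π i) → Γ t i = Γ t' i)
    (hface : ∀ t i, t (π i) = 0 ∨ t (π i) = 1 → Γ t i = 0 ∨ Γ t i = 1) :
    loopClass g ∈ Subgroup.zpowers (collapseClass n) := by
  set α := Γ fun _ => 0
  set β := Γ fun _ => 1
  have hα₀₁ : ∀ i, α i = 0 ∨ α i = 1 := fun i => hface _ i (Or.inl rfl)
  have hβ₀₁ : ∀ i, β i = 0 ∨ β i = 1 := fun i => hface _ i (Or.inr rfl)
  let Δ : C(Fin n → I, Fin n → I) :=
    ⟨fun t i => interp (t (π i)) (α i) (β i), continuous_pi fun i => by fun_prop⟩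
  have hΔ_apply : ∀ t i, Δ t i = interp (t (π i)) (α i) (β i) := fun _ _ => rfl
  have hΔ : ∀ t i, t (π i) = 0 ∨ t (π i) = 1 → Γ t i = Δ t i := by
    rintro t i (ht | ht)
    · exact (hcongr _ _ i ht).trans (by rw [hΔ_apply, ht, interp_zero])
    · exact (hcongr _ _ i ht).trans (by rw [hΔ_apply, ht, interp_one])
  have hboundary : ∀ t ∈ Cube.boundary (Fin n), ∃ i, Γ t i = Δ t i ∧ (Γ t i = 0 ∨ Γ t i = 1) := by
    rintro t ⟨a, ha⟩
    refine ⟨π.symm a, hΔ t _ (by simpa using ha), hface t _ (by simpa using ha)⟩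
  let g' : Ω^ (Fin n) (Sphere n) base := ⟨⟨fun t => collapse (Δ t), by fun_prop⟩, fun t ht =>
    let ⟨i, hi, hi'⟩ := hboundary t ht
    collapse_eq_base_iff.2 ⟨i, hi ▸ hi'⟩⟩
  rw [loopClass_eq_of_exists_face_eq hg (fun _ => rfl : ∀ t, g' t = collapse (Δ t)) hboundary]
  exact loopClass_collapse_interp_mem_zpowers π hα₀₁ hβ₀₁ fun _ => rfl

end Boxes

lemma inCell_max_min {M k : ℕ} (hk : k < M) (s : I) :
    InCell M k (max (gridPoint M k) (min (gridPoint M (k + 1)) s)) := by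
  have hM : 0 < M := by lia
  have h₁ := mul_gridPoint hM hk.le
  have h₂ := mul_gridPoint hM (Nat.succ_le_of_lt hk)
  have hM' : (0 : ℝ) ≤ M := M.cast_nonneg
  constructor
  · rw [Int.cast_natCast, ← h₁]
    exact mul_le_mul_of_nonneg_left (le_max_left _ _) hM'
  · calc (M * (max (gridPoint M k) (min (gridPoint M (k + 1)) s) : I) : ℝ)
        ≤ M * gridPoint M (k + 1) := mul_le_mul_of_nonneg_left
          (max_le (gridPoint_monotone M k.le_succ) (min_le_left _ _)) hM'
      _ = (k : ℤ) + 1 := by rw [h₂]; push_cast; rfl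

lemma dist_le_of_inCell {M : ℕ} {m : ℤ} (hM : 0 < M) {s s' : I} (hs : InCell M m s)
    (hs' : InCell M m s') : dist s s' ≤ 1 / M := by
  have hM' : (0 : ℝ) < M := by exact_mod_cast hM
  obtain ⟨h₁, h₂⟩ := hs
  obtain ⟨h₃, h₄⟩ := hs'
  have habs : |M * (s - s' : ℝ)| ≤ 1 := abs_le.2 (by constructor <;> linarith)
  rwa [Subtype.dist_eq, Real.dist_eq, le_div_iff₀' hM', ← abs_of_pos hM', ← abs_mul]

namespace NormalForm

variable {f : C(Fin n → I, Sphere n)} {M : ℕ} (N : NormalForm f M)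

lemma vanishesOnGrid (hM : 0 < M) {g : Ω^ (Fin n) (Sphere n) base} (hg : ∀ t, g t = N.map t) :
    VanishesOnGrid (gridPoint M) g := fun t a k hta => by
  rw [hg]
  exact N.map_eq_base_of_not_onWall (a := a) fun i => hta ▸ not_onWall_gridPoint hM i k

lemma exists_perm_of_inCell {x : Fin n → I} (hx : N.map x ≠ base) {c : Fin n → ℤ}
    (hc : ∀ a, InCell M (c a) (x a)) :
    ∃ π : Equiv.Perm (Fin n), ∀ i a : Fin n, c a % n = i → a = π i := by
  obtain ⟨π, hπ⟩ := N.exists_perm hx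
  refine ⟨π, fun i a ha => ?_⟩
  have hi := (hπ (π.symm a)).2.2
  rw [(hπ (π.symm a)).floor_eq_of_inCell (hc _), π.apply_symm_apply, ha] at hi
  have hia : π.symm a = i := Fin.ext (by exact_mod_cast hi.symm)
  rw [← hia, π.apply_symm_apply]

variable [Nonempty (Fin n)]

-- A wall of each type runs through a nontrivial box, in pairwise different directions. So each
-- coordinate of the frame depends on only one coordinate of the box.
lemma loopClass_clampLoop_mem_zpowers (hM : 0 < M) (hfine : IsFine f M)
    {g : Ω^ (Fin n) (Sphere n) base} (hg : ∀ t, g t = N.map t)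
    (hh : VanishesOnGrid (gridPoint M) g) {c : Fin n → ℕ} (hc : ∀ a, c a < M) :
    loopClass (clampLoop hh c fun a => c a + 1) ∈ Subgroup.zpowers (collapseClass n) := by
  let clamp : C(Fin n → I, Fin n → I) :=
    ⟨fun t a => max (gridPoint M (c a)) (min (gridPoint M (c a + 1)) (t a)),
      continuous_pi fun _ => by fun_prop⟩
  have hcell : ∀ t a, InCell M (c a) (clamp t a) := fun t a => inCell_max_min (hc a) (t a)
  have happly : ∀ t, clampLoop hh c (fun a => c a + 1) t = N.map (clamp t) := fun t => hg _
  by_cases htriv : ∀ t, N.map (clamp t) = base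
  · have : loopClass (clampLoop hh c fun a => c a + 1) = 1 := congrArg loopClass
      (GenLoop.ext _ GenLoop.const fun t => (happly t).trans (htriv t))
    exact this ▸ one_mem _
  obtain ⟨t₀, ht₀⟩ := not_forall.1 htriv
  obtain ⟨π, hwall⟩ := N.exists_perm_of_inCell ht₀ (hcell t₀)
  refine loopClass_collapse_mem_zpowers (Γ := N.frame.comp clamp) π (fun t => ?_)
    (fun t t' i htt' => N.frame_congr _ _ i fun a => ?_)
    fun t i ht => N.frame_eq_zero_or_one _ i fun a ha => ?_
  · have hdist : dist (clamp t) (clamp t₀) ≤ (n + 1) / M := (dist_pi_le_iff (by positivity)).2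
      fun a => (dist_le_of_inCell hM (hcell t a) (hcell t₀ a)).trans (by gcongr; linarith)
    have hheight := abs_le.1 ((abs_height_sub_le_dist _ _).trans (hfine _ _ hdist))
    have := N.height_gt _ ht₀
    have := threshold_le (n := n)
    rw [happly, N.map_apply, maskedCollapse_of_le (by linarith)]
    rfl
  · by_cases ha : (c a : ℤ) % n = i
    · obtain rfl := hwall i a ha
      exact congrArg (gridStair M i) (congrArg (fun s => max _ (min _ s)) htt')
    · exact gridStair_eq_of_inCell ha (hcell t a) (hcell t' a)
  · have hmod := ha.2.2
    rw [ha.floor_eq_of_inCell (hcell t a)] at hmod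
    obtain rfl := hwall i a hmod
    obtain ⟨k, hk⟩ := exists_max_min_eq (gridPoint M) (c (π i)) (c (π i) + 1) ht
    exact not_onWall_gridPoint hM i k (hk ▸ ha)

end NormalForm

theorem mem_zpowers_collapseClass [Nontrivial (Fin n)] (x : HomotopyGroup (Fin n) (Sphere n) base) :
    x ∈ Subgroup.zpowers (collapseClass n) := by
  obtain ⟨f, rfl⟩ := loopClass_surjective x
  obtain ⟨M, hM, hfine⟩ := exists_isFine f.1
  obtain ⟨N⟩ := exists_normalForm hM (hfine M le_rfl)
  let g : Ω^ (Fin n) (Sphere n) base :=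
    ⟨N.map, fun t ht => N.map_eq_base_of_eq_base (GenLoop.boundary f t ht)⟩
  have hfg : loopClass f = loopClass g := loopClass_eq_iff.2
    (homotopic_of_homotopicRel N.homotopicRel fun t ht => GenLoop.boundary f t ht)
  have hgrid := N.vanishesOnGrid hM (g := g) fun _ => rfl
  exact hfg ▸ loopClass_mem_of_forall_box (gridPoint_monotone M) (by simp [gridPoint])
    (gridPoint_self hM le_rfl) hgrid _ fun c hc =>
      N.loopClass_clampLoop_mem_zpowers hM (hfine M le_rfl) (fun _ => rfl) hgrid hc

/-! ### Sliding along one direction of the cube -/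

section Slide

variable {N X : Type*} [DecidableEq N] [TopologicalSpace X] {x : X}

/-- The linear deformation, with parameter `s`, from the identity of the cube to the
reparametrization `r` of the coordinate `a`. -/
def slide (a : N) (r : I → I) (s : I) (t : N → I) : N → I :=
  Function.update t a (interp s (t a) (r (t a)))

variable {a : N} {r : I → I}

@[fun_prop] lemma continuous_slide {Z : Type*} [TopologicalSpace Z] (hr : Continuous r) {s : Z → I}
    {t : Z → N → I} (hs : Continuous s) (ht : Continuous t) :
    Continuous fun z => slide a r (s z) (t z) :=
  ht.update a (by fun_prop)

lemma slide_zero (t : N → I) : slide a r 0 t = t := by simp [slide, interp_zero]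

lemma slide_one (t : N → I) : slide a r 1 t = Function.update t a (r (t a)) := by
  simp [slide, interp_one]

lemma slide_mem_boundary (h₀ : r 0 = 0) (h₁ : r 1 = 1) (s : I) {t : N → I}
    (ht : t ∈ Cube.boundary N) : slide a r s t ∈ Cube.boundary N := by
  obtain ⟨b, hb⟩ := ht
  refine ⟨b, ?_⟩
  rcases eq_or_ne b a with rfl | hba
  · rw [slide, Function.update_self]
    rcases hb with hb | hb
    · simp [hb, h₀, interp_self]
    · simp [hb, h₁, interp_self]
  · simpa [slide, hba] using hb

/-- The reparametrization of a loop along one direction. -/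
def reparam (a : N) (hr : Continuous r) (h₀ : r 0 = 0) (h₁ : r 1 = 1) (f : Ω^ N X x) : Ω^ N X x :=
  ⟨⟨fun t => f (slide a r 1 t), (continuous_loop f).comp (by fun_prop)⟩, fun _ ht =>
    GenLoop.boundary f _ (slide_mem_boundary h₀ h₁ 1 ht)⟩

lemma homotopic_reparam (hr : Continuous r) (h₀ : r 0 = 0) (h₁ : r 1 = 1) (f : Ω^ N X x) :
    GenLoop.Homotopic f (reparam a hr h₀ h₁ f) :=
  homotopic_of_continuous (fun p => f (slide a r p.1 p.2))
    ((continuous_loop f).comp (by fun_prop)) (fun t => by rw [slide_zero]) (fun _ => rfl)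
    fun s _ ht => GenLoop.boundary f _ (slide_mem_boundary h₀ h₁ s ht)

end Slide

/-! ### The shrinking wedge of copies of a space -/

/-- The wedge of countably many copies of the pointed space `(X, x₀)`, topologized as the
subspace of the product which consists of the sequences with at most one nontrivial entry. -/
abbrev ShrinkingWedge {X : Type*} (x₀ : X) : Type _ :=
  {x : ℕ → X // ∀ j k, j ≠ k → x j = x₀ ∨ x k = x₀}

namespace ShrinkingWedge

variable {X : Type*} {x₀ : X}

/-- The point at which the copies are joined. -/
def point (x₀ : X) : ShrinkingWedge x₀ := ⟨fun _ => x₀, fun _ _ _ => Or.inl rfl⟩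

lemma ext {x y : ShrinkingWedge x₀} (h : ∀ k, x.1 k = y.1 k) : x = y := Subtype.ext (funext h)

variable [TopologicalSpace X]

lemma continuous_of_coord {Z : Type*} [TopologicalSpace Z] {f : Z → ShrinkingWedge x₀}
    (h : ∀ k, Continuous fun z => (f z).1 k) : Continuous f :=
  (continuous_pi h).subtype_mk fun z => (f z).2

/-- The retraction onto the `k`-th copy. -/
def proj (k : ℕ) : C(ShrinkingWedge x₀, X) :=
  ⟨fun x => x.1 k, (continuous_apply k).comp continuous_subtype_val⟩

lemma proj_point (k : ℕ) : proj k (point x₀) = x₀ := rfl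

/-- The inclusion of the `k`-th copy. -/
def incl (k : ℕ) : C(X, ShrinkingWedge x₀) where
  toFun x := ⟨fun j => if j = k then x else x₀, fun i j hij => by
    by_cases h : i = k
    · exact Or.inr (if_neg (h ▸ hij.symm))
    · exact Or.inl (if_neg h)⟩
  continuous_toFun := continuous_of_coord fun j => by
    dsimp only
    split_ifs <;> fun_prop

lemma incl_point (k : ℕ) : incl k x₀ = point x₀ := ext fun j => ite_self (c := j = k) x₀

/-- The embedding which moves the `k`-th copy to the `(k + 1)`-st. -/
def shift : C(ShrinkingWedge x₀, ShrinkingWedge x₀) where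
  toFun x := ⟨fun k => Nat.casesOn k x₀ x.1, fun j k hjk => by
    cases j with
    | zero => exact Or.inl rfl
    | succ j => cases k with
      | zero => exact Or.inr rfl
      | succ k => exact x.2 j k (by lia)⟩
  continuous_toFun := continuous_of_coord fun k => by
    cases k with
    | zero => exact continuous_const
    | succ k => exact (proj k).continuous

lemma shift_point : shift (point x₀) = point x₀ := ext fun k => by cases k <;> rfl

lemma proj_zero_shift (x : ShrinkingWedge x₀) : proj 0 (shift x) = x₀ := rfl

lemma proj_succ_shift (k : ℕ) (x : ShrinkingWedge x₀) : proj (k + 1) (shift x) = proj k x := rfl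

/-- The retraction which forgets the first copy, a left inverse of `shift`. -/
def unshift : C(ShrinkingWedge x₀, ShrinkingWedge x₀) where
  toFun x := ⟨fun k => x.1 (k + 1), fun j k hjk => x.2 (j + 1) (k + 1) (by lia)⟩
  continuous_toFun := continuous_of_coord fun k => (proj (k + 1)).continuous

lemma unshift_point : unshift (point x₀) = point x₀ := rfl

/-! ### Loops in a shrinking wedge -/

variable {N : Type*}

lemma homotopic_of_coord {f g : Ω^ N (ShrinkingWedge x₀) (point x₀)}
    (H : ℕ → I × (N → I) → X) (hH : ∀ k, Continuous (H k))
    (hdisj : ∀ p j k, j ≠ k → H j p = x₀ ∨ H k p = x₀)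
    (h₀ : ∀ k t, H k (0, t) = proj k (f t)) (h₁ : ∀ k t, H k (1, t) = proj k (g t))
    (hb : ∀ k s, ∀ t ∈ Cube.boundary N, H k (s, t) = x₀) : GenLoop.Homotopic f g :=
  homotopic_of_continuous (fun p => ⟨fun k => H k p, hdisj p⟩) (continuous_of_coord hH)
    (fun t => ext fun k => h₀ k t) (fun t => ext fun k => h₁ k t)
    fun s t ht => ext fun k => hb k s t ht

/-- The loop with given coordinates. -/
def loopOfCoord (g : ℕ → Ω^ N X x₀) (hg : ∀ t j k, j ≠ k → g j t = x₀ ∨ g k t = x₀) :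
    Ω^ N (ShrinkingWedge x₀) (point x₀) :=
  ⟨⟨fun t => ⟨fun k => g k t, hg t⟩, continuous_of_coord fun k => continuous_loop (g k)⟩,
    fun t ht => ext fun k => GenLoop.boundary (g k) t ht⟩

lemma exists_homotopic_of_forall_homotopicRel {f : Ω^ N (ShrinkingWedge x₀) (point x₀)}
    {g : ℕ → C(N → I, X)}
    (hg : ∀ k, ((proj k).comp (f : C(N → I, ShrinkingWedge x₀))).HomotopicRel (g k)
      {t | proj k (f t) = x₀}) :
    ∃ f' : Ω^ N (ShrinkingWedge x₀) (point x₀), GenLoop.Homotopic f f' ∧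
      ∀ k t, proj k (f' t) = g k t := by
  let H := fun k => (hg k).some
  have hbase : ∀ k s t, proj k (f t) = x₀ → H k (s, t) = x₀ := fun k s t ht =>
    ((H k).eq_fst s ht).trans ht
  have hboundary : ∀ k s, ∀ t ∈ Cube.boundary N, H k (s, t) = x₀ := fun k s t ht =>
    hbase k s t (congrArg (proj k) (GenLoop.boundary f t ht))
  have hdisj : ∀ p j k, j ≠ k → H j p = x₀ ∨ H k p = x₀ := fun p j k hjk =>
    ((f p.2).2 j k hjk).imp (hbase j p.1 p.2) (hbase k p.1 p.2)
  have hone : ∀ k t, H k (1, t) = g k t := fun k t => (H k).apply_one t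
  let g' : ℕ → Ω^ N X x₀ := fun k => ⟨g k, fun t ht => (hone k t).symm.trans (hboundary k 1 t ht)⟩
  refine ⟨loopOfCoord g' fun t j k hjk => ?_, homotopic_of_coord (fun k => H k)
    (fun k => (H k).continuous) hdisj (fun k t => (H k).apply_zero t) hone hboundary,
    fun _ _ => rfl⟩
  exact (hdisj (1, t) j k hjk).imp (hone j t).symm.trans (hone k t).symm.trans

/-! ### Infinite concatenation of homotopies -/

section Telescope

variable {K : ℕ → I × (N → I) → ShrinkingWedge x₀}

/-- The concatenation of `K 0, shift ∘ K 1, …, shift^m ∘ K m`, where `shift^j ∘ K j` is traversed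
while the parameter runs from `1 - 2⁻ʲ` to `1 - 2⁻⁽ʲ⁺¹⁾`. -/
def telescope : ℕ → (ℕ → I × (N → I) → ShrinkingWedge x₀) → ℝ → (N → I) → ShrinkingWedge x₀
  | 0, K, s, t => K 0 (Set.projIcc 0 1 zero_le_one (2 * s), t)
  | m + 1, K, s, t =>
    if s ≤ 1 / 2 then K 0 (Set.projIcc 0 1 zero_le_one (2 * s), t)
    else shift (telescope m (fun j => K (j + 1)) (2 * s - 1) t)

lemma telescope_of_le {m : ℕ} {s : ℝ} (hs : s ≤ 1 / 2) (t : N → I) :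
    telescope m K s t = K 0 (Set.projIcc 0 1 zero_le_one (2 * s), t) := by
  cases m with
  | zero => rfl
  | succ m => exact if_pos hs

lemma telescope_zero (m : ℕ) (t : N → I) : telescope m K 0 t = K 0 (0, t) := by
  rw [telescope_of_le (by norm_num), mul_zero, Set.projIcc_left]
  rfl

lemma telescope_zero_of_lt {s : ℝ} (hs : 1 / 2 < s) (t : N → I) :
    telescope 0 K s t = K 0 (1, t) := by
  rw [telescope, Set.projIcc_of_right_le _ (by linarith)]
  rfl

lemma telescope_succ_of_lt {m : ℕ} {s : ℝ} (hs : 1 / 2 < s) (t : N → I) :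
    telescope (m + 1) K s t = shift (telescope m (fun j => K (j + 1)) (2 * s - 1) t) :=
  if_neg (not_le.2 hs)

lemma telescope_of_forall_eq {t : N → I} (ht : ∀ j s, K j (s, t) = point x₀) (m : ℕ) (s : ℝ) :
    telescope m K s t = point x₀ := by
  induction m generalizing K s with
  | zero => exact ht 0 _
  | succ m ih =>
    rcases le_or_gt s (1 / 2) with hs | hs
    · rw [telescope_of_le hs, ht]
    · rw [telescope_succ_of_lt hs, ih fun j => ht (j + 1), shift_point]

lemma continuous_telescope (hglue : ∀ j t, K j (1, t) = shift (K (j + 1) (0, t)))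
    (hK : ∀ j, Continuous (K j)) (m : ℕ) :
    Continuous fun p : ℝ × (N → I) => telescope m K p.1 p.2 := by
  have hfirst : Continuous fun p : ℝ × (N → I) =>
      K 0 (Set.projIcc 0 1 zero_le_one (2 * p.1), p.2) := (hK 0).comp (by fun_prop)
  induction m generalizing K with
  | zero => exact hfirst
  | succ m ih =>
    have hrest := ih (fun j => hglue (j + 1)) (fun j => hK (j + 1)) ((hK 1).comp (by fun_prop))
    refine hfirst.if_le (shift.continuous.comp (hrest.comp
      (f := fun p : ℝ × (N → I) => (2 * p.1 - 1, p.2)) (by fun_prop)))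
      continuous_fst continuous_const fun p hp => ?_
    have hp' : 2 * p.1 = 1 := by linarith
    rw [hp', sub_self, telescope_zero, Set.projIcc_right]
    exact hglue 0 p.2

lemma proj_telescope_one (hglue : ∀ j t, K j (1, t) = shift (K (j + 1) (0, t))) (k : ℕ)
    (t : N → I) : proj k (telescope k K 1 t) = x₀ := by
  induction k generalizing K with
  | zero => rw [telescope_zero_of_lt (by norm_num), hglue, proj_zero_shift]
  | succ k ih =>
    rw [telescope_succ_of_lt (by norm_num), proj_succ_shift, two_mul, add_sub_cancel_right]
    exact ih fun j => hglue (j + 1)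

lemma proj_telescope (hglue : ∀ j t, K j (1, t) = shift (K (j + 1) (0, t))) {k m : ℕ}
    (hkm : k ≤ m) (s : ℝ) (t : N → I) :
    proj k (telescope k K s t) = proj k (telescope m K s t) := by
  induction k generalizing K s m with
  | zero =>
    rcases le_or_gt s (1 / 2) with hs | hs
    · rw [telescope_of_le hs, telescope_of_le hs]
    cases m with
    | zero => rfl
    | succ m =>
      rw [telescope_zero_of_lt hs, telescope_succ_of_lt hs, hglue, proj_zero_shift, proj_zero_shift]
  | succ k ih =>
    obtain ⟨m, rfl⟩ := Nat.exists_eq_succ_of_ne_zero (by lia : m ≠ 0)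
    rcases le_or_gt s (1 / 2) with hs | hs
    · rw [telescope_of_le hs, telescope_of_le hs]
    · rw [telescope_succ_of_lt hs, telescope_succ_of_lt hs, proj_succ_shift, proj_succ_shift,
        ih (fun j => hglue (j + 1)) (Nat.le_of_succ_le_succ hkm)]

lemma proj_telescope_eq_or_eq (hglue : ∀ j t, K j (1, t) = shift (K (j + 1) (0, t)))
    (s : ℝ) (t : N → I) {j k : ℕ} (hjk : j ≠ k) :
    proj j (telescope j K s t) = x₀ ∨ proj k (telescope k K s t) = x₀ := by
  rw [proj_telescope hglue (le_max_left j k), proj_telescope hglue (le_max_right j k)]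
  exact (telescope (max j k) K s t).2 j k hjk

end Telescope

-- The homotopies from `shift^j ∘ F j` to `shift^(j+1) ∘ F (j+1)` can be concatenated, since
-- each coordinate is affected by finitely many of them only.
theorem homotopic_const_of_forall_homotopic_shift {F : ℕ → Ω^ N (ShrinkingWedge x₀) (point x₀)}
    (hF : ∀ j, GenLoop.Homotopic (F j) (loopMap shift shift_point (F (j + 1)))) :
    GenLoop.Homotopic (F 0) GenLoop.const := by
  choose K hK hK₀ hK₁ hKb using fun j => exists_continuous_of_homotopic (hF j)
  have hglue : ∀ j t, K j (1, t) = shift (K (j + 1) (0, t)) := fun j t => by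
    rw [hK₁, hK₀, loopMap_apply]
  refine homotopic_of_coord (fun k p => proj k (telescope k K p.1 p.2)) (fun k => ?_)
    (fun p j k hjk => proj_telescope_eq_or_eq hglue p.1 p.2 hjk) (fun k t => ?_)
    (fun k t => proj_telescope_one hglue k t) fun k s t ht => ?_
  · exact (proj k).continuous.comp ((continuous_telescope hglue hK k).comp
      (f := fun p : I × (N → I) => ((p.1 : ℝ), p.2)) (by fun_prop))
  · rw [Set.Icc.coe_zero, telescope_zero, hK₀]
  · rw [telescope_of_forall_eq (fun j s => hKb j s t ht), proj_point]

/-! ### The homotopy groups of a shrinking wedge -/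

variable [DecidableEq N] [Nonempty N]

/-- The homomorphism induced on homotopy groups by all the retractions onto the copies. -/
def piProj (N : Type*) [DecidableEq N] [Nonempty N] (x₀ : X) :
    HomotopyGroup N (ShrinkingWedge x₀) (point x₀) →* (ℕ → HomotopyGroup N X x₀) :=
  MonoidHom.pi fun k => piMap (proj k) (proj_point k)

lemma piProj_loopClass (f : Ω^ N (ShrinkingWedge x₀) (point x₀)) (k : ℕ) :
    piProj N x₀ (loopClass f) k = loopClass (loopMap (proj k) (proj_point k) f) := rfl

/-- The reparametrization of the interval which climbs from `0` to `1` on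
`[1 - 2⁻ᵏ, 1 - 2⁻⁽ᵏ⁺¹⁾]`. -/
def dyadicClimb (k : ℕ) (s : I) : I :=
  Set.projIcc 0 1 zero_le_one (2 ^ (k + 1) * (s - 1) + 2 : ℝ)

lemma continuous_dyadicClimb (k : ℕ) : Continuous (dyadicClimb k) := by
  unfold dyadicClimb
  fun_prop

lemma dyadicClimb_zero (k : ℕ) : dyadicClimb k 0 = 0 :=
  Set.projIcc_of_le_left _ (by
    have := one_le_pow₀ (n := k) (one_le_two (α := ℝ))
    rw [pow_succ, Set.Icc.coe_zero]
    linarith)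

lemma dyadicClimb_one (k : ℕ) : dyadicClimb k 1 = 1 := Set.projIcc_of_right_le _ (by simp)

lemma dyadicClimb_eq_one_or_eq_zero {j k : ℕ} (hjk : j < k) (s : I) :
    dyadicClimb j s = 1 ∨ dyadicClimb k s = 0 := by
  refine (le_or_gt (1 : ℝ) (2 ^ (j + 1) * (s - 1) + 2)).imp (Set.projIcc_of_right_le _)
    fun h => Set.projIcc_of_le_left _ ?_
  have hpow : (2 : ℝ) ^ (j + 1) ≤ 2 ^ k := pow_le_pow_right₀ one_le_two hjk
  have hs : (s : ℝ) ≤ 1 := s.2.2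
  rw [pow_succ 2 k]
  nlinarith

-- The given loops, squeezed into disjoint slabs of the cube, form a loop in the wedge.
theorem piProj_surjective : Function.Surjective (piProj N x₀) := by
  intro w
  choose f hf using fun k => loopClass_surjective (w k)
  let a : N := Classical.arbitrary N
  let g : ℕ → Ω^ N X x₀ := fun k =>
    reparam a (continuous_dyadicClimb k) (dyadicClimb_zero k) (dyadicClimb_one k) (f k)
  have hfg : ∀ k, GenLoop.Homotopic (f k) (g k) := fun k => homotopic_reparam _ _ _ (f k)
  have hg : ∀ t k, dyadicClimb k (t a) = 0 ∨ dyadicClimb k (t a) = 1 → g k t = x₀ :=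
    fun t k h => GenLoop.boundary (f k) _ ⟨a, by simpa [slide_one] using h⟩
  have hlt : ∀ t j k, j < k → g j t = x₀ ∨ g k t = x₀ := fun t j k hjk =>
    (dyadicClimb_eq_one_or_eq_zero hjk (t a)).imp (fun h => hg t j (Or.inr h))
      fun h => hg t k (Or.inl h)
  refine ⟨loopClass (loopOfCoord g fun t j k hjk => ?_), funext fun k => ?_⟩
  · exact hjk.lt_or_gt.elim (hlt t j k) fun h => (hlt t k j h).symm
  · rw [← hf k, piProj_loopClass, loopClass_eq_iff]
    exact (hfg k).symm

/-- Every element of the homotopy group splits into an element supported on the first copy and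
one supported on the remaining copies. -/
def SplitsFirst (N : Type*) [DecidableEq N] [Nonempty N] (x₀ : X) : Prop :=
  ∀ f : Ω^ N (ShrinkingWedge x₀) (point x₀), ∃ (f₀ : Ω^ N X x₀)
    (f' : Ω^ N (ShrinkingWedge x₀) (point x₀)),
    loopClass f = loopClass (loopMap (incl 0) (incl_point 0) f₀) *
      loopClass (loopMap shift shift_point f')

lemma exists_homotopic_shift_of_piProj_eq_one (hsplit : SplitsFirst N x₀)
    {f : Ω^ N (ShrinkingWedge x₀) (point x₀)} (hf : piProj N x₀ (loopClass f) = 1) :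
    ∃ f' : Ω^ N (ShrinkingWedge x₀) (point x₀), piProj N x₀ (loopClass f') = 1 ∧
      GenLoop.Homotopic f (loopMap shift shift_point f') := by
  obtain ⟨f₀, f', hff'⟩ := hsplit f
  have hf₀ : loopClass f₀ = 1 :=
    calc loopClass f₀
        = piProj N x₀ (loopClass (loopMap (incl 0) (incl_point 0) f₀)) 0 *
          piProj N x₀ (loopClass (loopMap shift shift_point f')) 0 := (mul_one _).symm
      _ = piProj N x₀ (loopClass f) 0 := by rw [hff', map_mul, Pi.mul_apply]
      _ = 1 := congrFun hf 0
  have hshift : loopClass f = loopClass (loopMap shift shift_point f') := by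
    rw [hff', ← piMap_loopClass (incl 0) (incl_point 0), hf₀, map_one, one_mul]
  refine ⟨f', funext fun k => ?_, loopClass_eq_iff.1 hshift⟩
  rw [hshift] at hf
  exact congrFun hf (k + 1)

theorem piProj_injective (hsplit : SplitsFirst N x₀) : Function.Injective (piProj N x₀) := by
  rw [injective_iff_map_eq_one]
  intro z hz
  obtain ⟨f, rfl⟩ := loopClass_surjective z
  choose next hnext_one hnext using
    fun f : {f : Ω^ N (ShrinkingWedge x₀) (point x₀) // piProj N x₀ (loopClass f) = 1} =>
      exists_homotopic_shift_of_piProj_eq_one hsplit f.2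
  let F : ℕ → {f : Ω^ N (ShrinkingWedge x₀) (point x₀) // piProj N x₀ (loopClass f) = 1} := fun j =>
    (fun f => ⟨next f, hnext_one f⟩)^[j] ⟨f, hz⟩
  refine loopClass_eq_iff.2 (homotopic_const_of_forall_homotopic_shift (F := fun j => (F j).1)
    fun j => ?_)
  dsimp only [F]
  rw [Function.iterate_succ_apply']
  exact hnext _

end ShrinkingWedge

namespace ShrinkingWedge

section SlideTail

variable {X N : Type*} [TopologicalSpace X] {x₀ : X} [DecidableEq N]
  {f : Ω^ N (ShrinkingWedge x₀) (point x₀)} {a : N} {r : I → I}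

lemma exists_homotopic_slide_tail (hr : Continuous r) (h₀ : r 0 = 0) (h₁ : r 1 = 1)
    (hdisj : ∀ s t k, k ≠ 0 → proj 0 (f t) = x₀ ∨ proj k (f (slide a r s t)) = x₀) :
    ∃ g : Ω^ N (ShrinkingWedge x₀) (point x₀), GenLoop.Homotopic f g ∧
      ∀ k t, proj k (g t) = if k = 0 then proj 0 (f t) else proj k (f (slide a r 1 t)) := by
  let H : ℕ → I × (N → I) → X := fun k p =>
    if k = 0 then proj 0 (f p.2) else proj k (f (slide a r p.1 p.2))
  have hH : ∀ k, Continuous (H k) := fun k => by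
    have := continuous_loop f
    dsimp only [H]
    split_ifs <;> fun_prop
  have hHdisj : ∀ p j k, j ≠ k → H j p = x₀ ∨ H k p = x₀ := by
    intro p j k hjk
    dsimp only [H]
    split_ifs with hj hk hk
    · exact absurd (hj.trans hk.symm) hjk
    · exact hdisj _ _ k hk
    · exact (hdisj _ _ j hj).symm
    · exact (f _).2 j k hjk
  have hHb : ∀ k s, ∀ t ∈ Cube.boundary N, H k (s, t) = x₀ := by
    intro k s t ht
    dsimp only [H]
    split_ifs
    · rw [GenLoop.boundary f t ht, proj_point]
    · rw [GenLoop.boundary f _ (slide_mem_boundary h₀ h₁ s ht), proj_point]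
  refine ⟨loopOfCoord (fun k => ⟨⟨fun t => H k (1, t), (hH k).comp (by fun_prop)⟩, hHb k 1⟩)
    fun t j k hjk => hHdisj (1, t) j k hjk, homotopic_of_coord H hH hHdisj (fun k t => ?_)
    (fun k t => rfl) hHb, fun _ _ => rfl⟩
  simp only [H, slide_zero]
  split_ifs with hk
  · rw [hk]
  · rfl

lemma exists_loopClass_eq_mul_of_slide [Nontrivial N] [T1Space X] (hr : Continuous r)
    (h₀ : r 0 = 0) (h₁ : r 1 = 1)
    (hdisj : ∀ s t k, k ≠ 0 → proj 0 (f t) = x₀ ∨ proj k (f (slide a r s t)) = x₀)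
    (hsep : ∀ v, (∀ t, t a = v → proj 0 (f t) = x₀) ∨
      ∀ t, t a = r v → ∀ k ≠ 0, proj k (f t) = x₀) :
    ∃ (f₀ : Ω^ N X x₀) (f' : Ω^ N (ShrinkingWedge x₀) (point x₀)),
      loopClass f = loopClass (loopMap (incl 0) (incl_point 0) f₀) *
        loopClass (loopMap shift shift_point f') := by
  obtain ⟨g, hfg, hg⟩ := exists_homotopic_slide_tail hr h₀ h₁ hdisj
  obtain ⟨b, hb⟩ := exists_ne a
  refine ⟨loopMap (proj 0) (proj_point 0) g, loopMap unshift unshift_point g, ?_⟩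
  rw [loopClass_eq_iff.2 hfg]
  refine loopClass_eq_mul_of_lines b fun t => (hsep (t a)).imp (fun h s => ?_) fun h s => ?_
  · have hzero : proj 0 (g (Function.update t b s)) = x₀ := by
      simpa [hg] using h _ (Function.update_of_ne hb.symm s t)
    refine ⟨by rw [loopMap_apply, loopMap_apply, hzero, incl_point], ext fun k => ?_⟩
    cases k with
    | zero => exact hzero
    | succ k => rfl
  · have hsucc : ∀ k, proj (k + 1) (g (Function.update t b s)) = x₀ := fun k => by
      rw [hg, if_neg k.succ_ne_zero]
      exact h _ (by simp [slide_one, hb.symm]) _ k.succ_ne_zero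
    constructor <;> refine ext fun k => ?_ <;> cases k with
    | zero => rfl
    | succ k => exact hsucc k

end SlideTail

end ShrinkingWedge

/-! ### Splitting loops in the shrinking wedge of spheres -/

/-- The reparametrization of the interval which contracts the first half of every cell of the grid
to its left end point. It is the reflection of `gridStair` for `n = 1`, which contracts the second
halves of the cells to their right end points. -/
def wallContraction (M : ℕ) (s : I) : I :=
  unitInterval.symm (gridStair M (0 : Fin 1) (unitInterval.symm s))

lemma continuous_wallContraction (M : ℕ) : Continuous (wallContraction M) :=
  unitInterval.continuous_symm.comp ((continuous_gridStair M 0).comp unitInterval.continuous_symm)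

lemma symm_gridPoint {M k : ℕ} (hM : 0 < M) :
    unitInterval.symm (gridPoint M k) = gridPoint M (M - k) := by
  have hM' : (0 : ℝ) < M := by exact_mod_cast hM
  rcases le_total k M with hk | hk
  · refine Subtype.ext (mul_left_cancel₀ hM'.ne' ?_)
    rw [unitInterval.coe_symm_eq, mul_sub, mul_gridPoint hM hk, mul_gridPoint hM (M.sub_le k),
      Nat.cast_sub hk, mul_one]
  · rw [gridPoint_self hM hk, Nat.sub_eq_zero_of_le hk, unitInterval.symm_one]
    exact Subtype.ext (by simp [gridPoint])

lemma not_onWall_symm {M : ℕ} {i : Fin n} {s : I} (h : OnWall M i s) (j : Fin 1) :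
    ¬ OnWall M j (unitInterval.symm s) := by
  rintro ⟨-, hlt, -⟩
  rw [unitInterval.coe_symm_eq, mul_sub, mul_one, sub_eq_add_neg, Int.fract_natCast_add,
    Int.fract_neg h.1.ne'] at hlt
  linarith [h.2.1]

lemma wallContraction_mem_range_gridPoint {M : ℕ} (hM : 0 < M) {i : Fin n} {s : I}
    (h : OnWall M i s) : wallContraction M s ∈ Set.range (gridPoint M) := by
  obtain ⟨k, hk⟩ := gridStair_mem_range_gridPoint (not_onWall_symm h 0)
  exact ⟨M - k, by rw [wallContraction, ← hk, symm_gridPoint hM]⟩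

lemma abs_wallContraction_sub_le {M : ℕ} (hM : 0 < M) (s : I) :
    |(wallContraction M s - s : ℝ)| ≤ 1 / M := by
  have h := abs_gridStair_sub_le hM (0 : Fin 1) (unitInterval.symm s)
  rw [abs_sub_comm, unitInterval.coe_symm_eq] at h
  rw [wallContraction, unitInterval.coe_symm_eq]
  convert h using 2
  · ring
  · simp

lemma wallContraction_zero {M : ℕ} (hM : 0 < M) : wallContraction M 0 = 0 := by
  have h := stair_intCast (n := 1) M
  rw [Int.cast_natCast] at h
  simp [wallContraction, gridStair, h, hM.ne']

lemma wallContraction_one (M : ℕ) : wallContraction M 1 = 1 := by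
  have h := stair_intCast (n := 1) 0
  rw [Int.cast_zero] at h
  simp [wallContraction, gridStair, h]

lemma dist_slide_wallContraction_le {M : ℕ} (hM : 0 < M) (a : Fin n) (s : I) (t : Fin n → I) :
    dist t (slide a (wallContraction M) s t) ≤ 1 / M := by
  refine (dist_pi_le_iff (by positivity)).2 fun b => ?_
  rcases eq_or_ne b a with rfl | hb
  · have hs : |(s : ℝ)| ≤ 1 := abs_le.2 ⟨by linarith [s.2.1], s.2.2⟩
    rw [slide, Function.update_self, Subtype.dist_eq, dist_comm, Real.dist_eq, coe_interp]
    calc |((1 - s) * t b + s * wallContraction M (t b) - t b : ℝ)|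
        = |(s : ℝ)| * |(wallContraction M (t b) - t b : ℝ)| := by rw [← abs_mul]; ring_nf
      _ ≤ 1 * (1 / M) := mul_le_mul hs (abs_wallContraction_sub_le hM _) (abs_nonneg _) zero_le_one
      _ = 1 / M := one_mul _
  · rw [slide, Function.update_of_ne hb, dist_self]
    positivity

lemma NormalForm.ne_base_of_dist_le {f : C(Fin n → I, Sphere n)} {M : ℕ} (N : NormalForm f M)
    (hfine : IsFine f M) {t t' : Fin n → I} (ht : N.map t ≠ base) (htt' : dist t t' ≤ 1 / M) :
    f t' ≠ base := by
  intro ht'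
  have hM : (1 : ℝ) / M ≤ (n + 1) / M := by gcongr; linarith [n.cast_nonneg (α := ℝ)]
  have hdist := (abs_height_sub_le_dist (f t) (f t')).trans (hfine t t' (htt'.trans hM))
  rw [ht', height_base, sub_zero] at hdist
  linarith [le_abs_self (height (f t)), N.height_gt t ht, threshold_le (n := n)]

lemma exists_dvd_isFine (φ : ℕ → C(Fin n → I, Sphere n)) :
    ∃ M : ℕ → ℕ, ∀ k, 0 < M k ∧ M 0 ∣ M k ∧ IsFine (φ k) (M k) := by
  choose P hP hfine using fun k => exists_isFine (φ k)
  refine ⟨fun k => P 0 * if k = 0 then 1 else P k, fun k => ?_⟩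
  rcases eq_or_ne k 0 with rfl | hk
  · simpa using ⟨hP 0, hfine 0 _ le_rfl⟩
  · simpa [hk] using ⟨⟨hP 0, hP k⟩, hfine k _ (Nat.le_mul_of_pos_left _ (hP 0))⟩

lemma not_onWall_wallContraction {M L : ℕ} (hL : 0 < L) (hdvd : M ∣ L) {i : Fin n} {s : I}
    (h : OnWall M i s) (j : Fin n) : ¬ OnWall L j (wallContraction M s) := by
  obtain ⟨l, rfl⟩ := hdvd
  obtain ⟨k, hk⟩ := wallContraction_mem_range_gridPoint (Nat.pos_of_mul_pos_right hL) h
  rw [← hk, ← gridPoint_mul (Nat.pos_of_mul_pos_left hL)]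
  exact not_onWall_gridPoint hL j _

theorem splitsFirst_sphere [Nontrivial (Fin n)] :
    ShrinkingWedge.SplitsFirst (Fin n) (base : Sphere n) := by
  intro f
  let φ : ℕ → C(Fin n → I, Sphere n) := fun k =>
    (ShrinkingWedge.proj k).comp (f : C(Fin n → I, ShrinkingWedge base))
  have hφ : ∀ t j k, j ≠ k → φ j t = base ∨ φ k t = base := fun t => (f t).2
  obtain ⟨M, hM⟩ := exists_dvd_isFine φ
  let N : ∀ k, NormalForm (φ k) (M k) := fun k => (exists_normalForm (hM k).1 (hM k).2.2).some
  obtain ⟨g, hfg, hg⟩ :=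
    ShrinkingWedge.exists_homotopic_of_forall_homotopicRel fun k => (N k).homotopicRel
  let a : Fin n := Classical.arbitrary _
  rw [loopClass_eq_iff.2 hfg]
  refine ShrinkingWedge.exists_loopClass_eq_mul_of_slide (a := a)
    (continuous_wallContraction (M 0)) (wallContraction_zero (hM 0).1) (wallContraction_one _)
    (fun s t k hk => ?_) fun v => ?_ <;> simp only [hg]
  · refine or_iff_not_imp_left.2 fun ht => (N k).map_eq_base_of_eq_base
      ((hφ _ 0 k hk.symm).resolve_left ?_)
    exact (N 0).ne_base_of_dist_le (hM 0).2.2 ht (dist_slide_wallContraction_le (hM 0).1 a s t)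
  · by_cases hv : ∃ i : Fin n, OnWall (M 0) i v
    · obtain ⟨i, hi⟩ := hv
      exact Or.inr fun t ht k _ => (N k).map_eq_base_of_not_onWall (a := a) fun j =>
        ht ▸ not_onWall_wallContraction (hM k).1 (hM k).2.1 hi j
    · exact Or.inl fun t ht => (N 0).map_eq_base_of_not_onWall (a := a) fun i hi =>
        hv ⟨i, ht ▸ hi⟩

/-! ### A combinatorial degree -/

/-- The increasing map from `ℕ` to `ℕ` whose image misses `k`. -/
def skip (k j : ℕ) : ℕ := if j < k then j else j + 1

lemma skip_of_lt {k j : ℕ} (h : j < k) : skip k j = j := if_pos h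

lemma skip_of_le {k j : ℕ} (h : k ≤ j) : skip k j = j + 1 := if_neg h.not_gt

-- The product of the differences is a cup product of coboundaries, hence a cocycle.
lemma sum_neg_one_pow_mul_prod_skip {R : Type*} [CommRing R] (x : Fin n → ℕ → R) :
    ∑ k ∈ Finset.range (n + 2), (-1) ^ k *
      ∏ i : Fin n, (x i (skip k (i + 1)) - x i (skip k i)) = 0 := by
  let D : ℕ → R := fun k => ∏ i : Fin n, (x i (skip k (i + 1)) - x i (skip k i))
  let T : ℕ → R := fun k => ∏ i : Fin n,
    (x i (skip k i + 1) - x i (skip k i))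
  have hzero : D 0 = T 0 := by simp [D, T, skip]
  have hlast : D (n + 1) = T n := Finset.prod_congr rfl fun i _ => by
    rw [skip_of_lt (by lia), skip_of_lt (by lia), skip_of_lt i.2]
  have hmid : ∀ k < n, D (k + 1) = T (k + 1) + T k := fun k hk => by
    refine (Finset.prod_add_prod_eq (Finset.mem_univ ⟨k, hk⟩) ?_ (fun i _ hi => ?_)
      fun i _ hi => ?_).symm
    · rw [skip_of_lt k.lt_succ_self, skip_of_le le_rfl, skip_of_le le_rfl, sub_add_sub_cancel']
    all_goals
      rcases Nat.lt_or_gt_of_ne fun h => hi (Fin.ext h) with h | h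
      · simp only [skip_of_lt h, skip_of_lt (Nat.lt_succ_of_lt h), skip_of_lt (Nat.succ_lt_succ h)]
      · simp only [skip_of_le h, skip_of_le h.le, skip_of_le (Nat.le_succ_of_le h)]
  have hsum : ∀ m ≤ n, ∑ k ∈ Finset.range (m + 1), (-1) ^ k * D k = (-1) ^ m * T m := by
    intro m hm
    induction m with
    | zero => simp [hzero]
    | succ m ih =>
      rw [Finset.sum_range_succ, ih (by lia), hmid m hm]
      ring
  change ∑ k ∈ Finset.range (n + 1 + 1), (-1) ^ k * D k = 0
  rw [Finset.sum_range_succ, hsum n le_rfl, hlast]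
  ring

/-- The indicator function of the half of the sphere on which the `i`-th coordinate is nonnegative,
viewed as a cochain of degree zero. -/
def halfIndicator (i : Fin n) (x : Sphere n) : ℤ := if 0 ≤ coord i x then 1 else 0

/-- The contribution to the degree of a small simplex with vertices `a 0, …, a n`. The coboundaries
of the cochains `halfIndicator i` have a cup product supported near the two points of the sphere at
which all `coord i` vanish, and the factor `1 ≤ height` selects the point opposite to `base`. -/
def simplexDegree (a : ℕ → Sphere n) : ℤ :=
  if 1 ≤ height (a 0) then ∏ i : Fin n, (halfIndicator i (a (i + 1)) - halfIndicator i (a i)) else 0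

lemma simplexDegree_congr {a b : ℕ → Sphere n} (h : ∀ j ≤ n, a j = b j) :
    simplexDegree a = simplexDegree b := by
  unfold simplexDegree
  rw [h 0 n.zero_le, Finset.prod_congr rfl fun i _ => by rw [h i i.2.le, h (i + 1) i.2]]

lemma one_le_height_of_simplexDegree_ne_zero {a : ℕ → Sphere n} (h : simplexDegree a ≠ 0) :
    1 ≤ height (a 0) :=
  of_not_not fun hlt => h (if_neg hlt)

lemma halfIndicator_eq_of_dist_le {x y z : Sphere n} {i : Fin n} (hx : threshold n ≤ |coord i x|)
    (hy : dist x y ≤ threshold n / 2) (hz : dist x z ≤ threshold n / 2) :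
    halfIndicator i y = halfIndicator i z := by
  have hpos := threshold_pos (n := n)
  have hy' := abs_le.1 ((abs_coord_sub_le_dist i x y).trans hy)
  have hz' := abs_le.1 ((abs_coord_sub_le_dist i x z).trans hz)
  unfold halfIndicator
  rcases abs_cases (coord i x) with ⟨h, -⟩ | ⟨h, -⟩ <;> rw [h] at hx
  · rw [if_pos (by linarith), if_pos (by linarith)]
  · rw [if_neg (by linarith), if_neg (by linarith)]

lemma sum_neg_one_pow_mul_simplexDegree_skip {a : ℕ → Sphere n}
    (h : ∀ j k, dist (a j) (a k) ≤ threshold n / 2) :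
    ∑ k ∈ Finset.range (n + 2), (-1) ^ k * simplexDegree (fun j => a (skip k j)) = 0 := by
  by_cases hside : 1 ≤ height (a 0) ↔ 1 ≤ height (a 1)
  · have hfirst : ∀ k, 1 ≤ height (a (skip k 0)) ↔ 1 ≤ height (a 0) := fun k => by
      cases k with
      | zero => exact hside.symm
      | succ k => rfl
    by_cases h₀ : 1 ≤ height (a 0)
    · simpa only [simplexDegree, hfirst, if_pos h₀] using
        sum_neg_one_pow_mul_prod_skip fun i j => halfIndicator i (a j)
    · simp only [simplexDegree, hfirst, if_neg h₀, mul_zero, Finset.sum_const_zero]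
  · have hle := threshold_le (n := n)
    have hheight := abs_le.1 ((abs_height_sub_le_dist (a 0) (a 1)).trans (h 0 1))
    have hmiddle : |height (a 0) - 1| ≤ 1 / 2 := by
      rw [abs_le]
      by_cases h₀ : 1 ≤ height (a 0) <;> by_cases h₁ : 1 ≤ height (a 1) <;>
        simp only [h₀, h₁, not_true_eq_false] at hside <;> constructor <;> linarith
    obtain ⟨i, hi⟩ := exists_threshold_le_abs_coord hmiddle
    refine Finset.sum_eq_zero fun k _ => mul_eq_zero_of_right _ (ite_eq_right_iff.2 fun _ => ?_)
    exact Finset.prod_eq_zero (Finset.mem_univ i) <| sub_eq_zero.2 <|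
      halfIndicator_eq_of_dist_le hi (h 0 _) (h 0 _)

section Lattice

open Equiv

variable {m : ℕ}

/-- The vertices of the simplex of a permutation in the Kuhn triangulation of the unit cube. -/
def corner (π : Perm (Fin m)) (j : ℕ) (c : Fin m) : ℤ := if (π.symm c : ℕ) < j then 1 else 0

lemma corner_apply (π : Perm (Fin m)) (j : ℕ) (i : Fin m) :
    corner π j (π i) = if (i : ℕ) < j then 1 else 0 := by
  rw [corner, π.symm_apply_apply]

lemma corner_zero (π : Perm (Fin m)) : corner π 0 = 0 := funext fun _ => if_neg (Nat.not_lt_zero _)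

lemma corner_eq_zero_or_one (π : Perm (Fin m)) (j : ℕ) (c : Fin m) :
    corner π j c = 0 ∨ corner π j c = 1 :=
  (ite_eq_or_eq _ _ _).symm

lemma dist_add_corner_le (v : Fin m → ℤ) (π : Perm (Fin m)) (j k : ℕ) :
    dist (v + corner π j) (v + corner π k) ≤ 1 := by
  refine (dist_pi_le_iff zero_le_one).2 fun c => ?_
  rcases corner_eq_zero_or_one π j c with h | h <;>
    rcases corner_eq_zero_or_one π k c with h' | h' <;>
    simp [h, h']

lemma corner_mul_swap (π : Perm (Fin m)) {j k : ℕ} (hk : k + 1 < m) (hj : j ≠ k + 1) :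
    corner (π * swap ⟨k, by lia⟩ ⟨k + 1, hk⟩) j = corner π j := by
  set s : Perm (Fin m) := swap ⟨k, by lia⟩ ⟨k + 1, hk⟩ with hs
  funext c
  obtain ⟨i, rfl⟩ := (π * s).surjective c
  rw [corner_apply, Perm.mul_apply, corner_apply, hs, swap_apply_def]
  split_ifs <;> simp_all [Fin.ext_iff] <;> lia

lemma corner_succ (π : Perm (Fin (n + 1))) {j : ℕ} (hj : j ≤ n) :
    corner π (j + 1) = Pi.single (π 0) 1 + corner (π * finRotate (n + 1)) j := by
  funext c
  obtain ⟨i, rfl⟩ := (π * finRotate (n + 1)).surjective c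
  rw [Pi.add_apply, corner_apply, Perm.mul_apply, corner_apply]
  cases i using Fin.lastCases with
  | last => simp [hj]
  | cast i =>
    have : finRotate (n + 1) i.castSucc = i.succ := by simp
    rw [this, Pi.single_eq_of_ne (by simp)]
    simp

lemma sum_sign_mul_eq_zero_of_mul_swap {α : Type*} [Fintype α] [DecidableEq α] {Φ : Perm α → ℤ}
    {a b : α} (hab : a ≠ b) (h : ∀ π, Φ (π * swap a b) = Φ π) :
    ∑ π : Perm α, (Perm.sign π : ℤ) * Φ π = 0 := by
  refine self_eq_neg.1 ?_
  rw [← Finset.sum_neg_distrib, ← Equiv.sum_comp (Equiv.mulRight (swap a b))]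
  simp [Perm.sign_mul, Perm.sign_swap hab, h]

/-- Neighbouring lattice points have images which are close on the scale of `threshold n`. -/
def IsFineOnLattice (F : (Fin m → ℤ) → Sphere n) : Prop :=
  ∀ v w, dist v w ≤ 1 → dist (F v) (F w) ≤ threshold n / 2

/-- The contribution to the degree of the simplex of `π` in the lattice cube with corner `v`. -/
def cornerDegree (F : (Fin m → ℤ) → Sphere n) (π : Perm (Fin m)) (v : Fin m → ℤ) : ℤ :=
  simplexDegree fun j => F (v + corner π j)

theorem sum_sign_mul_cornerDegree_sub {F : (Fin (n + 1) → ℤ) → Sphere n}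
    (hF : IsFineOnLattice F) (v : Fin (n + 1) → ℤ) :
    ∑ π : Perm (Fin (n + 1)), (Perm.sign π : ℤ) *
      (cornerDegree F (π * finRotate (n + 1)) (v + Pi.single (π 0) 1) -
        cornerDegree F (π * finRotate (n + 1)) v) = 0 := by
  let S : ℕ → ℤ := fun k => ∑ π : Perm (Fin (n + 1)), (Perm.sign π : ℤ) *
    simplexDegree fun j => F (v + corner π (skip k j))
  have hsum : ∑ k ∈ Finset.range (n + 2), (-1) ^ k * S k = 0 := by
    simp only [S, Finset.mul_sum, mul_left_comm _ (Perm.sign _ : ℤ)]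
    rw [Finset.sum_comm]
    simp only [← Finset.mul_sum]
    refine Finset.sum_eq_zero fun π _ => mul_eq_zero_of_right _ ?_
    exact sum_neg_one_pow_mul_simplexDegree_skip fun j k => hF _ _ (dist_add_corner_le v π j k)
  have hinner : ∀ k < n, S (k + 1) = 0 := fun k hk => by
    refine sum_sign_mul_eq_zero_of_mul_swap (a := ⟨k, by lia⟩) (b := ⟨k + 1, by lia⟩) (by simp)
      fun π => ?_
    have hskip : ∀ j, skip (k + 1) j ≠ k + 1 := fun j => by unfold skip; split_ifs <;> lia
    exact congrArg _ (funext fun j => by rw [corner_mul_swap π (Nat.succ_lt_succ hk) (hskip j)])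
  have hfirst : S 0 = ∑ π : Perm (Fin (n + 1)), (Perm.sign π : ℤ) *
      cornerDegree F (π * finRotate (n + 1)) (v + Pi.single (π 0) 1) :=
    Finset.sum_congr rfl fun π _ => congrArg _ <| simplexDegree_congr fun j hj => by
      rw [skip_of_le j.zero_le, corner_succ π hj, add_assoc]
  have hlast : S (n + 1) = (-1) ^ n * ∑ π : Perm (Fin (n + 1)), (Perm.sign π : ℤ) *
      cornerDegree F (π * finRotate (n + 1)) v := by
    have hface : ∀ π, (simplexDegree fun j => F (v + corner π (skip (n + 1) j))) =
        cornerDegree F π v := fun π =>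
      simplexDegree_congr fun j hj => by rw [skip_of_lt (Nat.lt_succ_of_le hj)]
    simp only [S, hface]
    rw [← Equiv.sum_comp (Equiv.mulRight (finRotate (n + 1))), Finset.mul_sum]
    refine Finset.sum_congr rfl fun π _ => ?_
    simp [Perm.sign_mul, mul_left_comm, mul_comm]
  rw [Finset.sum_range_succ, Finset.sum_range_succ', Finset.sum_eq_zero fun k hk => by
    rw [hinner k (Finset.mem_range.1 hk), mul_zero]] at hsum
  simp only [mul_sub, Finset.sum_sub_distrib]
  rw [← hfirst, sub_eq_zero]
  have hsign : (-1 : ℤ) ^ (n + 1) * (-1) ^ n = -1 := by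
    rw [← pow_add]; exact Odd.neg_one_pow ⟨n, by ring⟩
  rw [hlast, ← mul_assoc, hsign] at hsum
  linarith

lemma one_le_height_of_cornerDegree_ne_zero {F : (Fin m → ℤ) → Sphere n} {π : Perm (Fin m)}
    {v : Fin m → ℤ} (h : cornerDegree F π v ≠ 0) : 1 ≤ height (F v) := by
  simpa [corner_zero] using one_le_height_of_simplexDegree_ne_zero h

lemma cornerDegree_eq_zero {F : (Fin m → ℤ) → Sphere n} (π : Perm (Fin m)) {v : Fin m → ℤ}
    (h : F v = base) : cornerDegree F π v = 0 := by
  by_contra hne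
  have := one_le_height_of_cornerDegree_ne_zero hne
  rw [h, height_base] at this
  norm_num at this

lemma finite_support_cornerDegree {α : Type*} {F : (Fin m → ℤ) → Sphere n} {g : α → Fin m → ℤ}
    (h : {w | F (g w) ≠ base}.Finite) (π : Perm (Fin m)) :
    (Function.support fun w => cornerDegree F π (g w)).Finite :=
  h.subset fun _ hw hbase => hw (cornerDegree_eq_zero π hbase)

/-- The degree of a map from the lattice to the sphere which is trivial outside a finite set: the
sum of the contributions of all simplices of the Kuhn triangulation. -/
def degree (G : (Fin n → ℤ) → Sphere n) : ℤ :=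
  ∑ π : Perm (Fin n), (Perm.sign π : ℤ) * ∑ᶠ w, cornerDegree G π w

lemma corner_decomposeFin_symm_mul_finRotate (e : Perm (Fin n)) {j : ℕ} (hj : j ≤ n) :
    corner (Perm.decomposeFin.symm (0, e) * finRotate (n + 1)) j =
      (Fin.cons 0 (corner e j) : Fin (n + 1) → ℤ) := by
  set π := Perm.decomposeFin.symm (0, e) * finRotate (n + 1) with hπ
  have hlast : π (Fin.last n) = 0 := by simp [hπ]
  have hcast : ∀ i, π i.castSucc = (e i).succ := by simp [hπ]
  refine funext (Fin.cases ?_ (e.surjective.forall.2 fun i => ?_))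
  · rw [← hlast, corner_apply, hlast]
    simp [hj]
  · rw [← hcast, corner_apply, hcast]
    simp [corner_apply]

lemma cornerDegree_cons (F : (Fin (n + 1) → ℤ) → Sphere n) (e : Perm (Fin n)) (t : ℤ)
    (w : Fin n → ℤ) :
    cornerDegree F (Perm.decomposeFin.symm (0, e) * finRotate (n + 1)) (Fin.cons t w) =
      cornerDegree (fun w => F (Fin.cons t w)) e w :=
  simplexDegree_congr fun j hj => by
    rw [corner_decomposeFin_symm_mul_finRotate e hj, ← Matrix.vecCons, ← Matrix.vecCons,
      Matrix.cons_add_cons, add_zero, Matrix.vecCons]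

lemma cons_add (t : ℤ) (w : Fin n → ℤ) (u : Fin (n + 1) → ℤ) :
    (Fin.cons t w : Fin (n + 1) → ℤ) + u = Fin.cons (t + u 0) (w + Fin.tail u) :=
  funext (Fin.cases rfl fun _ => rfl)

lemma finsum_cons_add (φ : (Fin (n + 1) → ℤ) → ℤ) (t : ℤ) (u : Fin (n + 1) → ℤ) :
    ∑ᶠ w : Fin n → ℤ, φ (Fin.cons t w + u) = ∑ᶠ w : Fin n → ℤ, φ (Fin.cons (t + u 0) w) := by
  simp only [cons_add]
  exact finsum_comp_equiv (Equiv.addRight (Fin.tail u)) (f := fun w => φ (Fin.cons (t + u 0) w))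

lemma sum_perm_succ_eq_of_apply_zero_ne {Φ : Perm (Fin (n + 1)) → ℤ}
    (h : ∀ π : Perm (Fin (n + 1)), π 0 ≠ 0 → Φ π = 0) :
    ∑ π : Perm (Fin (n + 1)), (Perm.sign π : ℤ) * Φ π =
      ∑ e : Perm (Fin n), (Perm.sign e : ℤ) * Φ (Perm.decomposeFin.symm (0, e)) := by
  rw [← Equiv.sum_comp Perm.decomposeFin.symm, Fintype.sum_prod_type, Fin.sum_univ_succ,
    Finset.sum_eq_zero fun p _ => Finset.sum_eq_zero fun e _ => by rw [h _ (by simp), mul_zero]]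
  simp [Perm.decomposeFin.symm_sign]

theorem degree_slice_succ {F : (Fin (n + 1) → ℤ) → Sphere n} (hF : IsFineOnLattice F)
    (hfin : ∀ t : ℤ, {w : Fin n → ℤ | F (Fin.cons t w) ≠ base}.Finite) (t : ℤ) :
    degree (fun w => F (Fin.cons (t + 1) w)) = degree fun w => F (Fin.cons t w) := by
  let D : Perm (Fin (n + 1)) → ℤ → ℤ := fun π s =>
    ∑ᶠ w : Fin n → ℤ, cornerDegree F (π * finRotate (n + 1)) (Fin.cons s w)
  have hslice : ∀ s e, ∑ᶠ w, cornerDegree (fun w => F (Fin.cons s w)) e w =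
      D (Perm.decomposeFin.symm (0, e)) s := fun s e =>
    finsum_congr fun w => (cornerDegree_cons F e s w).symm
  have hsupp : ∀ (u : Fin (n + 1) → ℤ) (π : Perm (Fin (n + 1))),
      (Function.support fun w : Fin n → ℤ => cornerDegree F π (Fin.cons t w + u)).Finite :=
    fun u π => finite_support_cornerDegree (by
      simp only [cons_add]
      exact (hfin (t + u 0)).preimage (Equiv.addRight (Fin.tail u)).injective.injOn) π
  have hsupp₀ := fun π => finite_support_cornerDegree (hfin t) π
  have hdiff : ∀ π : Perm (Fin (n + 1)), ∑ᶠ w : Fin n → ℤ, (Perm.sign π : ℤ) *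
      (cornerDegree F (π * finRotate (n + 1)) (Fin.cons t w + Pi.single (π 0) 1) -
        cornerDegree F (π * finRotate (n + 1)) (Fin.cons t w)) = Perm.sign π *
      (D π (t + (Pi.single (π 0) 1 : Fin (n + 1) → ℤ) 0) - D π t) := fun π => by
    rw [← mul_finsum, finsum_sub_distrib (hsupp _ _) (hsupp₀ _), finsum_cons_add]
  have hsum : ∑ π : Perm (Fin (n + 1)), (Perm.sign π : ℤ) *
      (D π (t + (Pi.single (π 0) 1 : Fin (n + 1) → ℤ) 0) - D π t) = 0 := by
    simp only [← hdiff]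
    rw [← finsum_sum_comm _ _ fun π _ => ?_]
    · simp only [sum_sign_mul_cornerDegree_sub hF, finsum_zero]
    · exact (((hsupp _ _).union (hsupp₀ _)).subset (Function.support_sub _ _)).subset
        (Function.support_mul_subset_right _ _)
  rw [sum_perm_succ_eq_of_apply_zero_ne fun π hπ => by
    rw [Pi.single_eq_of_ne hπ.symm, add_zero, sub_self]] at hsum
  simpa [mul_sub, sub_eq_zero, degree, hslice] using hsum

lemma degree_slice_eq {F : (Fin (n + 1) → ℤ) → Sphere n} (hF : IsFineOnLattice F)
    (hfin : ∀ t : ℤ, {w : Fin n → ℤ | F (Fin.cons t w) ≠ base}.Finite) (t : ℕ) :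
    degree (fun w => F (Fin.cons (t : ℤ) w)) = degree fun w => F (Fin.cons 0 w) := by
  induction t with
  | zero => rfl
  | succ t ih => rw [← ih, Nat.cast_succ, degree_slice_succ hF hfin]

lemma finsum_sub_right {A M : Type*} [AddGroup A] [AddCommMonoid M] (φ : A → M) (u : A) :
    ∑ᶠ w, φ (w - u) = ∑ᶠ w, φ w :=
  finsum_comp_equiv (Equiv.subRight u)

lemma degree_eq_add {G G₁ G₂ : (Fin n → ℤ) → Sphere n} (hfin₁ : {w | G₁ w ≠ base}.Finite)
    (hfin₂ : {w | G₂ w ≠ base}.Finite) {a : Fin n} {R : ℤ}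
    (h₁ : ∀ w, w a ≤ R → G w = G₁ w) (h₂ : ∀ w, R ≤ w a → G w = G₂ (w - Pi.single a R))
    (hbase₁ : ∀ w, R ≤ w a → G₁ w = base) (hbase₂ : ∀ w, w a ≤ 0 → G₂ w = base) :
    degree G = degree G₁ + degree G₂ := by
  have hadd : ∀ π w, cornerDegree G π w =
      cornerDegree G₁ π w + cornerDegree G₂ π (w - Pi.single a R) := by
    intro π w
    have hcorner := fun j => corner_eq_zero_or_one π j a
    rcases lt_or_ge (w a) R with h | h
    · rw [cornerDegree_eq_zero π (hbase₂ (w - _) (by simpa using h.le)), add_zero]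
      refine simplexDegree_congr fun j _ => h₁ _ ?_
      rcases hcorner j with hj | hj <;> simp only [Pi.add_apply, hj] <;> lia
    · rw [cornerDegree_eq_zero π (hbase₁ w h), zero_add]
      refine simplexDegree_congr fun j _ => ?_
      rw [h₂, sub_add_eq_add_sub]
      rcases hcorner j with hj | hj <;> simp only [Pi.add_apply, hj] <;> lia
  unfold degree
  rw [← Finset.sum_add_distrib]
  refine Finset.sum_congr rfl fun π _ => ?_
  rw [← mul_add, ← finsum_sub_right (cornerDegree G₂ π) (Pi.single a R),
    finsum_congr (hadd π), finsum_add_distrib]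
  · exact finite_support_cornerDegree hfin₁ π
  · exact finite_support_cornerDegree (hfin₂.preimage (Equiv.subRight _).injective.injOn) π

end Lattice

/-- The point of the cube with coordinates `w a / N a`, clamped to the unit interval. -/
def gridMap (N : Fin n → ℕ) (w : Fin n → ℤ) : Fin n → I :=
  fun a => Set.projIcc 0 1 zero_le_one (w a / N a)

lemma gridMap_mem_boundary {N : Fin n → ℕ} {w : Fin n → ℤ} {a : Fin n} (hN : 0 < N a)
    (h : w a ≤ 0 ∨ N a ≤ w a) : gridMap N w ∈ Cube.boundary (Fin n) := by
  have hpos : (0 : ℝ) < N a := by exact_mod_cast hN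
  refine ⟨a, h.imp (fun h => ?_) fun h => ?_⟩
  · exact Set.projIcc_of_le_left _
      (div_nonpos_of_nonpos_of_nonneg (by exact_mod_cast h) hpos.le)
  · exact Set.projIcc_of_right_le _ ((one_le_div hpos).2 (by exact_mod_cast h))

lemma finite_gridMap_notMem_boundary {N : Fin n → ℕ} (hN : ∀ a, 0 < N a) :
    {w | gridMap N w ∉ Cube.boundary (Fin n)}.Finite := by
  refine (Set.finite_Icc (0 : Fin n → ℤ) fun a => (N a : ℤ)).subset fun w hw =>
    ⟨fun a => ?_, fun a => ?_⟩ <;>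
  refine not_lt.1 fun h => hw (gridMap_mem_boundary (hN a) ?_)
  exacts [.inl h.le, .inr h.le]

lemma finite_apply_gridMap_ne {N : Fin n → ℕ} (hN : ∀ a, 0 < N a)
    (f : Ω^ (Fin n) (Sphere n) base) : {w | f (gridMap N w) ≠ base}.Finite :=
  (finite_gridMap_notMem_boundary hN).subset fun _ hw hb => hw (GenLoop.boundary f _ hb)

lemma dist_projIcc_div_le {M N : ℕ} (hM : 0 < M) (hMN : M ≤ N) {x y : ℤ} (h : dist x y ≤ 1) :
    dist (Set.projIcc (0 : ℝ) 1 zero_le_one (x / N)) (Set.projIcc 0 1 zero_le_one (y / N)) ≤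
      1 / M := by
  have : (0 : ℝ) < M := by exact_mod_cast hM
  refine (Set.abs_projIcc_sub_projIcc zero_le_one).trans ?_
  rw [← sub_div, abs_div, Nat.abs_cast]
  have h' : |(x : ℝ) - y| ≤ 1 := h
  gcongr

lemma dist_gridMap_le {N : Fin n → ℕ} {M : ℕ} (hM : 0 < M) (hMN : ∀ a, M ≤ N a) {v w : Fin n → ℤ}
    (h : dist v w ≤ 1) : dist (gridMap N v) (gridMap N w) ≤ 1 / M :=
  (dist_pi_le_iff (by positivity)).2 fun a =>
    dist_projIcc_div_le hM (hMN a) ((dist_le_pi_dist v w a).trans h)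

/-- A loop has degree `K` if its restriction to every sufficiently divisible grid has degree `K`. -/
def HasDegree (f : Ω^ (Fin n) (Sphere n) base) (K : ℤ) : Prop :=
  ∃ N₀ : ℕ, 0 < N₀ ∧
    ∀ N : Fin n → ℕ, (∀ a, N₀ ∣ N a ∧ 0 < N a) → degree (fun w => f (gridMap N w)) = K

lemma HasDegree.unique {f : Ω^ (Fin n) (Sphere n) base} {K L : ℤ} (hK : HasDegree f K)
    (hL : HasDegree f L) : K = L := by
  obtain ⟨N₁, hN₁, hK⟩ := hK
  obtain ⟨N₂, hN₂, hL⟩ := hL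
  rw [← hK (fun _ => N₁ * N₂) fun _ => ⟨dvd_mul_right _ _, by positivity⟩,
    hL _ fun _ => ⟨dvd_mul_left _ _, by positivity⟩]

lemma degree_const_base : degree (fun _ : Fin n → ℤ => base) = 0 :=
  Finset.sum_eq_zero fun π _ => by simp [cornerDegree_eq_zero]

lemma hasDegree_const : HasDegree (GenLoop.const : Ω^ (Fin n) (Sphere n) base) 0 :=
  ⟨1, one_pos, fun _ _ => degree_const_base⟩

theorem HasDegree.of_homotopic {f g : Ω^ (Fin n) (Sphere n) base} {K : ℤ} (hf : HasDegree f K)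
    (h : GenLoop.Homotopic f g) : HasDegree g K := by
  obtain ⟨N₀, hN₀, hdeg⟩ := hf
  obtain ⟨H, hc, h0, h1, hb⟩ := exists_continuous_of_homotopic h
  obtain ⟨M, hM, hfine⟩ :=
    exists_nat_forall_dist_le_div hc zero_le_one (half_pos (threshold_pos (n := n)))
  refine ⟨N₀ * M, by positivity, fun N hN => ?_⟩
  rw [← hdeg N fun a => ⟨(dvd_mul_right _ _).trans (hN a).1, (hN a).2⟩]
  have hMN : ∀ a, M ≤ N a := fun a =>
    Nat.le_of_dvd (hN a).2 ((dvd_mul_left _ _).trans (hN a).1)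
  let F : (Fin (n + 1) → ℤ) → Sphere n := fun v =>
    H (Set.projIcc 0 1 zero_le_one (v 0 / M), gridMap N (Fin.tail v))
  have hF : IsFineOnLattice F := fun v w hvw => hfine M le_rfl _ _ <| max_le
    (dist_projIcc_div_le hM le_rfl ((dist_le_pi_dist v w 0).trans hvw))
    (dist_gridMap_le hM hMN <| (dist_pi_le_iff zero_le_one).2 fun a =>
      (dist_le_pi_dist v w a.succ).trans hvw)
  have hfin : ∀ t : ℤ, {w : Fin n → ℤ | F (Fin.cons t w) ≠ base}.Finite := fun t =>
    (finite_gridMap_notMem_boundary fun a => (hN a).2).subset fun w hw hbd => hw (hb _ _ hbd)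
  have hstart : (fun w => f (gridMap N w)) = fun w => F (Fin.cons 0 w) := funext fun w => by
    simp [F, h0]
  have hend : (fun w => g (gridMap N w)) = fun w => F (Fin.cons (M : ℤ) w) := funext fun w => by
    simp [F, hM.ne', h1]
  rw [hstart, hend, degree_slice_eq hF hfin]

lemma projIcc_two_mul_projIcc {x : ℝ} (h : x ≤ 1 / 2) :
    Set.projIcc (0 : ℝ) 1 zero_le_one (2 * Set.projIcc (0 : ℝ) 1 zero_le_one x) =
      Set.projIcc 0 1 zero_le_one (2 * x) := by
  rcases le_total x 0 with h0 | h0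
  · rw [Set.projIcc_of_le_left _ h0, Set.projIcc_of_le_left _ (by simp),
      Set.projIcc_of_le_left _ (by linarith)]
  · rw [Set.projIcc_of_mem _ (⟨h0, by linarith⟩ : x ∈ Set.Icc (0 : ℝ) 1)]

lemma projIcc_two_mul_projIcc_sub_one {x : ℝ} (h : 1 / 2 ≤ x) :
    Set.projIcc (0 : ℝ) 1 zero_le_one (2 * Set.projIcc (0 : ℝ) 1 zero_le_one x - 1) =
      Set.projIcc 0 1 zero_le_one (2 * x - 1) := by
  rcases le_total x 1 with h1 | h1
  · rw [Set.projIcc_of_mem _ (⟨by linarith, h1⟩ : x ∈ Set.Icc (0 : ℝ) 1)]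
  · rw [Set.projIcc_of_right_le _ h1, Set.projIcc_of_right_le _ (by norm_num),
      Set.projIcc_of_right_le _ (by linarith)]

lemma projIcc_half_le_iff {R : ℕ} (hR : 0 < R) {x : ℤ} :
    (Set.projIcc (0 : ℝ) 1 zero_le_one (x / (2 * R : ℕ)) : ℝ) ≤ 1 / 2 ↔ x ≤ R := by
  have : (0 : ℝ) < R := by exact_mod_cast hR
  rw [← Int.cast_le (R := ℝ), Set.coe_projIcc, max_le_iff, min_le_iff, div_le_iff₀ (by simpa)]
  push_cast
  constructor
  · rintro ⟨-, h | h⟩ <;> linarith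
  · exact fun h => ⟨by norm_num, .inr (by linarith)⟩

section GridMap

variable {a : Fin n} {N : Fin n → ℕ} {R : ℕ}

lemma transAt_gridMap_of_le (hN : N a = 2 * R) (hR : 0 < R) (f g : Ω^ (Fin n) (Sphere n) base)
    {w : Fin n → ℤ} (hw : w a ≤ R) :
    GenLoop.transAt a f g (gridMap N w) = f (gridMap (Function.update N a R) w) := by
  have : (0 : ℝ) < R := by exact_mod_cast hR
  have hle : (w a : ℝ) / (2 * R : ℕ) ≤ 1 / 2 := by
    rw [div_le_iff₀ (by simpa)]
    have hw' : (w a : ℝ) ≤ R := by exact_mod_cast hw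
    push_cast; linarith
  have hdiv : 2 * ((w a : ℝ) / (2 * R : ℕ)) = w a / R := by push_cast; field_simp
  rw [transAt_apply, if_pos (by rw [gridMap, hN, projIcc_half_le_iff hR]; exact hw)]
  refine congrArg f (funext fun b => ?_)
  rcases eq_or_ne b a with rfl | hb
  · simp only [gridMap, hN, Function.update_self]
    rw [projIcc_two_mul_projIcc hle, hdiv]
  · simp only [gridMap, Function.update_of_ne hb]

lemma transAt_gridMap_of_lt (hN : N a = 2 * R) (hR : 0 < R) (f g : Ω^ (Fin n) (Sphere n) base)
    {w : Fin n → ℤ} (hw : R < w a) :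
    GenLoop.transAt a f g (gridMap N w) =
      g (gridMap (Function.update N a R) (w - Pi.single a (R : ℤ))) := by
  have : (0 : ℝ) < R := by exact_mod_cast hR
  have hle : 1 / 2 ≤ (w a : ℝ) / (2 * R : ℕ) := by
    rw [le_div_iff₀ (by simpa)]
    have hw' : (R : ℝ) < w a := by exact_mod_cast hw
    push_cast; linarith
  have hdiv : 2 * ((w a : ℝ) / (2 * R : ℕ)) - 1 = (w a - R) / R := by push_cast; field_simp
  rw [transAt_apply, if_neg (by rw [gridMap, hN, projIcc_half_le_iff hR]; exact hw.not_ge)]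
  refine congrArg g (funext fun b => ?_)
  rcases eq_or_ne b a with rfl | hb
  · simp only [gridMap, hN, Function.update_self, Pi.sub_apply, Pi.single_eq_same]
    rw [projIcc_two_mul_projIcc_sub_one hle, hdiv]
    push_cast; rfl
  · simp only [gridMap, Function.update_of_ne hb, Pi.sub_apply, Pi.single_eq_of_ne hb, sub_zero]

lemma degree_transAt_gridMap (hN : N a = 2 * R) (hpos : ∀ b, 0 < N b)
    (f g : Ω^ (Fin n) (Sphere n) base) :
    degree (fun w => GenLoop.transAt a f g (gridMap N w)) =
      degree (fun w => f (gridMap (Function.update N a R) w)) +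
        degree fun w => g (gridMap (Function.update N a R) w) := by
  have hR : 0 < R := by have := hpos a; lia
  have hpos' : ∀ b, 0 < Function.update N a R b := fun b => by
    rcases eq_or_ne b a with rfl | hb
    · simpa
    · simpa [hb] using hpos b
  have hright : ∀ w : Fin n → ℤ, R ≤ w a →
      f (gridMap (Function.update N a R) w) = base := fun w hw =>
    GenLoop.boundary f _ (gridMap_mem_boundary (hpos' a) (.inr (by simpa)))
  have hleft : ∀ w : Fin n → ℤ, w a ≤ 0 →
      g (gridMap (Function.update N a R) w) = base := fun w hw =>
    GenLoop.boundary g _ (gridMap_mem_boundary (hpos' a) (.inl hw))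
  refine degree_eq_add (finite_apply_gridMap_ne hpos' f) (finite_apply_gridMap_ne hpos' g)
    (fun w hw => transAt_gridMap_of_le hN hR f g hw) (fun w hw => ?_) hright hleft
  rcases hw.lt_or_eq with hlt | heq
  · exact transAt_gridMap_of_lt hN hR f g hlt
  · rw [transAt_gridMap_of_le hN hR f g heq.ge, hright w hw, hleft _ (by simp [heq])]

theorem HasDegree.transAt (a : Fin n) {f g : Ω^ (Fin n) (Sphere n) base} {K L : ℤ}
    (hf : HasDegree f K) (hg : HasDegree g L) : HasDegree (GenLoop.transAt a f g) (K + L) := by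
  obtain ⟨N₁, hN₁, hf⟩ := hf
  obtain ⟨N₂, hN₂, hg⟩ := hg
  refine ⟨2 * (N₁ * N₂), by positivity, fun N hN => ?_⟩
  obtain ⟨P, hP⟩ := (hN a).1
  have hR : N a = 2 * (N₁ * N₂ * P) := by rw [hP, mul_assoc]
  have hdvd : ∀ b, N₁ * N₂ ∣ Function.update N a (N₁ * N₂ * P) b ∧
      0 < Function.update N a (N₁ * N₂ * P) b := fun b => by
    rcases eq_or_ne b a with rfl | hb
    · have := (hN b).2
      rw [Function.update_self]
      exact ⟨dvd_mul_right _ _, by lia⟩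
    · rw [Function.update_of_ne hb]
      exact ⟨(dvd_mul_left _ _).trans (hN b).1, (hN b).2⟩
  rw [degree_transAt_gridMap hR fun b => (hN b).2,
    hf _ fun b => ⟨(dvd_mul_right _ _).trans (hdvd b).1, (hdvd b).2⟩,
    hg _ fun b => ⟨(dvd_mul_left _ _).trans (hdvd b).1, (hdvd b).2⟩]

end GridMap

lemma halfIndicator_collapse {y : Fin n → I} (hy : y ∉ Cube.boundary (Fin n)) (i : Fin n) :
    halfIndicator i (collapse y) = if 1 / 2 ≤ (y i : ℝ) then 1 else 0 := by
  have hpos : 0 < 2 * collapseVec y 0 / ‖collapseVec y‖ ^ 2 := by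
    have hne := mt collapseVec_zero_eq_zero_iff.1 hy
    have := norm_pos_iff.2 (collapseVec_ne_zero y)
    have := (collapseVec_zero_nonneg y).lt_of_ne' hne
    positivity
  refine if_congr ?_ rfl rfl
  rw [coord_collapse, mul_nonneg_iff_of_pos_left hpos]
  constructor <;> intro h <;> linarith

lemma height_collapse_of_eq_half {y : Fin n → I} (h : ∀ i, (y i : ℝ) = 1 / 2) :
    height (collapse y) = 2 := by
  have hcoord : ∀ i, coord i (collapse y) = 0 := fun i => by rw [coord_collapse, h]; norm_num
  have hsum := sum_coord_sq (collapse y)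
  have hne : height (collapse y) ≠ 0 := fun h0 => by
    obtain ⟨i, hi⟩ := collapse_eq_base_iff.1 (height_eq_zero_iff.1 h0)
    have := h i
    rcases hi with hi | hi <;> rw [hi] at this <;> norm_num at this
  simp only [hcoord, ne_eq, OfNat.ofNat_ne_zero, not_false_eq_true, zero_pow,
    Finset.sum_const_zero, zero_eq_mul, hne, false_or] at hsum
  linarith

section CollapseGrid

open Equiv

variable {N L : Fin n → ℕ}

lemma half_le_gridMap_iff (hN : ∀ a, N a = 2 * L a) (hL : ∀ a, 0 < L a)
    {w : Fin n → ℤ} {a : Fin n} :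
    1 / 2 ≤ (gridMap N w a : ℝ) ↔ L a ≤ w a := by
  have : (0 : ℝ) < L a := by exact_mod_cast hL a
  rw [gridMap, Set.coe_projIcc, le_max_iff, le_min_iff, hN, le_div_iff₀ (by simpa using hL a),
    ← Int.cast_le (R := ℝ)]
  push_cast
  constructor
  · rintro (h | h) <;> linarith
  · exact fun h => .inr ⟨by norm_num, by linarith⟩

lemma gridMap_center (hN : ∀ a, N a = 2 * L a) (hL : ∀ a, 0 < L a) (a : Fin n) :
    (gridMap N (fun a => L a) a : ℝ) = 1 / 2 := by
  have : (0 : ℝ) < L a := by exact_mod_cast hL a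
  have hdiv : ((L a : ℤ) : ℝ) / N a = 1 / 2 := by rw [hN a]; push_cast; field_simp
  rw [gridMap, hdiv, Set.coe_projIcc]
  norm_num

lemma cornerDegree_collapse_gridMap (hN : ∀ a, N a = 2 * L a) (hL : ∀ a, 0 < L a)
    (hfine : IsFineOnLattice fun w => collapse (gridMap N w))
    (π : Perm (Fin n)) (w : Fin n → ℤ) :
    cornerDegree (fun w => collapse (gridMap N w)) π w =
      if π = 1 ∧ w = fun a => (L a : ℤ) - 1 then 1 else 0 := by
  have hle := threshold_le (n := n)
  have hheight : ∀ v w : Fin n → ℤ, dist v w ≤ 1 →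
      |height (collapse (gridMap N v)) - height (collapse (gridMap N w))| ≤ 1 / 4 :=
    fun v w h => ((abs_height_sub_le_dist _ _).trans (hfine v w h)).trans (by linarith)
  by_cases hw : 1 ≤ height (collapse (gridMap N w))
  · have hind : ∀ i j, halfIndicator i (collapse (gridMap N (w + corner π j))) =
        if L i ≤ w i + corner π j i then 1 else 0 := fun i j => by
      have hpos := abs_le.1 (hheight (w + corner π 0) (w + corner π j) (dist_add_corner_le w π 0 j))
      rw [corner_zero, add_zero] at hpos
      rw [halfIndicator_collapse]
      · simp only [half_le_gridMap_iff hN hL, Pi.add_apply]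
      · intro hb
        rw [collapse_eq_base_iff.2 hb, height_base] at hpos
        linarith
    have hfactor : ∀ i, halfIndicator i (collapse (gridMap N (w + corner π (i + 1)))) -
        halfIndicator i (collapse (gridMap N (w + corner π i))) =
          if π.symm i = i ∧ w i = L i - 1 then 1 else 0 := fun i => by
      simp only [hind, corner, Fin.ext_iff]
      split_ifs <;> lia
    have hiff : (∀ i ∈ Finset.univ, π.symm i = i ∧ w i = L i - 1) ↔
        π = 1 ∧ w = fun a => (L a : ℤ) - 1 := by
      simp only [Finset.mem_univ, true_implies, forall_and, funext_iff]
      exact and_congr_left' (by rw [← inv_eq_one, Equiv.ext_iff]; rfl)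
    rw [cornerDegree, simplexDegree, corner_zero, add_zero, if_pos hw,
      Finset.prod_congr rfl fun i _ => hfactor i, Finset.prod_ite_zero, Finset.prod_const_one]
    simp only [hiff]
  · rw [if_neg, cornerDegree, simplexDegree, corner_zero, add_zero, if_neg hw]
    rintro ⟨-, rfl⟩
    have := abs_le.1 (hheight (fun a => (L a : ℤ) - 1) (fun a => L a)
      ((dist_pi_le_iff zero_le_one).2 fun a => by simp))
    rw [height_collapse_of_eq_half (gridMap_center hN hL)] at this
    linarith

end CollapseGrid

theorem hasDegree_collapseLoop : HasDegree (collapseLoop n) 1 := by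
  obtain ⟨M, hM, hfine⟩ := exists_nat_forall_dist_le_div (continuous_collapse (n := n))
    zero_le_one (half_pos (threshold_pos (n := n)))
  refine ⟨2 * M, by positivity, fun N hN => ?_⟩
  have hMN : ∀ a, M ≤ N a := fun a =>
    Nat.le_of_dvd (hN a).2 ((dvd_mul_left _ _).trans (hN a).1)
  choose L hL using fun a => (dvd_mul_right 2 M).trans (hN a).1
  have hdeg := cornerDegree_collapse_gridMap hL (fun a => by have := (hN a).2; have := hL a; lia)
    fun v w h => hfine M le_rfl _ _ (dist_gridMap_le hM hMN h)
  change degree (fun w => collapse (gridMap N w)) = 1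
  rw [degree, Finset.sum_eq_single 1 (fun π _ hπ => by simp [hdeg, hπ]) (by simp),
    finsum_eq_single _ (fun a => (L a : ℤ) - 1) fun w hw => by simp [hdeg, hw]]
  simp [hdeg]

/-! ### The homotopy groups -/

lemma exists_loopClass_eq_collapseClass_pow [Nonempty (Fin n)] (k : ℕ) :
    ∃ f, loopClass f = collapseClass n ^ k ∧ HasDegree f k := by
  induction k with
  | zero => exact ⟨GenLoop.const, loopClass_const, hasDegree_const⟩
  | succ k ih =>
    obtain ⟨f, hf, hdeg⟩ := ih
    let a := Classical.arbitrary (Fin n)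
    refine ⟨GenLoop.transAt a f (collapseLoop n), ?_, ?_⟩
    · rw [← loopClass_mul a, hf, pow_succ', collapseClass]
    · exact_mod_cast hdeg.transAt a hasDegree_collapseLoop

lemma not_isOfFinOrder_collapseClass [Nonempty (Fin n)] : ¬IsOfFinOrder (collapseClass n) := by
  intro h
  obtain ⟨k, hpos, hk⟩ := isOfFinOrder_iff_pow_eq_one.1 h
  obtain ⟨f, hf, hdeg⟩ := exists_loopClass_eq_collapseClass_pow (n := n) k
  rw [hk, ← loopClass_const, loopClass_eq_iff] at hf
  exact hpos.ne' (by exact_mod_cast (hdeg.of_homotopic hf).unique hasDegree_const)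

lemma zpowersHom_collapseClass_bijective [Nontrivial (Fin n)] :
    Function.Bijective (zpowersHom _ (collapseClass n)) :=
  ⟨injective_zpow_iff_not_isOfFinOrder.2 not_isOfFinOrder_collapseClass,
    mem_zpowers_collapseClass⟩

/-- The `n`-th homotopy group of the `n`-sphere is infinite cyclic, generated by `collapseClass`. -/
def piSphereEquiv [Nontrivial (Fin n)] :
    HomotopyGroup (Fin n) (Sphere n) base ≃* Multiplicative ℤ :=
  (MulEquiv.ofBijective _ zpowersHom_collapseClass_bijective).symm

/-- The `n`-th homotopy group of the shrinking wedge of `n`-spheres, computed by the projections to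
the spheres. -/
def piShrinkingWedgeEquiv [Nontrivial (Fin n)] :
    HomotopyGroup (Fin n) (ShrinkingWedge (base : Sphere n)) (ShrinkingWedge.point base) ≃*
      Multiplicative (ℕ → ℤ) :=
  (MulEquiv.ofBijective (ShrinkingWedge.piProj (Fin n) base)
      ⟨ShrinkingWedge.piProj_injective splitsFirst_sphere,
        ShrinkingWedge.piProj_surjective⟩).trans <|
    (MulEquiv.piCongrRight fun _ => piSphereEquiv).trans (MulEquiv.piMultiplicative _).symm

/-! ### The earring as a shrinking wedge -/

namespace ShrinkingWedge

variable {X : Type*} {x₀ : X}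

lemma exists_forall_ne_eq (x : ShrinkingWedge x₀) : ∃ k, ∀ j, j ≠ k → x.1 j = x₀ := by
  by_cases h : ∃ k, x.1 k ≠ x₀
  · obtain ⟨k, hk⟩ := h
    exact ⟨k, fun j hj => (x.2 j k hj).resolve_right hk⟩
  · push Not at h
    exact ⟨0, fun j _ => h j⟩

lemma incl_apply_self [TopologicalSpace X] (k : ℕ) (x : X) :
    (incl (x₀ := x₀) k x).1 k = x := if_pos rfl

instance [TopologicalSpace X] [T1Space X] [CompactSpace X] : CompactSpace (ShrinkingWedge x₀) := by
  refine isCompact_iff_compactSpace.1 (IsClosed.isCompact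
    (s := {x : ℕ → X | ∀ j k, j ≠ k → x j = x₀ ∨ x k = x₀}) ?_)
  simp only [Set.ofPred_forall]
  refine isClosed_iInter fun j => isClosed_iInter fun k => isClosed_iInter fun _ => ?_
  exact (isClosed_singleton.preimage (continuous_apply j)).union
    (isClosed_singleton.preimage (continuous_apply k))

end ShrinkingWedge

section Homeo

variable {j k : ℕ} {z : EuclideanSpace ℝ (Fin (n + 1))}

lemma norm_le_of_mem_hawSphere (hz : z ∈ hawSphere n j) : ‖z‖ ≤ 2 / j := by
  have hcenter : ‖EuclideanSpace.single (0 : Fin (n + 1)) ((1 : ℝ) / j)‖ = 1 / j := by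
    rw [PiLp.norm_single, Real.norm_of_nonneg (by positivity)]
  calc ‖z‖ ≤ ‖z - EuclideanSpace.single 0 ((1 : ℝ) / j)‖ +
        ‖EuclideanSpace.single (0 : Fin (n + 1)) ((1 : ℝ) / j)‖ := norm_le_norm_sub_add _ _
    _ = 1 / j + 1 / j := by rw [← dist_eq_norm, Metric.mem_sphere.1 hz, hcenter]
    _ = 2 / j := by ring

lemma inv_smul_mem_hawSphere_iff (hj : j ≠ 0) :
    (j : ℝ)⁻¹ • z ∈ hawSphere n j ↔ z ∈ hawSphere n 1 := by
  have : (j : ℝ) ≠ 0 := Nat.cast_ne_zero.2 hj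
  rw [mem_hawSphere_iff, mem_hawSphere_iff, norm_smul, mul_pow, norm_inv, RCLike.norm_natCast,
    PiLp.smul_apply, smul_eq_mul]
  push_cast
  field_simp

lemma eq_zero_of_mem_hawSphere_of_ne (hjk : j ≠ k) (hj : z ∈ hawSphere n j)
    (hk : z ∈ hawSphere n k) : z = 0 := by
  rw [mem_hawSphere_iff] at hj hk
  have hz : z 0 = 0 := by
    by_contra hne
    have := mul_right_cancel₀ hne (hj.symm.trans hk)
    rw [div_eq_mul_inv, div_eq_mul_inv, mul_right_inj' two_ne_zero, inv_inj, Nat.cast_inj] at this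
    exact hjk this
  simpa [hz] using hj

/-- The shrinking wedge of unit spheres, with its `k`-th sphere scaled by `1 / (k + 1)`. At most one
term of the sum is nonzero. -/
def earringVec (x : ShrinkingWedge (base : Sphere n)) : EuclideanSpace ℝ (Fin (n + 1)) :=
  ∑' k : ℕ, ((k + 1 : ℕ) : ℝ)⁻¹ • (x.1 k).1

lemma earringVec_eq {x : ShrinkingWedge (base : Sphere n)} (hk : ∀ j, j ≠ k → x.1 j = base) :
    earringVec x = ((k + 1 : ℕ) : ℝ)⁻¹ • (x.1 k).1 :=
  tsum_eq_single k fun j hj => by rw [hk j hj, base, smul_zero]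

lemma earringVec_mem_hawSphere {x : ShrinkingWedge (base : Sphere n)}
    (hk : ∀ j, j ≠ k → x.1 j = base) : earringVec x ∈ hawSphere n (k + 1) := by
  rw [earringVec_eq hk, inv_smul_mem_hawSphere_iff k.succ_ne_zero]
  exact (x.1 k).2

lemma norm_earringVec_sub_sum_le (x : ShrinkingWedge (base : Sphere n)) {K : ℕ} (hK : 0 < K) :
    ‖earringVec x - ∑ k ∈ Finset.range K, ((k + 1 : ℕ) : ℝ)⁻¹ • (x.1 k).1‖ ≤ 2 / K := by
  obtain ⟨k, hk⟩ := x.exists_forall_ne_eq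
  have hzero : ∀ j, j ≠ k → ((j + 1 : ℕ) : ℝ)⁻¹ • (x.1 j).1 = 0 := fun j hj => by
    rw [hk j hj, base, smul_zero]
  by_cases hkK : k ∈ Finset.range K
  · rw [Finset.sum_eq_single_of_mem k hkK fun j _ => hzero j, ← earringVec_eq hk, sub_self,
      norm_zero]
    positivity
  · rw [Finset.sum_eq_zero fun j hj => hzero j (ne_of_mem_of_not_mem hj hkK), sub_zero]
    refine (norm_le_of_mem_hawSphere (earringVec_mem_hawSphere hk)).trans ?_
    rw [Finset.mem_range, not_lt] at hkK
    gcongr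
    lia

lemma continuous_earringVec : Continuous (earringVec (n := n)) := by
  refine continuous_of_uniform_approx_of_continuous fun u hu => ?_
  obtain ⟨ε, hε, hu⟩ := Metric.mem_uniformity_dist.1 hu
  obtain ⟨K, hK⟩ := exists_nat_gt (2 / ε)
  have hKpos : (0 : ℝ) < K := (by positivity : (0 : ℝ) < 2 / ε).trans hK
  refine ⟨fun x => ∑ k ∈ Finset.range K, ((k + 1 : ℕ) : ℝ)⁻¹ • (x.1 k).1, ?_, fun x => hu ?_⟩
  · exact continuous_finsetSum _ fun k _ =>
      (continuous_subtype_val.comp (ShrinkingWedge.proj k).continuous).fun_const_smul _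
  · rw [dist_eq_norm]
    exact (norm_earringVec_sub_sum_le x (Nat.cast_pos.1 hKpos)).trans_lt
      ((div_lt_comm₀ hε hKpos).1 hK)

lemma coe_eq_indicator_earringVec (x : ShrinkingWedge (base : Sphere n)) (k : ℕ) :
    (x.1 k).1 =
      (hawSphere n (k + 1)).indicator (fun z => ((k + 1 : ℕ) : ℝ) • z) (earringVec x) := by
  obtain ⟨m, hm⟩ := x.exists_forall_ne_eq
  obtain rfl | hkm := eq_or_ne k m
  · rw [Set.indicator_of_mem (earringVec_mem_hawSphere hm), earringVec_eq hm,
      smul_inv_smul₀ (by positivity)]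
  · rw [hm k hkm, Set.indicator_apply_eq_zero.2 fun h => ?_, base]
    rw [eq_zero_of_mem_hawSphere_of_ne (by lia) h (earringVec_mem_hawSphere hm), smul_zero]

/-- `earringVec` as a map onto the earring. -/
def earringMap (x : ShrinkingWedge (base : Sphere n)) : hawaiian n :=
  ⟨earringVec x, by
    obtain ⟨k, hk⟩ := x.exists_forall_ne_eq
    exact Set.mem_biUnion (x := k + 1) (by simp) (earringVec_mem_hawSphere hk)⟩

lemma earringMap_injective : Function.Injective (earringMap (n := n)) := fun x y h =>
  have hvec : earringVec x = earringVec y := congrArg Subtype.val h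
  ShrinkingWedge.ext fun k => Subtype.ext <| by
    rw [coe_eq_indicator_earringVec, coe_eq_indicator_earringVec, hvec]

lemma earringMap_surjective : Function.Surjective (earringMap (n := n)) := by
  rintro ⟨z, hz⟩
  obtain ⟨j, hj, hz⟩ := Set.mem_iUnion₂.1 hz
  obtain ⟨k, rfl⟩ := Nat.exists_eq_add_of_le' hj
  have hk : ((k + 1 : ℕ) : ℝ) ≠ 0 := by positivity
  have hmem : ((k + 1 : ℕ) : ℝ) • z ∈ hawSphere n 1 := by
    rwa [← inv_smul_mem_hawSphere_iff k.succ_ne_zero, inv_smul_smul₀ hk]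
  refine ⟨ShrinkingWedge.incl k ⟨_, hmem⟩, Subtype.ext ?_⟩
  refine (earringVec_eq (k := k) fun j hj => if_neg hj).trans ?_
  rw [ShrinkingWedge.incl_apply_self, inv_smul_smul₀ hk]

instance : CompactSpace (Sphere n) := isCompact_iff_compactSpace.1 (isCompact_sphere _ _)

/-- The earring is the shrinking wedge of unit spheres. -/
def earringHomeo : ShrinkingWedge (base : Sphere n) ≃ₜ hawaiian n :=
  Continuous.homeoOfEquivCompactToT2
    (f := Equiv.ofBijective earringMap ⟨earringMap_injective, earringMap_surjective⟩)
    (continuous_earringVec.subtype_mk _)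

lemma earringHomeo_point :
    earringHomeo (ShrinkingWedge.point (base : Sphere n)) = hawaiianPt n :=
  Subtype.ext <| (earringVec_eq (k := 0) fun _ _ => rfl).trans (smul_zero _)

end Homeo

end HawaiianEarring

/-- For `n = m+2 ≥ 2`, the `n`-th homotopy group of the `n`-dimensional Hawaiian earring
is isomorphic to the countable direct product `∏_{j ∈ ℕ} ℤ`. -/
theorem pi_hawaiian_iso (m : ℕ) :
    Nonempty (HomotopyGroup (Fin (m+2)) (hawaiian (m+2)) (hawaiianPt (m+2)) ≃*
      Multiplicative (ℕ → ℤ)) :=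
  ⟨(HawaiianEarring.piCongr HawaiianEarring.earringHomeo
    HawaiianEarring.earringHomeo_point).symm.trans HawaiianEarring.piShrinkingWedgeEquiv⟩
end
end
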